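/- arXiv:1602.03849 — 2 statements merged into one kernel-verified Lean document; each statement's English description precedes it below -/
import Mathlib

section
/- Let P be a Markov kernel on a standard Borel space X, let (u,C) be a drift function with constant b, let p > 2, let g ∈ E_u^p, and let x ∈ X with u(x) < ∞. Assume that (1/n) ∑_{k=0}^{n−1} (P(g²)(X_k) − (Pg(X_k))²) converges ℙ_x-almost everywhere and in L¹(ℙ_x) to a constant σ² = σ²(g,x) ≥ 0. Then n^{−1/2} ∑_{k=0}^{n−1} (g(X_{k+1}) − Pg(X_k)) converges in distribution (under ℙ_x) to the Gaussian law N(0,σ²) (a Dirac mass at 0 when σ² = 0). Moreover, if σ² ≠ 0, then ℙ_x-almost everywhere limsup_n (∑_{k=0}^{n−1} (g(X_{k+1}) − Pg(X_k)))/√(2n σ² lnln n) = 1 and liminf_n (∑_{k=0}^{n−1} (g(X_{k+1}) − Pg(X_k)))/√(2n σ² lnln n) = −1. -/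
open MeasureTheory ProbabilityTheory Filter Set
open scoped ENNReal NNReal

/-- The action of a Markov kernel on `[0,∞]`-valued functions: `Pf(x) = ∫ f(y) P(x,dy)`. -/
noncomputable def kernelOp {X : Type*} [MeasurableSpace X] (P : ProbabilityTheory.Kernel X X)
    (f : X → ℝ≥0∞) : X → ℝ≥0∞ :=
  fun x => ∫⁻ y, f y ∂(P x)

/-- The action of a Markov kernel on real-valued functions: `Pf(x) = ∫ f(y) P(x,dy)`. -/
noncomputable def kernelOpReal {X : Type*} [MeasurableSpace X] (P : ProbabilityTheory.Kernel X X)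
    (f : X → ℝ) : X → ℝ :=
  fun x => ∫ y, f y ∂(P x)

/-- `(u, C)` is a drift function for the Markov kernel `P`, with constant `b`. -/
structure IsDriftFunction {X : Type*} [MeasurableSpace X] (P : ProbabilityTheory.Kernel X X)
    (u : X → ℝ≥0∞) (C : Set X) (b : ℝ≥0) : Prop where
  measurable_u : Measurable u
  one_le : ∀ x, 1 ≤ u x
  measurableSet_C : MeasurableSet C
  bddOn_C : ∃ M : ℝ≥0, ∀ x ∈ C, u x ≤ M
  drift : ∀ x, kernelOp P u x ≤ u x + C.indicator (fun _ => (b : ℝ≥0∞)) x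

/-- `f ∈ E_u^p` with `‖f‖_{E_u^p} ≤ M`. -/
def MemDriftSpace {X : Type*} [MeasurableSpace X] (P : ProbabilityTheory.Kernel X X)
    (u : X → ℝ≥0∞) (C : Set X) (b : ℝ≥0) (p : ℝ) (f : X → ℝ) (M : ℝ≥0) : Prop :=
  Measurable f ∧ ∀ x, (‖f x‖₊ : ℝ≥0∞) ≤
    (M : ℝ≥0∞) * (u x - kernelOp P u x + C.indicator (fun _ => (b : ℝ≥0∞)) x) ^ (1 / p)

/-- `μ` is the law `ℙ_x` on `X^ℕ` of the canonical Markov chain with kernel `P` started at `x`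
(the Ionescu–Tulcea measure). -/
def IsCanonicalChain {X : Type*} [MeasurableSpace X] (P : ProbabilityTheory.Kernel X X)
    (x : X) (μ : Measure (ℕ → X)) : Prop :=
  IsProbabilityMeasure μ ∧
  μ.map (fun ω => ω 0) = Measure.dirac x ∧
  ∀ n : ℕ, ∀ g : X → ℝ≥0∞, Measurable g →
    ∀ h : (ℕ → X) → ℝ≥0∞,
      Measurable[MeasurableSpace.comap (fun (ω : ℕ → X) (i : Fin (n + 1)) => ω i)
        MeasurableSpace.pi] h →
      ∫⁻ ω, h ω * g (ω (n + 1)) ∂μ = ∫⁻ ω, h ω * kernelOp P g (ω n) ∂μ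

set_option linter.unusedSectionVars false

/-- Bounded martingale differences `Y` with conditional variances `s2`. -/
structure MDS {Ω : Type*} [m : MeasurableSpace Ω] (μ : Measure Ω) (F : ℕ → MeasurableSpace Ω)
    (Y s2 : ℕ → Ω → ℝ) (c : ℕ → ℝ) : Prop where
  mono : Monotone F
  le : ∀ n, F n ≤ m
  measY : ∀ k, Measurable[F (k+1)] (Y k)
  measS : ∀ k, Measurable[F k] (s2 k)
  bddY : ∀ k ω, |Y k ω| ≤ c k
  nonneg : ∀ k ω, 0 ≤ s2 k ω
  bddS : ∀ k ω, s2 k ω ≤ c k ^ 2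
  int1 : ∀ k (h : Ω → ℝ), Measurable[F k] h → (∃ K, ∀ ω, |h ω| ≤ K) → ∫ ω, h ω * Y k ω ∂μ = 0
  int2 : ∀ k (h : Ω → ℝ), Measurable[F k] h → (∃ K, ∀ ω, |h ω| ≤ K) →
    ∫ ω, h ω * Y k ω ^ 2 ∂μ = ∫ ω, h ω * s2 k ω ∂μ

lemma integrable_of_bdd {Ω : Type*} [MeasurableSpace Ω] {μ : Measure Ω} [IsProbabilityMeasure μ]
    {f : Ω → ℝ} (hf : Measurable f) (hb : ∃ K, ∀ ω, |f ω| ≤ K) : Integrable f μ := by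
  obtain ⟨K, hK⟩ := hb
  exact Integrable.of_bound hf.aestronglyMeasurable K (Eventually.of_forall hK)

namespace MDS
variable {Ω : Type*} [m : MeasurableSpace Ω] {μ : Measure Ω} {F : ℕ → MeasurableSpace Ω}
    {Y s2 : ℕ → Ω → ℝ} {c : ℕ → ℝ}

lemma neg (H : MDS μ F Y s2 c) : MDS μ F (fun k ω => - Y k ω) s2 c where
  mono := H.mono
  le := H.le
  measY k := (H.measY k).neg
  measS := H.measS
  bddY k ω := by rw [abs_neg]; exact H.bddY k ω
  nonneg := H.nonneg
  bddS := H.bddS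
  int1 k h hm hb := by
    have := H.int1 k h hm hb
    simp only [mul_neg, integral_neg, this, neg_zero]
  int2 k h hm hb := by
    have := H.int2 k h hm hb
    simpa using this

lemma freeze (H : MDS μ F Y s2 c) (A : ℕ → Set Ω) (hA : ∀ k, MeasurableSet[F k] (A k)) :
    MDS μ F (fun k => (A k).indicator (Y k)) (fun k => (A k).indicator (s2 k)) c where
  mono := H.mono
  le := H.le
  measY k := (H.measY k).indicator (H.mono (Nat.le_succ k) _ (hA k))
  measS k := (H.measS k).indicator (hA k)
  bddY k ω := by
    by_cases h : ω ∈ A k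
    · simp [h, H.bddY k ω]
    · simp only [h, not_false_eq_true, indicator_of_notMem, abs_zero]
      exact (abs_nonneg _).trans (H.bddY k ω)
  nonneg k ω := indicator_nonneg (fun ω _ => H.nonneg k ω) ω
  bddS k ω := by
    by_cases h : ω ∈ A k
    · simp [h, H.bddS k ω]
    · simp only [h, not_false_eq_true, indicator_of_notMem]
      positivity
  int1 k h hm hb := by
    have := H.int1 k ((A k).indicator h) (hm.indicator (hA k)) (by
      obtain ⟨K, hK⟩ := hb
      refine ⟨K, fun ω => ?_⟩
      by_cases h' : ω ∈ A k
      · simp [h', hK ω]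
      · simp only [h', not_false_eq_true, indicator_of_notMem, abs_zero]
        exact (abs_nonneg _).trans (hK ω))
    rw [← this]
    congr 1; ext ω
    by_cases h' : ω ∈ A k <;> simp [h']
  int2 k h hm hb := by
    have := H.int2 k ((A k).indicator h) (hm.indicator (hA k)) (by
      obtain ⟨K, hK⟩ := hb
      refine ⟨K, fun ω => ?_⟩
      by_cases h' : ω ∈ A k
      · simp [h', hK ω]
      · simp only [h', not_false_eq_true, indicator_of_notMem, abs_zero]
        exact (abs_nonneg _).trans (hK ω))
    convert this using 2
    · ext ω
      by_cases h' : ω ∈ A k <;> simp [h']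
    · ext ω
      by_cases h' : ω ∈ A k <;> simp [h']

lemma mY (H : MDS μ F Y s2 c) (k : ℕ) : Measurable (Y k) := (H.measY k).mono (H.le _) le_rfl
lemma mS (H : MDS μ F Y s2 c) (k : ℕ) : Measurable (s2 k) := (H.measS k).mono (H.le _) le_rfl

lemma quad [IsProbabilityMeasure μ] (H : MDS μ F Y s2 c) (k : ℕ) (h : Ω → ℝ)
    (hm : Measurable[F k] h) (hb : ∃ K, ∀ ω, |h ω| ≤ K) (l κ : ℝ) :
    ∫ ω, h ω * (1 + l * Y k ω + κ * Y k ω ^ 2) ∂μ = ∫ ω, h ω * (1 + κ * s2 k ω) ∂μ := by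
  have hm' : Measurable h := hm.mono (H.le _) le_rfl
  obtain ⟨K, hK⟩ := hb
  have i0 : Integrable h μ := integrable_of_bdd hm' ⟨K, hK⟩
  have i1 : Integrable (fun ω => h ω * Y k ω) μ := by
    refine integrable_of_bdd (hm'.mul (H.mY k)) ⟨K * c k, fun ω => ?_⟩
    rw [abs_mul]
    exact mul_le_mul (hK ω) (H.bddY k ω) (abs_nonneg _) ((abs_nonneg _).trans (hK ω))
  have i2 : Integrable (fun ω => h ω * Y k ω ^ 2) μ := by
    refine integrable_of_bdd (hm'.mul ((H.mY k).pow_const 2)) ⟨K * c k ^ 2, fun ω => ?_⟩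
    rw [abs_mul, abs_pow]
    exact mul_le_mul (hK ω) (pow_le_pow_left₀ (abs_nonneg _) (H.bddY k ω) 2) (by positivity)
      ((abs_nonneg _).trans (hK ω))
  have i3 : Integrable (fun ω => h ω * s2 k ω) μ := by
    refine integrable_of_bdd (hm'.mul (H.mS k)) ⟨K * c k ^ 2, fun ω => ?_⟩
    rw [abs_mul, abs_of_nonneg (H.nonneg k ω)]
    exact mul_le_mul (hK ω) (H.bddS k ω) (H.nonneg k ω) ((abs_nonneg _).trans (hK ω))
  have e1 := H.int1 k h hm ⟨K, hK⟩
  have e2 := H.int2 k h hm ⟨K, hK⟩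
  calc ∫ ω, h ω * (1 + l * Y k ω + κ * Y k ω ^ 2) ∂μ
      = ∫ ω, (h ω + l * (h ω * Y k ω) + κ * (h ω * Y k ω ^ 2)) ∂μ := by
        congr 1; ext ω; ring
    _ = ∫ ω, h ω ∂μ + κ * ∫ ω, h ω * s2 k ω ∂μ := by
        have i01 : Integrable (fun ω => h ω + l * (h ω * Y k ω)) μ := i0.add (i1.const_mul l)
        rw [integral_add i01 (i2.const_mul κ),
          integral_add i0 (i1.const_mul l), integral_const_mul, integral_const_mul, e1, e2]
        ring
    _ = ∫ ω, (h ω + κ * (h ω * s2 k ω)) ∂μ := by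
        rw [integral_add i0 (i3.const_mul κ), integral_const_mul]
    _ = _ := by congr 1; ext ω; ring

end MDS

lemma exp_quad_bound {a y : ℝ} (ha : a ≤ 1) (hy : |y| ≤ a) :
    Real.exp y ≤ 1 + y + (1 + a) / 2 * y ^ 2 ∧ 1 + y + (1 - a) / 2 * y ^ 2 ≤ Real.exp y := by
  have h := Real.exp_bound (hy.trans ha) (n := 3) (by norm_num)
  simp only [Finset.sum_range_succ, Finset.sum_range_zero, Nat.factorial] at h
  norm_num at h
  have h3 : |y| ^ 3 * (2/9) ≤ a / 2 * y ^ 2 := by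
    have : |y| ^ 3 = |y| * y ^ 2 := by rw [pow_succ', sq_abs]
    rw [this]
    nlinarith [sq_nonneg y, abs_nonneg y, mul_le_mul_of_nonneg_right hy (sq_nonneg y),
      mul_nonneg (abs_nonneg y) (sq_nonneg y)]
  have := abs_le.1 h
  constructor <;> nlinarith

lemma exp_low {a z : ℝ} (ha : 0 ≤ a) (ha' : a ≤ 1/2) (hz : 0 ≤ z) (hz' : z ≤ a ^ 2) :
    Real.exp ((1 - 2 * a) / 2 * z) ≤ 1 + (1 - a) / 2 * z := by
  have h0 : 0 ≤ (1 - 2 * a) / 2 * z := by apply mul_nonneg <;> linarith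
  have h1 : (1 - 2 * a) / 2 * z ≤ 1 := by nlinarith
  have h := (Real.abs_exp_sub_one_sub_id_le (x := (1 - 2 * a) / 2 * z) (by rwa [abs_of_nonneg h0]))
  have := (abs_le.1 h).2
  have h2 : ((1 - 2 * a) / 2 * z) ^ 2 ≤ a / 2 * z := by
    have : ((1 - 2 * a) / 2 * z) ^ 2 = ((1 - 2 * a)/2)^2 * z * z := by ring
    rw [this]
    apply mul_le_mul_of_nonneg_right _ hz
    nlinarith [mul_nonneg ha hz, mul_nonneg ha ha]
  linarith

namespace MDS
variable {Ω : Type*} [m : MeasurableSpace Ω] {μ : Measure Ω} {F : ℕ → MeasurableSpace Ω}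
    {Y s2 : ℕ → Ω → ℝ} {c : ℕ → ℝ}

lemma step_up [IsProbabilityMeasure μ] (H : MDS μ F Y s2 c) (k : ℕ) (h : Ω → ℝ)
    (hm : Measurable[F k] h) (hb : ∃ K, ∀ ω, |h ω| ≤ K) (h0 : ∀ ω, 0 ≤ h ω) {l a : ℝ}
    (ha' : a ≤ 1) (hl : |l| * c k ≤ a) :
    ∫ ω, h ω * Real.exp (l * Y k ω - (1 + a) / 2 * l ^ 2 * s2 k ω) ∂μ ≤ ∫ ω, h ω ∂μ := by
  obtain ⟨K, hK⟩ := hb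
  rcases isEmpty_or_nonempty Ω with hΩ | ⟨⟨ω₀⟩⟩
  · simp [Measure.eq_zero_of_isEmpty]
  have ha : 0 ≤ a := le_trans (mul_nonneg (abs_nonneg _) ((abs_nonneg _).trans (H.bddY k ω₀))) hl
  have hm0 : Measurable h := hm.mono (H.le _) le_rfl
  let h' : Ω → ℝ := fun ω => h ω * Real.exp (- ((1 + a) / 2 * l ^ 2 * s2 k ω))
  have hm' : Measurable[F k] h' :=
    hm.mul (Real.measurable_exp.comp (((H.measS k).const_mul _).neg))
  have h'0 : ∀ ω, 0 ≤ h' ω := fun ω => mul_nonneg (h0 ω) (Real.exp_nonneg _)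
  have hle : ∀ ω, h' ω ≤ h ω := fun ω => by
    refine mul_le_of_le_one_right (h0 ω) (Real.exp_le_one_iff.2 ?_)
    have := H.nonneg k ω
    simp only [Left.neg_nonpos_iff]; positivity
  have hb' : ∀ ω, |h' ω| ≤ K := fun ω => by
    rw [abs_of_nonneg (h'0 ω)]; exact (hle ω).trans ((le_abs_self _).trans (hK ω))
  have hm'' : Measurable h' := hm'.mono (H.le _) le_rfl
  have hck : 0 ≤ c k := (abs_nonneg _).trans (H.bddY k ω₀)
  have hK0 : 0 ≤ K := (abs_nonneg _).trans (hK ω₀)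
  have hly : ∀ ω, |l * Y k ω| ≤ a := fun ω => by
    rw [abs_mul]; exact (mul_le_mul_of_nonneg_left (H.bddY k ω) (abs_nonneg _)).trans hl
  have hmY := H.mY k
  have hmS := H.mS k
  calc _ = ∫ ω, h' ω * Real.exp (l * Y k ω) ∂μ := by
        congr 1; ext ω; simp only [h']; rw [mul_assoc (h ω), ← Real.exp_add]; ring_nf
    _ ≤ ∫ ω, h' ω * (1 + l * Y k ω + ((1 + a) / 2 * l ^ 2) * Y k ω ^ 2) ∂μ := by
        apply integral_mono_of_nonneg
        · exact Eventually.of_forall fun ω => mul_nonneg (h'0 ω) (Real.exp_nonneg _)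
        · refine integrable_of_bdd (by fun_prop) ⟨K * (1 + |l| * c k + |(1 + a) / 2 * l ^ 2| * c k ^ 2), fun ω => ?_⟩
          rw [abs_mul]
          refine mul_le_mul (hb' ω) ?_ (abs_nonneg _) hK0
          refine (abs_add_three _ _ _).trans ?_
          rw [abs_one, abs_mul, abs_mul _ (Y k ω ^ 2), abs_pow (Y k ω)]
          have := H.bddY k ω
          gcongr
        · refine Eventually.of_forall fun ω => mul_le_mul_of_nonneg_left ?_ (h'0 ω)
          have := (exp_quad_bound ha' (hly ω)).1
          calc _ ≤ _ := this
            _ = _ := by ring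
    _ = ∫ ω, h' ω * (1 + ((1 + a) / 2 * l ^ 2) * s2 k ω) ∂μ := H.quad k h' hm' ⟨K, hb'⟩ _ _
    _ ≤ ∫ ω, h ω ∂μ := by
        apply integral_mono_of_nonneg
        · refine Eventually.of_forall fun ω => mul_nonneg (h'0 ω) ?_
          have := H.nonneg k ω
          positivity
        · exact integrable_of_bdd hm0 ⟨K, hK⟩
        · refine Eventually.of_forall fun ω => ?_
          have := Real.add_one_le_exp ((1 + a) / 2 * l ^ 2 * s2 k ω)
          calc h' ω * (1 + ((1 + a) / 2 * l ^ 2) * s2 k ω)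
              ≤ h' ω * Real.exp ((1 + a) / 2 * l ^ 2 * s2 k ω) :=
                mul_le_mul_of_nonneg_left (by linarith) (h'0 ω)
            _ = h ω := by
                simp only [h']; rw [mul_assoc (h ω), ← Real.exp_add]; simp

lemma step_low [IsProbabilityMeasure μ] (H : MDS μ F Y s2 c) (k : ℕ) (h : Ω → ℝ)
    (hm : Measurable[F k] h) (hb : ∃ K, ∀ ω, |h ω| ≤ K) (h0 : ∀ ω, 0 ≤ h ω) {l a : ℝ}
    (ha' : a ≤ 1 / 2) (hl : |l| * c k ≤ a) :
    ∫ ω, h ω ∂μ ≤ ∫ ω, h ω * Real.exp (l * Y k ω - (1 - 2 * a) / 2 * l ^ 2 * s2 k ω) ∂μ := by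
  obtain ⟨K, hK⟩ := hb
  rcases isEmpty_or_nonempty Ω with hΩ | ⟨⟨ω₀⟩⟩
  · simp [Measure.eq_zero_of_isEmpty]
  have ha : 0 ≤ a := le_trans (mul_nonneg (abs_nonneg _) ((abs_nonneg _).trans (H.bddY k ω₀))) hl
  have hm0 : Measurable h := hm.mono (H.le _) le_rfl
  let h' : Ω → ℝ := fun ω => h ω * Real.exp (- ((1 - 2 * a) / 2 * l ^ 2 * s2 k ω))
  have hm' : Measurable[F k] h' :=
    hm.mul (Real.measurable_exp.comp (((H.measS k).const_mul _).neg))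
  have h'0 : ∀ ω, 0 ≤ h' ω := fun ω => mul_nonneg (h0 ω) (Real.exp_nonneg _)
  have hle : ∀ ω, h' ω ≤ h ω := fun ω => by
    refine mul_le_of_le_one_right (h0 ω) (Real.exp_le_one_iff.2 ?_)
    have := H.nonneg k ω
    simp only [Left.neg_nonpos_iff]
    have : 0 ≤ 1 - 2 * a := by linarith
    positivity
  have hb' : ∀ ω, |h' ω| ≤ K := fun ω => by
    rw [abs_of_nonneg (h'0 ω)]; exact (hle ω).trans ((le_abs_self _).trans (hK ω))
  have hm'' : Measurable h' := hm'.mono (H.le _) le_rfl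
  have hck : 0 ≤ c k := (abs_nonneg _).trans (H.bddY k ω₀)
  have hK0 : 0 ≤ K := (abs_nonneg _).trans (hK ω₀)
  have hly : ∀ ω, |l * Y k ω| ≤ a := fun ω => by
    rw [abs_mul]; exact (mul_le_mul_of_nonneg_left (H.bddY k ω) (abs_nonneg _)).trans hl
  have hmY := H.mY k
  have hmS := H.mS k
  have hls : ∀ ω, l ^ 2 * s2 k ω ≤ a ^ 2 := fun ω => by
    calc l ^ 2 * s2 k ω ≤ l ^ 2 * c k ^ 2 := mul_le_mul_of_nonneg_left (H.bddS k ω) (sq_nonneg _)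
      _ = (|l| * c k) ^ 2 := by rw [mul_pow, sq_abs]
      _ ≤ a ^ 2 := pow_le_pow_left₀ (by positivity) hl 2
  calc ∫ ω, h ω ∂μ ≤ ∫ ω, h' ω * (1 + ((1 - a) / 2 * l ^ 2) * s2 k ω) ∂μ := by
        apply integral_mono
        · exact integrable_of_bdd hm0 ⟨K, hK⟩
        · refine integrable_of_bdd (by fun_prop) ⟨K * (1 + |(1 - a) / 2 * l ^ 2| * c k ^ 2), fun ω => ?_⟩
          rw [abs_mul]
          refine mul_le_mul (hb' ω) ?_ (abs_nonneg _) hK0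
          refine (abs_add_le _ _).trans ?_
          rw [abs_one, abs_mul _ (s2 k ω), abs_of_nonneg (H.nonneg k ω)]
          have := H.bddS k ω
          gcongr
        · intro ω
          have := exp_low ha ha' (z := l ^ 2 * s2 k ω) (mul_nonneg (sq_nonneg _) (H.nonneg k ω)) (hls ω)
          calc h ω = h' ω * Real.exp ((1 - 2 * a) / 2 * (l ^ 2 * s2 k ω)) := by
                simp only [h']; rw [mul_assoc (h ω), ← Real.exp_add]
                ring_nf; simp
            _ ≤ h' ω * (1 + ((1 - a) / 2 * l ^ 2) * s2 k ω) :=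
                mul_le_mul_of_nonneg_left (by linarith) (h'0 ω)
    _ = ∫ ω, h' ω * (1 + l * Y k ω + ((1 - a) / 2 * l ^ 2) * Y k ω ^ 2) ∂μ :=
        (H.quad k h' hm' ⟨K, hb'⟩ _ _).symm
    _ ≤ ∫ ω, h' ω * Real.exp (l * Y k ω) ∂μ := by
        apply integral_mono
        · refine integrable_of_bdd (by fun_prop) ⟨K * (1 + |l| * c k + |(1 - a) / 2 * l ^ 2| * c k ^ 2), fun ω => ?_⟩
          rw [abs_mul]
          refine mul_le_mul (hb' ω) ?_ (abs_nonneg _) hK0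
          refine (abs_add_three _ _ _).trans ?_
          rw [abs_one, abs_mul, abs_mul _ (Y k ω ^ 2), abs_pow (Y k ω)]
          have := H.bddY k ω
          gcongr
        · refine integrable_of_bdd (by fun_prop) ⟨K * Real.exp a, fun ω => ?_⟩
          rw [abs_mul, Real.abs_exp]
          exact mul_le_mul (hb' ω) (Real.exp_le_exp.2 ((le_abs_self _).trans (hly ω)))
            (Real.exp_nonneg _) hK0
        · intro ω
          refine mul_le_mul_of_nonneg_left ?_ (h'0 ω)
          have := (exp_quad_bound (by linarith) (hly ω)).2
          calc _ = _ := by ring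
            _ ≤ _ := this
    _ = _ := by
        congr 1; ext ω; simp only [h']; rw [mul_assoc (h ω), ← Real.exp_add]; ring_nf

/-- partial sums over blocks -/
noncomputable def bs (Y : ℕ → Ω → ℝ) (A B : ℕ) (ω : Ω) : ℝ := ∑ k ∈ Finset.Ico A B, Y k ω

lemma bs_self (A : ℕ) (ω : Ω) : bs Y A A ω = 0 := by simp [bs]

lemma bs_succ {A B : ℕ} (h : A ≤ B) (ω : Ω) : bs Y A (B + 1) ω = bs Y A B ω + Y B ω := by
  simp [bs, Finset.sum_Ico_succ_top h]

lemma meas_bsY (H : MDS μ F Y s2 c) (A B : ℕ) : Measurable[F B] (bs Y A B) := by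
  unfold bs
  apply Finset.measurable_sum
  intro k hk
  exact (H.measY k).mono (H.mono (Finset.mem_Ico.1 hk).2) le_rfl

lemma meas_bsS (H : MDS μ F Y s2 c) (A B : ℕ) : Measurable[F (B - 1)] (bs s2 A B) := by
  unfold bs
  apply Finset.measurable_sum
  intro k hk
  exact (H.measS k).mono (H.mono (Nat.le_sub_one_of_lt (Finset.mem_Ico.1 hk).2)) le_rfl

lemma bdd_bsY (H : MDS μ F Y s2 c) (A B : ℕ) (ω : Ω) :
    |bs Y A B ω| ≤ ∑ k ∈ Finset.Ico A B, c k :=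
  (Finset.abs_sum_le_sum_abs _ _).trans (Finset.sum_le_sum fun k _ => H.bddY k ω)

lemma nonneg_bsS (H : MDS μ F Y s2 c) (A B : ℕ) (ω : Ω) : 0 ≤ bs s2 A B ω :=
  Finset.sum_nonneg fun k _ => H.nonneg k ω

/-- exponential process -/
noncomputable def ex (Y s2 : ℕ → Ω → ℝ) (l q : ℝ) (A B : ℕ) (ω : Ω) : ℝ :=
  Real.exp (l * bs Y A B ω - q * bs s2 A B ω)

lemma meas_ex (H : MDS μ F Y s2 c) (l q : ℝ) (A B : ℕ) : Measurable[F B] (ex Y s2 l q A B) := by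
  unfold ex
  apply Real.measurable_exp.comp
  exact ((H.meas_bsY A B).const_mul l).sub
    (((H.meas_bsS A B).mono (H.mono (Nat.sub_le B 1)) le_rfl).const_mul q)

lemma bdd_ex (H : MDS μ F Y s2 c) (l : ℝ) {q : ℝ} (hq : 0 ≤ q) (A B : ℕ) :
    ∃ K, ∀ ω, |ex Y s2 l q A B ω| ≤ K := by
  refine ⟨Real.exp (|l| * ∑ k ∈ Finset.Ico A B, c k), fun ω => ?_⟩
  unfold ex
  rw [Real.abs_exp]
  apply Real.exp_le_exp.2
  have h1 : l * bs Y A B ω ≤ |l| * ∑ k ∈ Finset.Ico A B, c k := by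
    refine (le_abs_self _).trans ?_
    rw [abs_mul]
    exact mul_le_mul_of_nonneg_left (H.bdd_bsY A B ω) (abs_nonneg _)
  have h2 := mul_nonneg hq (H.nonneg_bsS A B ω)
  linarith

lemma bdd_mul {f g : Ω → ℝ} (hf : ∃ K, ∀ ω, |f ω| ≤ K) (hg : ∃ K, ∀ ω, |g ω| ≤ K) :
    ∃ K, ∀ ω, |f ω * g ω| ≤ K := by
  obtain ⟨K, hK⟩ := hf
  obtain ⟨L, hL⟩ := hg
  refine ⟨K * L, fun ω => ?_⟩
  rw [abs_mul]
  exact mul_le_mul (hK ω) (hL ω) (abs_nonneg _) ((abs_nonneg _).trans (hK ω))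

lemma ex_succ (l q : ℝ) {A B : ℕ} (h : A ≤ B) (ω : Ω) :
    ex Y s2 l q A (B + 1) ω = ex Y s2 l q A B ω * Real.exp (l * Y B ω - q * s2 B ω) := by
  unfold ex
  rw [bs_succ h, bs_succ h, ← Real.exp_add]; ring_nf

lemma block_up [IsProbabilityMeasure μ] (H : MDS μ F Y s2 c) {A B : ℕ} (hAB : A ≤ B) (h : Ω → ℝ)
    (hm : Measurable[F A] h) (hb : ∃ K, ∀ ω, |h ω| ≤ K) (h0 : ∀ ω, 0 ≤ h ω) {l a : ℝ}
    (ha : 0 ≤ a) (ha' : a ≤ 1) (hl : ∀ k < B, |l| * c k ≤ a) :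
    ∫ ω, h ω * ex Y s2 l ((1 + a) / 2 * l ^ 2) A B ω ∂μ ≤ ∫ ω, h ω ∂μ := by
  induction B, hAB using Nat.le_induction with
  | base => simp [ex, bs_self]
  | succ B hAB ih =>
    refine le_trans ?_ (ih fun k hk => hl k (by omega))
    have := H.step_up B (fun ω => h ω * ex Y s2 l ((1 + a) / 2 * l ^ 2) A B ω)
      ((hm.mono (H.mono hAB) le_rfl).mul (H.meas_ex _ _ A B))
      (bdd_mul hb (H.bdd_ex l (by positivity) A B))
      (fun ω => mul_nonneg (h0 ω) (Real.exp_nonneg _)) ha' (hl B (by omega))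
    refine le_of_eq_of_le ?_ this
    congr 1; ext ω; rw [ex_succ _ _ hAB]; ring

lemma block_low [IsProbabilityMeasure μ] (H : MDS μ F Y s2 c) {A B : ℕ} (hAB : A ≤ B) (h : Ω → ℝ)
    (hm : Measurable[F A] h) (hb : ∃ K, ∀ ω, |h ω| ≤ K) (h0 : ∀ ω, 0 ≤ h ω) {l a : ℝ}
    (ha' : a ≤ 1 / 2) (hl : ∀ k < B, |l| * c k ≤ a) :
    ∫ ω, h ω ∂μ ≤ ∫ ω, h ω * ex Y s2 l ((1 - 2 * a) / 2 * l ^ 2) A B ω ∂μ := by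
  have hq : 0 ≤ (1 - 2 * a) / 2 * l ^ 2 := by
    have : 0 ≤ 1 - 2 * a := by linarith
    positivity
  induction B, hAB using Nat.le_induction with
  | base => simp [ex, bs_self]
  | succ B hAB ih =>
    refine (ih fun k hk => hl k (by omega)).trans ?_
    have := H.step_low B (fun ω => h ω * ex Y s2 l ((1 - 2 * a) / 2 * l ^ 2) A B ω)
      ((hm.mono (H.mono hAB) le_rfl).mul (H.meas_ex _ _ A B))
      (bdd_mul hb (H.bdd_ex l hq A B))
      (fun ω => mul_nonneg (h0 ω) (Real.exp_nonneg _)) ha' (hl B (by omega))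
    refine this.trans_eq ?_
    congr 1; ext ω; rw [ex_succ _ _ hAB]; ring

/-- Maximal inequality. -/
lemma ville [IsProbabilityMeasure μ] (H : MDS μ F Y s2 c) (N : ℕ) {l a x : ℝ}
    (ha : 0 ≤ a) (ha' : a ≤ 1) (hl : ∀ k ≤ N, |l| * c k ≤ a) :
    μ {ω | ∃ n ≤ N, x ≤ l * bs Y 0 n ω - (1 + a) / 2 * l ^ 2 * bs s2 0 n ω}
      ≤ ENNReal.ofReal (Real.exp (-x)) := by
  set q := (1 + a) / 2 * l ^ 2 with hq
  have hq0 : 0 ≤ q := by positivity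
  let Z : ℕ → Ω → ℝ := fun n ω => l * bs Y 0 n ω - q * bs s2 0 n ω
  have hZm : ∀ n, Measurable[F n] (Z n) := fun n => ((H.meas_bsY 0 n).const_mul l).sub
    (((H.meas_bsS 0 n).mono (H.mono (Nat.sub_le n 1)) le_rfl).const_mul q)
  let A : ℕ → Set Ω := fun k => ⋂ i ∈ Finset.range (k + 1), {ω | Z i ω < x}
  have hA : ∀ k, MeasurableSet[F k] (A k) := fun k => by
    refine Finset.measurableSet_biInter _ fun i hi => ?_
    have : Measurable[F k] (Z i) :=
      (hZm i).mono (H.mono (Nat.lt_succ_iff.1 (Finset.mem_range.1 hi))) le_rfl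
    exact this measurableSet_Iio
  have H' := H.freeze A hA
  set Y' := fun k => (A k).indicator (Y k)
  set s' := fun k => (A k).indicator (s2 k)
  have key : ∀ n ω, ((∀ i < n, Z i ω < x) ∧ l * bs Y' 0 n ω - q * bs s' 0 n ω = Z n ω) ∨
      ((∃ i < n, x ≤ Z i ω) ∧ x ≤ l * bs Y' 0 n ω - q * bs s' 0 n ω) := by
    intro n ω
    induction n with
    | zero => left; simp [Z, bs]
    | succ n ih =>
      simp only [bs_succ (Nat.zero_le n)]
      rcases ih with ⟨h1, h2⟩ | ⟨⟨i, hi, hix⟩, h2⟩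
      · by_cases hn : Z n ω < x
        · left
          have hall : ∀ i < n + 1, Z i ω < x := fun i hi => by
            rcases Nat.lt_succ_iff_lt_or_eq.1 hi with h | h
            · exact h1 i h
            · rw [h]; exact hn
          refine ⟨hall, ?_⟩
          have : ω ∈ A n := by simpa [A] using fun i hi => hall i (by omega)
          have e1 : Y' n ω = Y n ω := indicator_of_mem this _
          have e2 : s' n ω = s2 n ω := indicator_of_mem this _
          rw [e1, e2]
          simp only [Z, bs_succ (Nat.zero_le n)] at h2 ⊢
          linarith
        · right
          have : ω ∉ A n := fun h => hn (by
            have := mem_iInter₂.1 h n (by simp); exact this)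
          have e1 : Y' n ω = 0 := indicator_of_notMem this _
          have e2 : s' n ω = 0 := indicator_of_notMem this _
          refine ⟨⟨n, by omega, not_lt.1 hn⟩, ?_⟩
          rw [e1, e2, add_zero, add_zero, h2]
          exact not_lt.1 hn
      · right
        have : ω ∉ A n := fun h => absurd hix (not_le.2 (by
            have := mem_iInter₂.1 h i (by simp; omega); exact this))
        have e1 : Y' n ω = 0 := indicator_of_notMem this _
        have e2 : s' n ω = 0 := indicator_of_notMem this _
        refine ⟨⟨i, by omega, hix⟩, ?_⟩
        rw [e1, e2, add_zero, add_zero]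
        exact h2
  have hsub : {ω | ∃ n ≤ N, x ≤ Z n ω} ⊆ {ω | Real.exp x ≤ ex Y' s' l q 0 (N + 1) ω} := by
    rintro ω ⟨n, hn, hx⟩
    rcases key (N + 1) ω with ⟨h, _⟩ | ⟨_, h⟩
    · exact absurd hx (not_le.2 (h n (by omega)))
    · exact Real.exp_le_exp.2 h
  have hintg : Integrable (ex Y' s' l q 0 (N + 1)) μ :=
    integrable_of_bdd ((H'.meas_ex l q 0 _).mono (H.le _) le_rfl) (H'.bdd_ex l hq0 0 _)
  have hI : ∫ ω, ex Y' s' l q 0 (N + 1) ω ∂μ ≤ 1 := by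
    have := H'.block_up (Nat.zero_le (N + 1)) (fun _ => 1) measurable_const ⟨1, by simp⟩
      (by simp) ha ha' (l := l) (fun k hk => hl k (by omega))
    simpa using this
  have hmk := mul_meas_ge_le_integral_of_nonneg (μ := μ) (f := ex Y' s' l q 0 (N + 1))
    (Eventually.of_forall fun ω => Real.exp_nonneg _) hintg (Real.exp x)
  have hreal : μ.real {ω | Real.exp x ≤ ex Y' s' l q 0 (N + 1) ω} ≤ Real.exp (-x) := by
    rw [Real.exp_neg, ← one_div, le_div_iff₀ (Real.exp_pos _), mul_comm]
    exact hmk.trans hI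
  calc _ ≤ μ {ω | Real.exp x ≤ ex Y' s' l q 0 (N + 1) ω} := measure_mono hsub
    _ = ENNReal.ofReal (μ.real {ω | Real.exp x ≤ ex Y' s' l q 0 (N + 1) ω}) := by
        rw [ofReal_measureReal]
    _ ≤ _ := ENNReal.ofReal_le_ofReal hreal

end MDS


lemma ae_bc {Ω : Type*} [MeasurableSpace Ω] {μ : Measure Ω} {E : ℕ → Set Ω} {b : ℕ → ℝ}
    (hb : Summable b) (h : ∀ᶠ j in atTop, μ (E j) ≤ ENNReal.ofReal (b j)) :
    ∀ᵐ ω ∂μ, ∀ᶠ j in atTop, ω ∉ E j := by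
  obtain ⟨J, hJ⟩ := eventually_atTop.1 h
  have : ∀ᵐ ω ∂μ, ∀ᶠ j in atTop, ω ∉ (if J ≤ j then E j else ∅) := by
    apply ae_eventually_notMem
    refine ne_top_of_le_ne_top hb.tsum_ofReal_ne_top (ENNReal.tsum_le_tsum fun j => ?_)
    split_ifs with hj
    · exact hJ j hj
    · simp
  filter_upwards [this] with ω hω
  filter_upwards [hω, eventually_ge_atTop J] with j h1 h2
  simpa [h2] using h1

namespace MDS
variable {Ω : Type*} [m : MeasurableSpace Ω] {μ : Measure Ω} {F : ℕ → MeasurableSpace Ω}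
    {Y s2 : ℕ → Ω → ℝ} {c : ℕ → ℝ}

lemma lil_upper_aux [IsProbabilityMeasure μ] (H : MDS μ F Y s2 c) (hcm : Monotone c)
    (hc0 : ∀ k, 0 ≤ c k)
    (hc : Tendsto (fun n : ℕ => c n * Real.sqrt (Real.log n) / Real.sqrt n) atTop (nhds 0))
    {σ2 : ℝ} (hσ : 0 < σ2)
    (hv : ∀ᵐ ω ∂μ, Tendsto (fun n : ℕ => bs s2 0 n ω / n) atTop (nhds σ2))
    {δ : ℝ} (hδ : 0 < δ) (hδ1 : δ ≤ 1) :
    ∀ᵐ ω ∂μ, ∀ᶠ n : ℕ in atTop,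
      bs Y 0 n ω ≤ (1 + δ) ^ 4 * Real.sqrt (2 * n * σ2 * Real.log (Real.log n)) := by
  set θ : ℝ := 1 + δ with hθ
  have hθ1 : 1 < θ := by linarith
  have hθ0 : 0 < θ := by linarith
  let t : ℕ → ℝ := fun j => θ ^ j
  have ht0 : ∀ j, 0 < t j := fun j => pow_pos hθ0 j
  let l : ℕ → ℝ := fun j => Real.sqrt (2 * Real.log j / (σ2 * t j))
  let N : ℕ → ℕ := fun j => ⌊θ ^ (j + 1)⌋₊
  have hNj : ∀ᶠ j : ℕ in atTop, j ≤ N j := by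
    have h1 : Tendsto (fun j : ℕ => (j : ℝ) ^ 1 / θ ^ j) atTop (nhds 0) :=
      tendsto_pow_const_div_const_pow_of_one_lt 1 hθ1
    filter_upwards [h1.eventually (gt_mem_nhds one_pos)] with j hj
    apply Nat.le_floor
    rw [pow_one, div_lt_one (ht0 j)] at hj
    exact hj.le.trans (pow_le_pow_right₀ hθ1.le (Nat.le_succ j))
  have hNt : Tendsto N atTop atTop := tendsto_atTop_mono' _ hNj tendsto_id
  have hlc : ∀ᶠ j : ℕ in atTop, ∀ k ≤ N j, |l j| * c k ≤ δ := by
    have h1 := (hc.comp hNt).const_mul (Real.sqrt (2 * θ / σ2))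
    rw [mul_zero] at h1
    filter_upwards [h1.eventually (gt_mem_nhds hδ), hNj, eventually_ge_atTop 1] with j hj hjN hj1 k hk
    have hN1 : (1:ℝ) ≤ N j := by exact_mod_cast hj1.trans hjN
    have hj1' : (1:ℝ) ≤ j := by exact_mod_cast hj1
    have hjN' : (j:ℝ) ≤ N j := by exact_mod_cast hjN
    simp only [Function.comp] at hj
    have hl : l j ≤ Real.sqrt (2 * θ / σ2) * (Real.sqrt (Real.log (N j)) / Real.sqrt (N j)) := by
      rw [← Real.sqrt_div (Real.log_nonneg hN1), ← Real.sqrt_mul (by positivity)]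
      apply Real.sqrt_le_sqrt
      have hlog : Real.log j ≤ Real.log (N j) := Real.log_le_log (by linarith) hjN'
      have hN : (N j : ℝ) ≤ θ * t j := by
        have := Nat.floor_le (a := θ ^ (j + 1)) (by positivity)
        exact this.trans_eq (pow_succ' θ j)
      have htj := ht0 j
      rw [div_mul_div_comm, div_le_div_iff₀ (by positivity) (by positivity)]
      have h2 : 0 ≤ Real.log j := Real.log_nonneg hj1'
      calc 2 * Real.log j * (σ2 * N j) ≤ 2 * Real.log (N j) * (σ2 * (θ * t j)) := by gcongr
        _ = _ := by ring
    rw [abs_of_nonneg (Real.sqrt_nonneg _)]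
    calc l j * c k ≤ (Real.sqrt (2 * θ / σ2) * (Real.sqrt (Real.log (N j)) / Real.sqrt (N j))) * c (N j) :=
          mul_le_mul hl (hcm hk) (hc0 k) (by positivity)
      _ = _ := by ring
      _ ≤ δ := hj.le
  have hsum : Summable (fun j : ℕ => Real.exp (-((1 + δ) * Real.log j))) := by
    have : Summable (fun j : ℕ => ((j : ℝ) ^ (1 + δ))⁻¹) := Real.summable_nat_rpow_inv.2 (by linarith)
    refine this.congr_atTop ?_
    filter_upwards [eventually_ge_atTop 1] with j hj
    have : (0:ℝ) < j := by exact_mod_cast hj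
    rw [← Real.rpow_neg this.le, Real.rpow_def_of_pos this]
    ring_nf
  have hbc := ae_bc hsum (μ := μ) (E := fun j => {ω | ∃ n ≤ N j, (1 + δ) * Real.log j ≤
      l j * bs Y 0 n ω - (1 + δ) / 2 * l j ^ 2 * bs s2 0 n ω}) (by
    filter_upwards [hlc] with j hj
    exact H.ville (N j) hδ.le hδ1 hj)
  have hll : ∀ᶠ j : ℕ in atTop, 0 ≤ δ * Real.log j + (1 + δ) * Real.log (Real.log θ) := by
    have : Tendsto (fun j : ℕ => δ * Real.log j + (1 + δ) * Real.log (Real.log θ)) atTop atTop :=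
      tendsto_atTop_add_const_right _ _
        ((Real.tendsto_log_atTop.comp tendsto_natCast_atTop_atTop).const_mul_atTop hδ)
    exact this.eventually_ge_atTop 0
  filter_upwards [hbc, hv] with ω hω hvω
  have hvn : ∀ᶠ n : ℕ in atTop, bs s2 0 n ω ≤ (1 + δ) * σ2 * n := by
    have : σ2 < (1 + δ) * σ2 := by nlinarith
    filter_upwards [hvω.eventually (gt_mem_nhds this), eventually_ge_atTop 1] with n hn hn1
    have : (0:ℝ) < n := by exact_mod_cast hn1
    rw [div_lt_iff₀ this] at hn
    exact hn.le
  obtain ⟨J, hJ⟩ := eventually_atTop.1 ((hω.and hll).and (eventually_ge_atTop 2))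
  filter_upwards [hvn, tendsto_natCast_atTop_atTop.eventually_ge_atTop (θ ^ (J + 1))] with n hn hnJ
  have hn1 : (1:ℝ) ≤ n := le_trans (one_le_pow₀ hθ1.le) hnJ
  obtain ⟨j, hj1, hj2⟩ := exists_nat_pow_near hn1 hθ1
  have hJj : J ≤ j := by
    have : θ ^ (J + 1) < θ ^ (j + 1) := hnJ.trans_lt hj2
    have := (pow_lt_pow_iff_right₀ hθ1).1 this
    omega
  obtain ⟨⟨h1, h2⟩, h3⟩ := hJ j hJj
  have hnN : n ≤ N j := Nat.le_floor hj2.le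
  have hS : l j * bs Y 0 n ω - (1 + δ) / 2 * l j ^ 2 * bs s2 0 n ω < (1 + δ) * Real.log j := by
    by_contra hcon
    exact h1 ⟨n, hnN, not_lt.1 hcon⟩
  have hj2' : (2:ℝ) ≤ j := by exact_mod_cast h3
  have hL : 0 < Real.log j := Real.log_pos (by linarith)
  have htj := ht0 j
  have hl0 : 0 < l j := Real.sqrt_pos.2 (by positivity)
  have hl2 : l j ^ 2 = 2 * Real.log j / (σ2 * t j) := Real.sq_sqrt (by positivity)
  set B := Real.sqrt (2 * σ2 * t j * Real.log j) with hB
  have hlB : l j * B = 2 * Real.log j := by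
    rw [hB, ← Real.sqrt_mul (by positivity)]
    rw [show 2 * Real.log j / (σ2 * t j) * (2 * σ2 * t j * Real.log j) = (2 * Real.log j) ^ 2 by
      field_simp]
    exact Real.sqrt_sq (by positivity)
  have hnt : (n : ℝ) ≤ θ * t j := by
    have := hj2.le; rw [pow_succ'] at this; exact this
  have hvb : l j ^ 2 * bs s2 0 n ω ≤ 2 * (1 + δ) ^ 2 * Real.log j := by
    calc l j ^ 2 * bs s2 0 n ω ≤ l j ^ 2 * ((1 + δ) * σ2 * (θ * t j)) := by
          refine mul_le_mul_of_nonneg_left (hn.trans ?_) (sq_nonneg _)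
          gcongr
      _ = _ := by rw [hl2, hθ]; field_simp
  have hSB : bs Y 0 n ω ≤ (1 + δ) ^ 3 * B := by
    have : l j * bs Y 0 n ω ≤ l j * ((1 + δ) ^ 3 * B) := by
      have e : l j * ((1 + δ) ^ 3 * B) = (1 + δ) ^ 3 * (2 * Real.log j) := by rw [← hlB]; ring
      rw [e]
      have h5 : (1 + δ) / 2 * (l j ^ 2 * bs s2 0 n ω) ≤ (1 + δ) / 2 * (2 * (1 + δ) ^ 2 * Real.log j) :=
        mul_le_mul_of_nonneg_left hvb (by positivity)
      have h6 : (1 + δ) * Real.log j ≤ (1 + δ) ^ 3 * Real.log j := by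
        apply mul_le_mul_of_nonneg_right _ hL.le
        exact le_self_pow₀ (by linarith) (by norm_num)
      nlinarith
    exact le_of_mul_le_mul_left this hl0
  have hBφ : B ≤ (1 + δ) * Real.sqrt (2 * n * σ2 * Real.log (Real.log n)) := by
    have hlogn : j * Real.log θ ≤ Real.log n := by
      rw [← Real.log_pow]; exact Real.log_le_log (by positivity) hj1
    have hlθ : 0 < Real.log θ := Real.log_pos hθ1
    have hll : Real.log j + Real.log (Real.log θ) ≤ Real.log (Real.log n) := by
      rw [← Real.log_mul (by positivity) hlθ.ne']
      exact Real.log_le_log (by positivity) hlogn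
    have hlle : Real.log j ≤ (1 + δ) * Real.log (Real.log n) := by nlinarith
    rw [show (1 + δ) = Real.sqrt ((1 + δ) ^ 2) from (Real.sqrt_sq (by linarith)).symm,
      ← Real.sqrt_mul (by positivity)]
    apply Real.sqrt_le_sqrt
    have h7 : 0 ≤ Real.log (Real.log n) := by
      by_contra hh
      nlinarith [not_le.1 hh]
    calc 2 * σ2 * t j * Real.log j ≤ 2 * σ2 * n * ((1 + δ) * Real.log (Real.log n)) := by
          gcongr
      _ ≤ 2 * σ2 * n * ((1 + δ) ^ 2 * Real.log (Real.log n)) := by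
          gcongr
          exact le_self_pow₀ (by linarith) (by norm_num)
      _ = _ := by ring
  calc bs Y 0 n ω ≤ (1 + δ) ^ 3 * B := hSB
    _ ≤ (1 + δ) ^ 3 * ((1 + δ) * Real.sqrt (2 * n * σ2 * Real.log (Real.log n))) := by gcongr
    _ = _ := by ring

lemma lil_upper [IsProbabilityMeasure μ] (H : MDS μ F Y s2 c) (hcm : Monotone c)
    (hc0 : ∀ k, 0 ≤ c k)
    (hc : Tendsto (fun n : ℕ => c n * Real.sqrt (Real.log n) / Real.sqrt n) atTop (nhds 0))
    {σ2 : ℝ} (hσ : 0 < σ2)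
    (hv : ∀ᵐ ω ∂μ, Tendsto (fun n : ℕ => bs s2 0 n ω / n) atTop (nhds σ2))
    {ε : ℝ} (hε : 0 < ε) :
    ∀ᵐ ω ∂μ, ∀ᶠ n : ℕ in atTop,
      bs Y 0 n ω ≤ (1 + ε) * Real.sqrt (2 * n * σ2 * Real.log (Real.log n)) := by
  have hδ : 0 < min 1 (ε / 15) := by positivity
  filter_upwards [H.lil_upper_aux hcm hc0 hc hσ hv hδ (min_le_left _ _)] with ω hω
  filter_upwards [hω] with n hn
  refine hn.trans (mul_le_mul_of_nonneg_right ?_ (Real.sqrt_nonneg _))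
  have h1 : min 1 (ε / 15) ≤ 1 := min_le_left _ _
  have h2 : min 1 (ε / 15) ≤ ε / 15 := min_le_right _ _
  set d := min 1 (ε / 15)
  have h3 : d ^ 2 ≤ d := by nlinarith
  have h4 : d ^ 3 ≤ d := by nlinarith [sq_nonneg d]
  have h5 : d ^ 4 ≤ d := by nlinarith [sq_nonneg d]
  nlinarith

end MDS


lemma phi_upper {h a l s v T : ℝ} (hh : 0 < h) (hh1 : h ≤ 1 / 10) (ha : a = h ^ 2 / 10)
    (hv0 : 0 ≤ v) (hv : v ≤ (1 + h) * T) :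
    Real.exp (l * s - (1 - 2 * a) / 2 * l ^ 2 * v)
      - 1 / 4 * Real.exp ((1 + h) * l * s - (1 + a) / 2 * ((1 + h) * l) ^ 2 * v)
      ≤ Real.exp ((1 + 3 * h) * (1 + h) * (l ^ 2 * T) / 2 + Real.log 4 / h) := by
  set E0 := l * s - (1 - 2 * a) / 2 * l ^ 2 * v
  set E1 := (1 + h) * l * s - (1 + a) / 2 * ((1 + h) * l) ^ 2 * v
  have h4 : (1 / 4 : ℝ) = Real.exp (- Real.log 4) := by
    rw [Real.exp_neg, Real.exp_log (by norm_num)]; norm_num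
  rw [h4, ← Real.exp_add]
  by_cases hc : E0 ≤ - Real.log 4 + E1
  · have := Real.exp_le_exp.2 hc
    have := Real.exp_pos ((1 + 3 * h) * (1 + h) * (l ^ 2 * T) / 2 + Real.log 4 / h)
    linarith
  · push Not at hc
    have hE : E0 ≤ (1 + 3 * h) * (1 + h) * (l ^ 2 * T) / 2 + Real.log 4 / h := by
      have hz0 : 0 ≤ l ^ 2 * v := by positivity
      have hz : l ^ 2 * v ≤ l ^ 2 * ((1 + h) * T) := mul_le_mul_of_nonneg_left hv (sq_nonneg _)
      have h1 : E0 ≤ (1 + 3 * h) * (l ^ 2 * v) / 2 + Real.log 4 / h := by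
        have : h * E0 ≤ h * ((1 + 3 * h) * (l ^ 2 * v) / 2 + Real.log 4 / h) := by
          have e : h * (Real.log 4 / h) = Real.log 4 := by field_simp
          rw [mul_add, e]
          simp only [E0, E1] at hc ⊢
          have h3 : ((1 + a) * (1 + h) ^ 2 - (1 - 2 * a)) * (l ^ 2 * v) ≤
              (h * (1 - 2 * a) + h * (1 + 3 * h)) * (l ^ 2 * v) := by
            apply mul_le_mul_of_nonneg_right _ hz0
            rw [ha]
            nlinarith [mul_pos hh hh, mul_pos (mul_pos hh hh) hh]
          nlinarith
        exact le_of_mul_le_mul_left this hh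
      nlinarith
    have := Real.exp_le_exp.2 hE
    have := Real.exp_pos (-Real.log 4 + E1)
    linarith

lemma phi_neg {h a l s v T : ℝ} (hh : 0 < h) (hh1 : h ≤ 1 / 10) (ha : a = h ^ 2 / 10) (hl : 0 < l)
    (hv0 : 0 ≤ v) (hv : (1 - h) * T ≤ v) (hs : s ≤ (1 - h) ^ 2 * (l * T) - Real.log 4 / (h * l)) :
    Real.exp (l * s - (1 - 2 * a) / 2 * l ^ 2 * v)
      - 1 / 4 * Real.exp ((1 - h) * l * s - (1 + a) / 2 * ((1 - h) * l) ^ 2 * v) ≤ 0 := by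
  have h4 : (1 / 4 : ℝ) = Real.exp (- Real.log 4) := by
    rw [Real.exp_neg, Real.exp_log (by norm_num)]; norm_num
  rw [h4, ← Real.exp_add, sub_nonpos]
  apply Real.exp_le_exp.2
  have h1 : h * (l * s) ≤ h * ((1 - h) * (l ^ 2 * v)) - Real.log 4 := by
    have e : h * (l * (Real.log 4 / (h * l))) = Real.log 4 := by field_simp
    have h2 : h * (l * s) ≤ h * (l * ((1 - h) ^ 2 * (l * T) - Real.log 4 / (h * l))) := by gcongr
    have h3 : h * ((1 - h) * (l ^ 2 * ((1 - h) * T))) ≤ h * ((1 - h) * (l ^ 2 * v)) := by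
      have : 0 ≤ 1 - h := by linarith
      gcongr
    nlinarith
  have h3 : (2 * h - 2 * h ^ 2) * (l ^ 2 * v) ≤ ((1 - 2 * a) - (1 + a) * (1 - h) ^ 2) * (l ^ 2 * v) := by
    apply mul_le_mul_of_nonneg_right _ (by positivity)
    rw [ha]
    nlinarith [mul_pos hh hh, mul_pos (mul_pos hh hh) hh]
  nlinarith

namespace MDS
variable {Ω : Type*} [m : MeasurableSpace Ω] {μ : Measure Ω} {F : ℕ → MeasurableSpace Ω}
    {Y s2 : ℕ → Ω → ℝ} {c : ℕ → ℝ}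

lemma lowblock [IsProbabilityMeasure μ] (H : MDS μ F Y s2 c) (hc0 : ∀ k, 0 ≤ c k)
    {A B : ℕ} (hAB : A ≤ B)
    {h l T : ℝ} (hh : 0 < h) (hh1 : h ≤ 1 / 10) (hl : 0 < l) (hT : 0 < T)
    (hlc : ∀ k < B, 2 * l * c k ≤ h ^ 2 / 10) :
    ∃ Φ : Ω → ℝ, Measurable[F B] Φ ∧ (∃ K, ∀ ω, |Φ ω| ≤ K) ∧
      (∀ ω, Φ ω ≤ Real.exp ((1 + 3 * h) * (1 + h) * (l ^ 2 * T) / 2 + Real.log 4 / h)) ∧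
      (∀ f : Ω → ℝ, Measurable[F A] f → (∃ K, ∀ ω, |f ω| ≤ K) → (∀ ω, 0 ≤ f ω) →
        1 / 2 * ∫ ω, f ω ∂μ ≤ ∫ ω, f ω * Φ ω ∂μ) ∧
      (∀ ω, (1 - h) * T ≤ bs s2 A B ω → bs s2 A B ω ≤ (1 + h) * T →
        bs Y A B ω ≤ (1 - h) ^ 2 * (l * T) - Real.log 4 / (h * l) → Φ ω ≤ 0) := by
  obtain ⟨a, ha⟩ : ∃ a, a = h ^ 2 / 10 := ⟨_, rfl⟩
  have ha0 : 0 ≤ a := by rw [ha]; positivity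
  have ha2 : a ≤ 1 / 2 := by rw [ha]; nlinarith
  rw [← ha] at hlc
  let G : ℕ → Set Ω := fun k => {ω | bs s2 A (k + 1) ω ≤ (1 + h) * T}
  have hG : ∀ k, MeasurableSet[F k] (G k) := fun k => by
    have : Measurable[F k] (bs s2 A (k + 1)) := H.meas_bsS A (k + 1)
    exact this measurableSet_Iic
  have H' := H.freeze G hG
  set Y' := fun k => (G k).indicator (Y k) with hY'
  set s' := fun k => (G k).indicator (s2 k) with hs'
  have hvb : ∀ ω, bs s' A B ω ≤ (1 + h) * T := by
    intro ω
    induction B, hAB using Nat.le_induction with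
    | base => rw [bs_self]; positivity
    | succ n hn ih =>
      by_cases hω : ω ∈ G n
      · refine le_trans (Finset.sum_le_sum fun k _ => ?_) hω
        exact indicator_le_self' (fun ω _ => H.nonneg k ω) ω
      · rw [bs_succ hn]
        have : s' n ω = 0 := indicator_of_notMem hω _
        rw [this, add_zero]
        exact ih fun k hk => hlc k (by omega)
  have q0 : 0 ≤ (1 - 2 * a) / 2 * l ^ 2 := by
    have : 0 ≤ 1 - 2 * a := by linarith
    positivity
  let E0 := ex Y' s' l ((1 - 2 * a) / 2 * l ^ 2) A B
  let E1 := ex Y' s' ((1 + h) * l) ((1 + a) / 2 * ((1 + h) * l) ^ 2) A B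
  let E2 := ex Y' s' ((1 - h) * l) ((1 + a) / 2 * ((1 - h) * l) ^ 2) A B
  have mE0 : Measurable[F B] E0 := H'.meas_ex _ _ A B
  have mE1 : Measurable[F B] E1 := H'.meas_ex _ _ A B
  have mE2 : Measurable[F B] E2 := H'.meas_ex _ _ A B
  have bE0 : ∃ K, ∀ ω, |E0 ω| ≤ K := H'.bdd_ex _ q0 A B
  have bE1 : ∃ K, ∀ ω, |E1 ω| ≤ K := H'.bdd_ex _ (by positivity) A B
  have bE2 : ∃ K, ∀ ω, |E2 ω| ≤ K := H'.bdd_ex _ (by positivity) A B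
  refine ⟨fun ω => E0 ω - 1 / 4 * E1 ω - 1 / 4 * E2 ω, ?_, ?_, ?_, ?_, ?_⟩
  · exact (mE0.sub (mE1.const_mul _)).sub (mE2.const_mul _)
  · obtain ⟨K0, hK0⟩ := bE0
    obtain ⟨K1, hK1⟩ := bE1
    obtain ⟨K2, hK2⟩ := bE2
    refine ⟨K0 + 1 / 4 * K1 + 1 / 4 * K2, fun ω => ?_⟩
    have := abs_le.1 (hK0 ω)
    have := abs_le.1 (hK1 ω)
    have := abs_le.1 (hK2 ω)
    exact abs_le.2 ⟨by linarith, by linarith⟩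
  · intro ω
    have h1 := phi_upper (l := l) (s := bs Y' A B ω) hh hh1 ha (H'.nonneg_bsS A B ω) (hvb ω)
    have h2 : 0 ≤ E2 ω := Real.exp_nonneg _
    simp only [E0, E1, ex] at *
    linarith
  · intro f hf hfb hf0
    have i0 := H'.block_low hAB f hf hfb hf0 (l := l) ha2 (fun k hk => by
      rw [abs_of_pos hl]
      have := hlc k hk
      nlinarith [mul_nonneg hl.le (hc0 k)])
    have i1 := H'.block_up hAB f hf hfb hf0 (l := (1 + h) * l) ha0 (by linarith) (fun k hk => by
      rw [abs_of_pos (by positivity)]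
      have := hlc k hk
      nlinarith [mul_nonneg hl.le (hc0 k)])
    have i2 := H'.block_up hAB f hf hfb hf0 (l := (1 - h) * l) ha0 (by linarith) (fun k hk => by
      rw [abs_of_pos (mul_pos (by linarith) hl)]
      have := hlc k hk
      nlinarith [mul_nonneg hl.le (hc0 k)])
    have hfm : Measurable f := hf.mono (H.le _) le_rfl
    have j0 : Integrable (fun ω => f ω * E0 ω) μ :=
      integrable_of_bdd (hfm.mul (mE0.mono (H.le _) le_rfl)) (bdd_mul hfb bE0)
    have j1 : Integrable (fun ω => f ω * E1 ω) μ :=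
      integrable_of_bdd (hfm.mul (mE1.mono (H.le _) le_rfl)) (bdd_mul hfb bE1)
    have j2 : Integrable (fun ω => f ω * E2 ω) μ :=
      integrable_of_bdd (hfm.mul (mE2.mono (H.le _) le_rfl)) (bdd_mul hfb bE2)
    have e : ∫ ω, f ω * (E0 ω - 1 / 4 * E1 ω - 1 / 4 * E2 ω) ∂μ
        = ∫ ω, f ω * E0 ω ∂μ - 1 / 4 * ∫ ω, f ω * E1 ω ∂μ - 1 / 4 * ∫ ω, f ω * E2 ω ∂μ := by
      have j01 : Integrable (fun ω => f ω * E0 ω - 1 / 4 * (f ω * E1 ω)) μ :=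
        j0.sub (j1.const_mul _)
      rw [← integral_const_mul, ← integral_const_mul, ← integral_sub j0 (j1.const_mul _),
        ← integral_sub j01 (j2.const_mul _)]
      congr 1; ext ω; ring
    rw [e]
    simp only [E0, E1, E2]
    linarith
  · intro ω hv1 hv2 hs
    have hmem : ∀ k ∈ Finset.Ico A B, ω ∈ G k := fun k hk => by
      refine le_trans (Finset.sum_le_sum_of_subset_of_nonneg ?_ fun i _ _ => H.nonneg i ω) hv2
      have := Finset.mem_Ico.1 hk
      exact Finset.Ico_subset_Ico_right (by omega)
    have eY : bs Y' A B ω = bs Y A B ω := Finset.sum_congr rfl fun k hk =>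
      indicator_of_mem (hmem k hk) _
    have es : bs s' A B ω = bs s2 A B ω := Finset.sum_congr rfl fun k hk =>
      indicator_of_mem (hmem k hk) _
    have h1 := phi_neg hh hh1 ha hl (H.nonneg_bsS A B ω) hv1 hs
    have h2 : 0 ≤ E1 ω := Real.exp_nonneg _
    simp only [E0, E1, E2, ex, eY, es] at *
    linarith

lemma capital [IsProbabilityMeasure μ] (hF : Monotone F) (hFm : ∀ n, F n ≤ m)
    (n : ℕ → ℕ) (hn : Monotone n) (Φ : ℕ → Ω → ℝ) (N : ℕ → ℝ) (hN : ∀ j, 0 < N j)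
    (hm : ∀ j, Measurable[F (n (j + 1))] (Φ j)) (hb : ∀ j, ∃ K, ∀ ω, |Φ j ω| ≤ K)
    (hΦ : ∀ j ω, Φ j ω ≤ N j)
    (hhalf : ∀ j (f : Ω → ℝ), Measurable[F (n j)] f → (∃ K, ∀ ω, |f ω| ≤ K) → (∀ ω, 0 ≤ f ω) →
        1 / 2 * ∫ ω, f ω ∂μ ≤ ∫ ω, f ω * Φ j ω ∂μ)
    (hsum : Tendsto (fun J => ∑ j ∈ Finset.range J, 1 / N j) atTop atTop) :
    ∀ᵐ ω ∂μ, ∃ j, 0 < Φ j ω := by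
  let K : ℕ → Ω → ℝ := fun J ω => ∏ j ∈ Finset.range J, (1 - Φ j ω / N j)
  have hK0 : ∀ J ω, 0 ≤ K J ω := fun J ω => Finset.prod_nonneg fun j _ => by
    rw [sub_nonneg, div_le_one (hN j)]; exact hΦ j ω
  have hKs : ∀ J ω, K (J + 1) ω = K J ω * (1 - Φ J ω / N J) := fun J ω => Finset.prod_range_succ _ _
  have hKm : ∀ J, Measurable[F (n J)] (K J) := by
    intro J
    apply Finset.measurable_prod
    intro j hj
    have : Measurable[F (n J)] (Φ j) :=
      (hm j).mono (hF (hn (Finset.mem_range.1 hj))) le_rfl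
    exact measurable_const.sub (this.div_const _)
  have hKb : ∀ J, ∃ C, ∀ ω, |K J ω| ≤ C := by
    intro J
    induction J with
    | zero => exact ⟨1, fun ω => by simp [K]⟩
    | succ J ih =>
      obtain ⟨C, hC⟩ := bdd_mul ih (g := fun ω => 1 - Φ J ω / N J) (by
        obtain ⟨L, hL⟩ := hb J
        refine ⟨1 + L / N J, fun ω => (abs_sub _ _).trans ?_⟩
        rw [abs_one, abs_div, abs_of_pos (hN J)]
        have := hN J
        gcongr
        exact hL ω)
      exact ⟨C, fun ω => by rw [hKs]; exact hC ω⟩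
  have hintg : ∀ J, ∫ ω, K J ω ∂μ ≤ Real.exp (-(1 / 2 * ∑ j ∈ Finset.range J, 1 / N j)) := by
    intro J
    induction J with
    | zero => simp [K]
    | succ J ih =>
      have hKm' : Measurable (K J) := (hKm J).mono (hFm _) le_rfl
      have hΦm' : Measurable (Φ J) := (hm J).mono (hFm _) le_rfl
      have i1 : Integrable (K J) μ := integrable_of_bdd hKm' (hKb J)
      have i2 : Integrable (fun ω => K J ω * Φ J ω) μ :=
        integrable_of_bdd (hKm'.mul hΦm') (bdd_mul (hKb J) (hb J))
      have h1 := hhalf J (K J) (hKm J) (hKb J) (hK0 J)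
      have e : ∫ ω, K (J + 1) ω ∂μ = ∫ ω, K J ω ∂μ - (1 / N J) * ∫ ω, K J ω * Φ J ω ∂μ := by
        rw [← integral_const_mul, ← integral_sub i1 (i2.const_mul _)]
        congr 1; ext ω; rw [hKs]; ring
      have hNp := hN J
      have hI0 : 0 ≤ ∫ ω, K J ω ∂μ := integral_nonneg (hK0 J)
      have h2 : (1 / N J) * (1 / 2 * ∫ ω, K J ω ∂μ) ≤ (1 / N J) * ∫ ω, K J ω * Φ J ω ∂μ :=
        mul_le_mul_of_nonneg_left h1 (by positivity)
      have h3 := Real.add_one_le_exp (-(1 / 2 * (1 / N J)))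
      rw [e, Finset.sum_range_succ, mul_add, neg_add, Real.exp_add]
      calc _ ≤ (∫ ω, K J ω ∂μ) * (-(1 / 2 * (1 / N J)) + 1) := by nlinarith
        _ ≤ (∫ ω, K J ω ∂μ) * Real.exp (-(1 / 2 * (1 / N J))) := by gcongr
        _ ≤ _ := by gcongr
  have hbound : ∀ J, μ.real {ω | ¬ ∃ j, 0 < Φ j ω} ≤
      Real.exp (-(1 / 2 * ∑ j ∈ Finset.range J, 1 / N j)) := by
    intro J
    refine le_trans ?_ (hintg J)
    have hi : Integrable (K J) μ := integrable_of_bdd ((hKm J).mono (hFm _) le_rfl) (hKb J)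
    have := mul_meas_ge_le_integral_of_nonneg (Eventually.of_forall (hK0 J)) hi 1
    rw [one_mul] at this
    refine le_trans (measureReal_mono ?_) this
    intro ω hω
    simp only [mem_ofPred_eq, not_exists, not_lt] at hω
    show 1 ≤ K J ω
    refine Finset.prod_induction _ (fun x : ℝ => 1 ≤ x) (fun a b => one_le_mul_of_one_le_of_one_le)
      le_rfl fun j _ => ?_
    have := div_nonpos_of_nonpos_of_nonneg (hω j) (hN j).le
    linarith
  have hlim : Tendsto (fun J => Real.exp (-(1 / 2 * ∑ j ∈ Finset.range J, 1 / N j))) atTop (nhds 0) :=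
    Real.tendsto_exp_atBot.comp (tendsto_neg_atTop_atBot.comp (hsum.const_mul_atTop (by norm_num)))
  have h0 : μ.real {ω | ¬ ∃ j, 0 < Φ j ω} ≤ 0 := ge_of_tendsto' hlim hbound
  rw [ae_iff]
  have := le_antisymm h0 measureReal_nonneg
  rwa [measureReal_eq_zero_iff] at this

end MDS


namespace MDS
variable {Ω : Type*} [m : MeasurableSpace Ω] {μ : Measure Ω} {F : ℕ → MeasurableSpace Ω}
    {Y s2 : ℕ → Ω → ℝ} {c : ℕ → ℝ}

lemma lil_block [IsProbabilityMeasure μ] (H : MDS μ F Y s2 c) (hcm : Monotone c)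
    (hc0 : ∀ k, 0 ≤ c k)
    (hc : Tendsto (fun n : ℕ => c n * Real.sqrt (Real.log n) / Real.sqrt n) atTop (nhds 0))
    {σ2 : ℝ} (hσ : 0 < σ2)
    (hv : ∀ᵐ ω ∂μ, Tendsto (fun n : ℕ => bs s2 0 n ω / n) atTop (nhds σ2))
    {h : ℝ} (hh : 0 < h) (hh1 : h ≤ 1 / 10) (d : ℕ) (hd : 2 ≤ d) :
    ∀ᵐ ω ∂μ, ∃ᶠ j : ℕ in atTop,
      (1 - h) ^ 3 * Real.sqrt (2 * (1 - 5 * h) * (σ2 * (d ^ (j + 1) - d ^ j)) * Real.log j)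
        ≤ bs Y (d ^ j) (d ^ (j + 1)) ω := by
  let T : ℕ → ℝ := fun j => σ2 * (d ^ (j + 1) - d ^ j)
  have hd2 : (2:ℝ) ≤ d := by exact_mod_cast hd
  have h5 : 0 < 1 - 5 * h := by linarith
  have hT2 : ∀ j, σ2 * (d:ℝ) ^ (j + 1) / 2 ≤ T j := fun j => by
    have : 0 < (d:ℝ) ^ j := by positivity
    simp only [T, pow_succ]
    have : (d:ℝ) ^ j * d / 2 ≤ (d:ℝ) ^ j * d - d ^ j := by nlinarith
    calc σ2 * ((d:ℝ) ^ j * d) / 2 = σ2 * ((d:ℝ) ^ j * d / 2) := by ring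
      _ ≤ _ := mul_le_mul_of_nonneg_left this hσ.le
  have hT0 : ∀ j, 0 < T j := fun j => lt_of_lt_of_le (by positivity) (hT2 j)
  let l : ℕ → ℝ := fun j => Real.sqrt (2 * (1 - 5 * h) * Real.log j / T j)
  have hlt : Tendsto (fun j : ℕ => Real.log j) atTop atTop :=
    Real.tendsto_log_atTop.comp tendsto_natCast_atTop_atTop
  have hnt : Tendsto (fun j : ℕ => d ^ (j + 1)) atTop atTop :=
    (tendsto_add_atTop_iff_nat 1).2 (tendsto_pow_atTop_atTop_of_one_lt (by omega))
  have hlc : ∀ᶠ j : ℕ in atTop, ∀ k < d ^ (j + 1), 2 * l j * c k ≤ h ^ 2 / 10 := by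
    have h1 := (hc.comp hnt).const_mul (2 * Real.sqrt (4 / σ2))
    rw [mul_zero] at h1
    filter_upwards [h1.eventually (gt_mem_nhds (show 0 < h ^ 2 / 10 by positivity)),
      eventually_ge_atTop 1] with j hj hj1 k hk
    simp only [Function.comp] at hj
    set N := d ^ (j + 1) with hN
    have hjN : j ≤ N := by
      have := Nat.lt_pow_self (n := j + 1) (show 1 < d by omega)
      omega
    have hjN' : (j:ℝ) ≤ N := by exact_mod_cast hjN
    have hj1' : (1:ℝ) ≤ j := by exact_mod_cast hj1
    have hN1 : (1:ℝ) ≤ N := by linarith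
    have hl : l j ≤ Real.sqrt (4 / σ2) * (Real.sqrt (Real.log N) / Real.sqrt N) := by
      rw [← Real.sqrt_div (Real.log_nonneg hN1), ← Real.sqrt_mul (by positivity)]
      apply Real.sqrt_le_sqrt
      have hlog : Real.log j ≤ Real.log N := Real.log_le_log (by linarith) hjN'
      have hTN : σ2 * N / 2 ≤ T j := by
        have := hT2 j; rw [hN]; push_cast; exact this
      have htj := hT0 j
      have hlj : 0 ≤ Real.log j := Real.log_nonneg hj1'
      rw [div_mul_div_comm, div_le_div_iff₀ (by positivity) (by positivity)]
      calc 2 * (1 - 5 * h) * Real.log j * (σ2 * N) ≤ 2 * 1 * Real.log N * (2 * T j) := by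
            have hlN : 0 ≤ Real.log N := Real.log_nonneg hN1
            exact mul_le_mul (mul_le_mul (by linarith) hlog hlj (by norm_num)) (by linarith)
              (by positivity) (by positivity)
        _ = _ := by ring
    calc 2 * l j * c k ≤ 2 * (Real.sqrt (4 / σ2) * (Real.sqrt (Real.log N) / Real.sqrt N)) * c N := by
          gcongr
          · exact hc0 k
          · exact hcm hk.le
      _ = _ := by ring
      _ ≤ _ := hj.le
  have hev : ∀ᶠ j : ℕ in atTop, Real.log 4 ≤ h ^ 2 * (1 - h) ^ 2 * (2 * (1 - 5 * h) * Real.log j) := by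
    have : Tendsto (fun j : ℕ => h ^ 2 * (1 - h) ^ 2 * (2 * (1 - 5 * h) * Real.log j)) atTop atTop := by
      have h1 : 0 < 1 - h := by linarith
      exact (hlt.const_mul_atTop (by positivity)).const_mul_atTop (by positivity)
    exact this.eventually_ge_atTop _
  obtain ⟨J, hJ⟩ := eventually_atTop.1 ((hlc.and hev).and (eventually_ge_atTop 2))
  have hJl : ∀ j, J ≤ j → 0 < Real.log j := fun j hj => by
    have : (2:ℝ) ≤ j := by exact_mod_cast (hJ j hj).2
    exact Real.log_pos (by linarith)
  have hl0 : ∀ j, J ≤ j → 0 < l j := fun j hj => by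
    have := hJl j hj
    have := hT0 j
    exact Real.sqrt_pos.2 (by positivity)
  have hl2 : ∀ j, J ≤ j → l j ^ 2 * T j = 2 * (1 - 5 * h) * Real.log j := fun j hj => by
    have h1 := hJl j hj
    have h2 := hT0 j
    rw [Real.sq_sqrt (by positivity)]
    field_simp
  have hex := fun j (hj : J ≤ j) => H.lowblock (A := d ^ j) (B := d ^ (j + 1)) hc0
    (Nat.pow_le_pow_right (by omega) (Nat.le_succ j)) hh hh1 (hl0 j hj) (hT0 j) (hJ j hj).1.1
  choose! Φ hΦm hΦb hΦu hΦh hΦn using hex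
  have hΦu' : ∀ j, J ≤ j → ∀ ω, Φ j ω ≤ Real.exp (Real.log 4 / h) * j := by
    intro j hj ω
    refine (hΦu j hj ω).trans ?_
    have h1 := hJl j hj
    have hj0 : (0:ℝ) < j := by
      have : (2:ℝ) ≤ j := by exact_mod_cast (hJ j hj).2
      linarith
    rw [hl2 j hj, Real.exp_add, mul_comm]
    gcongr
    rw [← Real.le_log_iff_exp_le hj0]
    have : (1 + 3 * h) * (1 + h) * (1 - 5 * h) ≤ 1 := by nlinarith [mul_pos hh hh, mul_pos (mul_pos hh hh) hh]
    nlinarith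
  have hfreq : ∀ᵐ ω ∂μ, ∀ j0, ∃ j ≥ j0, J ≤ j ∧ 0 < Φ j ω := by
    rw [ae_all_iff]
    intro j0
    have := capital (μ := μ) H.mono H.le (fun j => d ^ (max J j0 + j))
      (fun i j hij => Nat.pow_le_pow_right (by omega) (by omega))
      (fun j => Φ (max J j0 + j)) (fun j => Real.exp (Real.log 4 / h) * (max J j0 + j : ℕ))
      (fun j => by
        have : 0 < max J j0 + j := by
          have := (hJ (max J j0 + j) (by omega)).2; omega
        have : (0:ℝ) < (max J j0 + j : ℕ) := by exact_mod_cast this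
        positivity)
      (fun j => hΦm _ (by omega)) (fun j => hΦb _ (by omega)) (fun j ω => hΦu' _ (by omega) ω)
      (fun j f => hΦh _ (by omega) f) (by
        rw [← not_summable_iff_tendsto_nat_atTop_of_nonneg (fun j => by positivity)]
        intro hs
        have h1 : Summable (fun j : ℕ => 1 / ((max J j0 + j : ℕ) : ℝ)) := by
          refine (hs.mul_left (Real.exp (Real.log 4 / h))).congr fun j => ?_
          have hpos := Real.exp_pos (Real.log 4 / h)
          rw [one_div, mul_inv, ← mul_assoc, mul_inv_cancel₀ hpos.ne', one_mul, one_div]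
        have h2 : Summable (fun j : ℕ => 1 / ((j + max J j0 : ℕ) : ℝ)) := by
          simpa [add_comm] using h1
        exact Real.not_summable_one_div_natCast ((summable_nat_add_iff (f := fun j : ℕ => 1 / (j:ℝ)) (max J j0)).1 h2))
    filter_upwards [this] with ω ⟨j, hj⟩
    exact ⟨max J j0 + j, by omega, by omega, hj⟩
  filter_upwards [hfreq, hv] with ω hω hvω
  have hgood : ∀ᶠ j : ℕ in atTop, (1 - h) * T j ≤ bs s2 (d ^ j) (d ^ (j + 1)) ω ∧
      bs s2 (d ^ j) (d ^ (j + 1)) ω ≤ (1 + h) * T j := by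
    have hη : 0 < h * σ2 / 4 := by positivity
    have h1 := Metric.tendsto_nhds.1 hvω _ hη
    have hnt' : Tendsto (fun j : ℕ => d ^ j) atTop atTop :=
      tendsto_pow_atTop_atTop_of_one_lt (by omega)
    filter_upwards [hnt.eventually h1, hnt'.eventually h1] with j e1 e2
    have p1 : (0:ℝ) < d ^ (j + 1) := by positivity
    have p2 : (0:ℝ) < d ^ j := by positivity
    push_cast at e1 e2
    rw [Real.dist_eq, abs_lt, lt_sub_iff_add_lt, sub_lt_iff_lt_add, lt_div_iff₀ p1, div_lt_iff₀ p1] at e1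
    rw [Real.dist_eq, abs_lt, lt_sub_iff_add_lt, sub_lt_iff_lt_add, lt_div_iff₀ p2, div_lt_iff₀ p2] at e2
    have hdec : bs s2 0 (d ^ j) ω + bs s2 (d ^ j) (d ^ (j + 1)) ω = bs s2 0 (d ^ (j + 1)) ω :=
      Finset.sum_Ico_consecutive _ (Nat.zero_le _) (Nat.pow_le_pow_right (by omega) (Nat.le_succ j))
    have h3 := hT2 j
    have hle : (d:ℝ) ^ j ≤ d ^ (j + 1) / 2 := by rw [pow_succ]; nlinarith
    have hTj : T j = σ2 * d ^ (j + 1) - σ2 * d ^ j := by simp only [T]; ring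
    have key : h * σ2 / 4 * d ^ (j + 1) + h * σ2 / 4 * d ^ j ≤ h * T j := by
      have : h * σ2 / 4 * d ^ j ≤ h * σ2 / 4 * (d ^ (j + 1) / 2) := by gcongr
      have : 0 < h * σ2 * d ^ (j + 1) := by positivity
      nlinarith
    constructor <;> nlinarith
  obtain ⟨J2, hJ2⟩ := eventually_atTop.1 hgood
  rw [frequently_atTop]
  intro j0
  obtain ⟨j, hj, hJj, hpos⟩ := hω (max j0 J2)
  refine ⟨j, le_trans (le_max_left _ _) hj, ?_⟩
  obtain ⟨g1, g2⟩ := hJ2 j (le_trans (le_max_right _ _) hj)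
  have hnot : (1 - h) ^ 2 * (l j * T j) - Real.log 4 / (h * l j) < bs Y (d ^ j) (d ^ (j + 1)) ω := by
    by_contra hcon
    exact absurd (hΦn j hJj ω g1 g2 (not_lt.1 hcon)) (not_le.2 hpos)
  refine le_trans ?_ hnot.le
  have hTj := hT0 j
  have hLj := hJl j hJj
  have hlj := hl0 j hJj
  have e : Real.sqrt (2 * (1 - 5 * h) * (σ2 * (d ^ (j + 1) - d ^ j)) * Real.log j) = l j * T j := by
    rw [Real.sqrt_eq_iff_mul_self_eq (by positivity) (by positivity)]
    have := hl2 j hJj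
    symm
    calc l j * T j * (l j * T j) = (l j ^ 2 * T j) * T j := by ring
      _ = _ := by rw [this]; simp only [T]; ring
  rw [e]
  have h6 : Real.log 4 / (h * l j) ≤ h * (1 - h) ^ 2 * (l j * T j) := by
    rw [div_le_iff₀ (by positivity)]
    have := (hJ j hJj).1.2
    rw [← hl2 j hJj] at this
    linarith
  nlinarith

set_option maxHeartbeats 2000000 in
lemma lil_lower [IsProbabilityMeasure μ] (H : MDS μ F Y s2 c) (hcm : Monotone c)
    (hc0 : ∀ k, 0 ≤ c k)
    (hc : Tendsto (fun n : ℕ => c n * Real.sqrt (Real.log n) / Real.sqrt n) atTop (nhds 0))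
    {σ2 : ℝ} (hσ : 0 < σ2)
    (hv : ∀ᵐ ω ∂μ, Tendsto (fun n : ℕ => bs s2 0 n ω / n) atTop (nhds σ2))
    {ε : ℝ} (hε : 0 < ε) :
    ∀ᵐ ω ∂μ, ∃ᶠ n : ℕ in atTop,
      (1 - ε) * Real.sqrt (2 * n * σ2 * Real.log (Real.log n)) ≤ bs Y 0 n ω := by
  obtain ⟨h, hh, hh1, hhε⟩ : ∃ h : ℝ, 0 < h ∧ h ≤ 1 / 10 ∧ 9 * h ≤ ε / 2 :=
    ⟨min (1 / 10) (ε / 18), by positivity, min_le_left _ _, by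
      have := min_le_right (1 / 10) (ε / 18); linarith⟩
  obtain ⟨d, hdd⟩ := exists_nat_ge (max 3 ((6 / ε) ^ 2))
  have hd3 : (3:ℝ) ≤ d := (le_max_left _ _).trans hdd
  have hd : 3 ≤ d := by exact_mod_cast hd3
  have hdε : 3 / Real.sqrt d ≤ ε / 2 := by
    have h1 : 6 / ε ≤ Real.sqrt d := Real.le_sqrt_of_sq_le ((le_max_right _ _).trans hdd)
    rw [div_le_iff₀ hε] at h1
    rw [div_le_iff₀ (by positivity)]
    linarith
  have hlt : Tendsto (fun j : ℕ => Real.log j) atTop atTop :=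
    Real.tendsto_log_atTop.comp tendsto_natCast_atTop_atTop
  have hld : 0 < Real.log d := Real.log_pos (by linarith)
  have hev : ∀ᶠ j : ℕ in atTop, (1 - h) * (Real.log (j + 1) + Real.log (Real.log d)) ≤ Real.log j := by
    have : Tendsto (fun j : ℕ => h * Real.log j) atTop atTop := hlt.const_mul_atTop hh
    filter_upwards [this.eventually_ge_atTop ((1 - h) * (Real.log 2 + Real.log (Real.log d))),
      eventually_ge_atTop 1] with j hj hj1
    have hj1' : (1:ℝ) ≤ j := by exact_mod_cast hj1
    have : Real.log (j + 1) ≤ Real.log 2 + Real.log j := by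
      rw [← Real.log_mul (by norm_num) (by positivity)]
      exact Real.log_le_log (by positivity) (by linarith)
    nlinarith
  have hnt' : Tendsto (fun j : ℕ => d ^ j) atTop atTop :=
    tendsto_pow_atTop_atTop_of_one_lt (by omega)
  filter_upwards [H.lil_block hcm hc0 hc hσ hv hh hh1 d (by omega),
    H.neg.lil_upper hcm hc0 hc hσ hv (one_pos)] with ω hω1 hω2
  have hcomb := (hω1.and_eventually ((hnt'.eventually hω2).and (hev.and (eventually_ge_atTop 3))))
  rw [frequently_atTop] at hcomb ⊢
  intro n0
  obtain ⟨j, hj, h1, h2, h3, hj3⟩ := hcomb n0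
  refine ⟨d ^ (j + 1), ?_, ?_⟩
  · have := Nat.lt_pow_self (n := j + 1) (show 1 < d by omega)
    omega
  have hj3' : (3:ℝ) ≤ j := by exact_mod_cast hj3
  have hdec : bs Y 0 (d ^ j) ω + bs Y (d ^ j) (d ^ (j + 1)) ω = bs Y 0 (d ^ (j + 1)) ω :=
      Finset.sum_Ico_consecutive _ (Nat.zero_le _) (Nat.pow_le_pow_right (by omega) (Nat.le_succ j))
  have hneg : bs (fun k ω => - Y k ω) 0 (d ^ j) ω = - bs Y 0 (d ^ j) ω := by
    simp [bs]
  rw [hneg] at h2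
  push_cast at h2 ⊢
  set φ := Real.sqrt (2 * d ^ (j + 1) * σ2 * Real.log (Real.log (d ^ (j + 1)))) with hφ
  have hφ0 : 0 ≤ φ := Real.sqrt_nonneg _
  have hlog1 : (1:ℝ) ≤ Real.log d := by
    rw [Real.le_log_iff_exp_le (by linarith)]
    linarith [Real.exp_one_lt_d9]
  have hll : Real.log (Real.log ((d:ℝ) ^ (j + 1))) = Real.log (j + 1) + Real.log (Real.log d) := by
    rw [Real.log_pow, Real.log_mul (by positivity) hld.ne']; push_cast; rfl
  have hll0 : 0 ≤ Real.log (Real.log ((d:ℝ) ^ (j + 1))) := by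
    rw [hll]; exact add_nonneg (Real.log_nonneg (by linarith)) (Real.log_nonneg hlog1)
  have hprev : Real.sqrt (2 * d ^ j * σ2 * Real.log (Real.log (d ^ j))) ≤ φ / Real.sqrt d := by
    rw [hφ, ← Real.sqrt_div' _ (by positivity)]
    apply Real.sqrt_le_sqrt
    rw [le_div_iff₀ (by positivity)]
    have hmono : Real.log (Real.log ((d:ℝ) ^ j)) ≤ Real.log (Real.log ((d:ℝ) ^ (j + 1))) := by
      apply Real.log_le_log
      · rw [Real.log_pow]; positivity
      · apply Real.log_le_log (by positivity)
        exact pow_le_pow_right₀ (by linarith) (Nat.le_succ j)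
    calc 2 * (d:ℝ) ^ j * σ2 * Real.log (Real.log (d ^ j)) * d
        = 2 * (d:ℝ) ^ (j + 1) * σ2 * Real.log (Real.log (d ^ j)) := by ring
      _ ≤ _ := by gcongr
  have hsd : Real.sqrt d * Real.sqrt d = d := Real.mul_self_sqrt (by positivity)
  have hsd1 : 1 ≤ Real.sqrt d := by rw [Real.one_le_sqrt]; linarith
  have hinv : 1 / (d:ℝ) ≤ 1 / Real.sqrt d := by
    apply one_div_le_one_div_of_le (by linarith); nlinarith
  have hinv0 : 0 < 1 / (d:ℝ) := by positivity
  have hinv1 : 1 / (d:ℝ) ≤ 1 / 3 := one_div_le_one_div_of_le (by norm_num) hd3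
  set x := (1 - 5 * h) * (1 - h) * (1 - 1 / d) with hx
  have hx0 : 0 ≤ x := by
    apply mul_nonneg (mul_nonneg _ _) <;> linarith
  have hx1 : x ≤ 1 := by
    have : (1 - 5 * h) * (1 - h) ≤ 1 := by nlinarith
    have : 0 ≤ (1 - 5 * h) * (1 - h) := mul_nonneg (by linarith) (by linarith)
    nlinarith
  have hsq : x * φ ≤ Real.sqrt (2 * (1 - 5 * h) * (σ2 * (d ^ (j + 1) - d ^ j)) * Real.log j) := by
    apply Real.le_sqrt_of_sq_le
    rw [mul_pow, hφ, Real.sq_sqrt (by positivity)]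
    have e : (σ2 * ((d:ℝ) ^ (j + 1) - d ^ j)) = σ2 * d ^ (j + 1) * (1 - 1 / d) := by
      rw [pow_succ]; field_simp
    rw [e]
    have hx2 : x ^ 2 ≤ x := by nlinarith
    rw [← hll] at h3
    have hq : 0 ≤ 2 * (d:ℝ) ^ (j + 1) * σ2 * Real.log (Real.log (d ^ (j + 1))) := by positivity
    have h15 : 0 ≤ (1 - 5 * h) := by linarith
    have h1d : 0 ≤ 1 - 1 / (d:ℝ) := by linarith
    calc x ^ 2 * (2 * d ^ (j + 1) * σ2 * Real.log (Real.log (d ^ (j + 1))))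
        ≤ x * (2 * d ^ (j + 1) * σ2 * Real.log (Real.log (d ^ (j + 1)))) := by gcongr
      _ = 2 * (1 - 5 * h) * (σ2 * d ^ (j + 1) * (1 - 1 / d)) *
          ((1 - h) * Real.log (Real.log (d ^ (j + 1)))) := by rw [hx]; ring
      _ ≤ _ := by gcongr
  have hbern : 1 - 9 * h - 1 / d ≤ (1 - h) ^ 3 * x := by
    have a1 : 1 - 3 * h ≤ (1 - h) ^ 3 := by nlinarith [mul_pos hh hh, mul_pos (mul_pos hh hh) hh]
    have a2 : 1 - 6 * h ≤ (1 - 5 * h) * (1 - h) := by nlinarith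
    have a3 : (1 - 3 * h) * (1 - 6 * h) ≤ (1 - h) ^ 3 * ((1 - 5 * h) * (1 - h)) :=
      mul_le_mul a1 a2 (by linarith) (pow_nonneg (by linarith) _)
    have a4 : 1 - 9 * h ≤ (1 - h) ^ 3 * ((1 - 5 * h) * (1 - h)) := by nlinarith
    have a5 : (1 - 9 * h) * (1 - 1 / d) ≤ (1 - h) ^ 3 * ((1 - 5 * h) * (1 - h)) * (1 - 1 / d) :=
      mul_le_mul_of_nonneg_right a4 (by linarith)
    have a6 : (1 - h) ^ 3 * x = (1 - h) ^ 3 * ((1 - 5 * h) * (1 - h)) * (1 - 1 / d) := by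
      rw [hx]; ring
    rw [a6]
    have := mul_pos hh hinv0
    linarith
  have hmain : (1 - 9 * h - 1 / d) * φ ≤ bs Y (d ^ j) (d ^ (j + 1)) ω := by
    calc _ ≤ ((1 - h) ^ 3 * x) * φ := by gcongr
      _ = (1 - h) ^ 3 * (x * φ) := by ring
      _ ≤ _ := by
        have : 0 ≤ (1 - h) ^ 3 := pow_nonneg (by linarith) _
        gcongr
      _ ≤ _ := h1
  have hfin : 1 - ε ≤ 1 - 9 * h - 1 / d - 2 * (1 / Real.sqrt d) := by
    have : 3 / Real.sqrt d = 3 * (1 / Real.sqrt d) := by ring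
    linarith
  rw [← hdec]
  calc (1 - ε) * φ ≤ (1 - 9 * h - 1 / d - 2 * (1 / Real.sqrt d)) * φ := by gcongr
    _ = (1 - 9 * h - 1 / d) * φ - 2 * (φ / Real.sqrt d) := by ring
    _ ≤ _ := by linarith

end MDS


lemma cos_le_quad (y : ℝ) : |Real.cos y - (1 - y ^ 2 / 2)| ≤ |y| ^ 3 := by
  rcases le_or_gt (|y|) 1 with h | h
  · refine (Real.cos_bound h).trans ?_
    have := pow_le_pow_of_le_one (abs_nonneg y) h (show 3 ≤ 4 by norm_num)
    have : 0 ≤ |y| ^ 4 := by positivity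
    linarith
  · have h1 : y ^ 2 = |y| ^ 2 := (sq_abs y).symm
    have h2 := Real.one_sub_sq_div_two_le_cos (x := y)
    rw [abs_of_nonneg (by linarith)]
    have := Real.cos_le_one y
    rw [h1]
    nlinarith [mul_pos (show 0 < |y| by linarith) (show 0 < |y| by linarith)]

lemma sin_le_lin (y : ℝ) : |Real.sin y - y| ≤ |y| ^ 3 := by
  have key : ∀ y : ℝ, 0 ≤ y → |Real.sin y - y| ≤ |y| ^ 3 := by
    intro y hy
    rcases hy.eq_or_lt with rfl | hy
    · simp
    rw [abs_of_nonneg hy.le]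
    have h1 := Real.sin_le hy.le
    rw [abs_of_nonpos (by linarith)]
    have := Real.sin_ge_sub_cube hy.le
    have : 0 < y ^ 3 := by positivity
    linarith
  rcases le_total 0 y with h | h
  · exact key y h
  · have := key (-y) (by linarith)
    rw [Real.sin_neg, abs_neg] at this
    rwa [show Real.sin y - y = -(-Real.sin y - -y) by ring, abs_neg]

lemma cos_add_quad {a : ℝ} (ψ y : ℝ) (hy : |y| ≤ a) :
    Real.cos (ψ + y) ≤ Real.cos ψ * (1 - y ^ 2 / 2) - Real.sin ψ * y + 2 * a * y ^ 2 := by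
  rw [Real.cos_add]
  have h1 := cos_le_quad y
  have h2 := sin_le_lin y
  have h3 : |y| ^ 3 ≤ a * y ^ 2 := by
    rw [pow_succ', sq_abs]; gcongr
  have e1 : |Real.cos ψ * (Real.cos y - (1 - y ^ 2 / 2))| ≤ a * y ^ 2 := by
    rw [abs_mul]
    calc _ ≤ 1 * |y| ^ 3 := mul_le_mul (Real.abs_cos_le_one ψ) h1 (abs_nonneg _) zero_le_one
      _ ≤ _ := by linarith
  have e2 : |Real.sin ψ * (Real.sin y - y)| ≤ a * y ^ 2 := by
    rw [abs_mul]
    calc _ ≤ 1 * |y| ^ 3 := mul_le_mul (Real.abs_sin_le_one ψ) h2 (abs_nonneg _) zero_le_one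
      _ ≤ _ := by linarith
  have := (abs_le.1 e1).2
  have := (abs_le.1 e2).1
  linarith

namespace MDS
variable {Ω : Type*} [m : MeasurableSpace Ω] {μ : Measure Ω} {F : ℕ → MeasurableSpace Ω}
    {Y s2 : ℕ → Ω → ℝ} {c : ℕ → ℝ}

lemma clt_step [IsProbabilityMeasure μ] (H : MDS μ F Y s2 c) (k : ℕ) (h ψ : Ω → ℝ)
    (hm : Measurable[F k] h) (hψ : Measurable[F k] ψ) (h0 : ∀ ω, 0 ≤ h ω) {l a K : ℝ}
    (ha' : a ≤ 1) (hl : |l| * c k ≤ a)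
    (hK : ∀ ω, h ω * Real.exp (l ^ 2 / 2 * s2 k ω) ≤ K) :
    ∫ ω, h ω * Real.exp (l ^ 2 / 2 * s2 k ω) * Real.cos (ψ ω + l * Y k ω) ∂μ
      ≤ ∫ ω, h ω * Real.cos (ψ ω) ∂μ + 3 * a * K * l ^ 2 * ∫ ω, s2 k ω ∂μ := by
  rcases isEmpty_or_nonempty Ω with hΩ | ⟨⟨ω₀⟩⟩
  · simp [Measure.eq_zero_of_isEmpty]
  have ha : 0 ≤ a := le_trans (mul_nonneg (abs_nonneg _) ((abs_nonneg _).trans (H.bddY k ω₀))) hl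
  have hck : 0 ≤ c k := (abs_nonneg _).trans (H.bddY k ω₀)
  set W : Ω → ℝ := fun ω => h ω * Real.exp (l ^ 2 / 2 * s2 k ω) with hW
  have hW0 : ∀ ω, 0 ≤ W ω := fun ω => mul_nonneg (h0 ω) (Real.exp_nonneg _)
  have hWm : Measurable[F k] W := hm.mul (Real.measurable_exp.comp ((H.measS k).const_mul _))
  have hK0 : 0 ≤ K := (hW0 ω₀).trans (hK ω₀)
  have hhW : ∀ ω, h ω ≤ W ω := fun ω => by
    have := H.nonneg k ω
    exact le_mul_of_one_le_right (h0 ω) (Real.one_le_exp (by positivity))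
  have hmY := H.mY k
  have hmS := H.mS k
  have hm' : Measurable h := hm.mono (H.le _) le_rfl
  have hψ' : Measurable ψ := hψ.mono (H.le _) le_rfl
  have hWm' : Measurable W := hWm.mono (H.le _) le_rfl
  have hly : ∀ ω, |l * Y k ω| ≤ a := fun ω => by
    rw [abs_mul]; exact (mul_le_mul_of_nonneg_left (H.bddY k ω) (abs_nonneg _)).trans hl
  let f1 : Ω → ℝ := fun ω => W ω * Real.cos (ψ ω)
  let f2 : Ω → ℝ := fun ω => W ω * Real.sin (ψ ω)
  have f1m : Measurable[F k] f1 := hWm.mul (Real.measurable_cos.comp hψ)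
  have f2m : Measurable[F k] f2 := hWm.mul (Real.measurable_sin.comp hψ)
  have f1b : ∀ ω, |f1 ω| ≤ K := fun ω => by
    rw [abs_mul, abs_of_nonneg (hW0 ω)]
    calc _ ≤ K * 1 := mul_le_mul (hK ω) (Real.abs_cos_le_one _) (abs_nonneg _) hK0
      _ = K := mul_one _
  have f2b : ∀ ω, |f2 ω| ≤ K := fun ω => by
    rw [abs_mul, abs_of_nonneg (hW0 ω)]
    calc _ ≤ K * 1 := mul_le_mul (hK ω) (Real.abs_sin_le_one _) (abs_nonneg _) hK0
      _ = K := mul_one _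
  have bY : ∃ K, ∀ ω, |Y k ω| ≤ K := ⟨_, H.bddY k⟩
  have bS : ∃ K, ∀ ω, |s2 k ω| ≤ K :=
    ⟨c k ^ 2, fun ω => by rw [abs_of_nonneg (H.nonneg k ω)]; exact H.bddS k ω⟩
  have bY2 : ∃ K, ∀ ω, |Y k ω ^ 2| ≤ K := by simpa only [sq] using bdd_mul bY bY
  have i0 : Integrable f1 μ := integrable_of_bdd (f1m.mono (H.le _) le_rfl) ⟨K, f1b⟩
  have i1 : Integrable (fun ω => f2 ω * Y k ω) μ :=
    integrable_of_bdd ((f2m.mono (H.le _) le_rfl).mul hmY) (bdd_mul ⟨K, f2b⟩ bY)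
  have i2 : Integrable (fun ω => f1 ω * Y k ω ^ 2) μ :=
    integrable_of_bdd ((f1m.mono (H.le _) le_rfl).mul (hmY.pow_const 2)) (bdd_mul ⟨K, f1b⟩ bY2)
  have i3 : Integrable (fun ω => Y k ω ^ 2) μ := integrable_of_bdd (hmY.pow_const 2) bY2
  have i4 : Integrable (fun ω => f1 ω * s2 k ω) μ :=
    integrable_of_bdd ((f1m.mono (H.le _) le_rfl).mul hmS) (bdd_mul ⟨K, f1b⟩ bS)
  have i5 : Integrable (s2 k) μ := integrable_of_bdd hmS bS
  have i6 : Integrable (fun ω => h ω * Real.cos (ψ ω)) μ := by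
    refine integrable_of_bdd (by fun_prop) (bdd_mul ⟨K, fun ω => ?_⟩ ⟨1, fun ω => Real.abs_cos_le_one _⟩)
    rw [abs_of_nonneg (h0 ω)]; exact (hhW ω).trans (hK ω)
  have e1 := H.int1 k f2 f2m ⟨K, f2b⟩
  have e2 := H.int2 k f1 f1m ⟨K, f1b⟩
  have e3 := H.int2 k (fun _ => 1) measurable_const ⟨1, fun _ => by simp⟩
  simp only [one_mul] at e3
  calc ∫ ω, W ω * Real.cos (ψ ω + l * Y k ω) ∂μ
      ≤ ∫ ω, (f1 ω - l ^ 2 / 2 * (f1 ω * Y k ω ^ 2) - l * (f2 ω * Y k ω)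
          + 2 * a * K * l ^ 2 * Y k ω ^ 2) ∂μ := by
        apply integral_mono
        · refine integrable_of_bdd (by fun_prop) (bdd_mul ⟨K, fun ω => ?_⟩ ⟨1, fun ω => Real.abs_cos_le_one _⟩)
          rw [abs_of_nonneg (hW0 ω)]; exact hK ω
        · exact ((i0.sub (i2.const_mul _)).sub (i1.const_mul _)).add (i3.const_mul _)
        · intro ω
          have h1 := mul_le_mul_of_nonneg_left (cos_add_quad (ψ ω) _ (hly ω)) (hW0 ω)
          have h2 : W ω * (2 * a * (l * Y k ω) ^ 2) ≤ K * (2 * a * (l * Y k ω) ^ 2) :=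
            mul_le_mul_of_nonneg_right (hK ω) (by positivity)
          simp only [f1, f2]
          linarith
    _ = ∫ ω, f1 ω ∂μ - l ^ 2 / 2 * ∫ ω, f1 ω * s2 k ω ∂μ + 2 * a * K * l ^ 2 * ∫ ω, s2 k ω ∂μ := by
        have j1 : Integrable (fun ω => f1 ω - l ^ 2 / 2 * (f1 ω * Y k ω ^ 2)) μ :=
          i0.sub (i2.const_mul _)
        have j2 : Integrable (fun ω => f1 ω - l ^ 2 / 2 * (f1 ω * Y k ω ^ 2)
            - l * (f2 ω * Y k ω)) μ := j1.sub (i1.const_mul _)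
        rw [integral_add j2 (i3.const_mul _), integral_sub j1 (i1.const_mul _),
          integral_sub i0 (i2.const_mul _), integral_const_mul, integral_const_mul,
          integral_const_mul, e1, e2, e3]
        ring
    _ = ∫ ω, (f1 ω - l ^ 2 / 2 * (f1 ω * s2 k ω) + 2 * a * K * l ^ 2 * s2 k ω) ∂μ := by
        have j1 : Integrable (fun ω => f1 ω - l ^ 2 / 2 * (f1 ω * s2 k ω)) μ :=
          i0.sub (i4.const_mul _)
        rw [integral_add j1 (i5.const_mul _),
          integral_sub i0 (i4.const_mul _), integral_const_mul, integral_const_mul]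
    _ ≤ ∫ ω, (h ω * Real.cos (ψ ω) + 3 * a * K * l ^ 2 * s2 k ω) ∂μ := by
        apply integral_mono ((i0.sub (i4.const_mul _)).add (i5.const_mul _)) (i6.add (i5.const_mul _))
        intro ω
        set z := l ^ 2 / 2 * s2 k ω with hz
        have hs := H.nonneg k ω
        have hz0 : 0 ≤ z := by positivity
        have hza : z ≤ a ^ 2 / 2 := by
          have : (|l| * c k) ^ 2 ≤ a ^ 2 := pow_le_pow_left₀ (by positivity) hl 2
          rw [mul_pow, sq_abs] at this
          have := mul_le_mul_of_nonneg_left (H.bddS k ω) (sq_nonneg l)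
          simp only [hz]; linarith
        have hza' : z ≤ a := by nlinarith
        have hWz : |W ω * (1 - z) - h ω| ≤ K * (a * z) := by
          have h1 : W ω * (1 - z) - h ω = W ω * ((1 - z) - Real.exp (-z)) := by
            have : h ω = W ω * Real.exp (-z) := by
              simp only [hW]; rw [mul_assoc, ← Real.exp_add]; simp [hz]
            linear_combination -this
          have h2 : |(1 - z) - Real.exp (-z)| ≤ a * z := by
            have := Real.abs_exp_sub_one_sub_id_le (x := -z) (by rw [abs_neg, abs_of_nonneg hz0]; linarith)
            rw [abs_sub_comm]
            calc _ = |Real.exp (-z) - 1 - -z| := by congr 1; ring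
              _ ≤ _ := this
              _ ≤ a * z := by nlinarith
          rw [h1, abs_mul, abs_of_nonneg (hW0 ω)]
          exact mul_le_mul (hK ω) h2 (abs_nonneg _) hK0
        have hc : |(W ω * (1 - z) - h ω) * Real.cos (ψ ω)| ≤ K * (a * z) := by
          rw [abs_mul]
          calc _ ≤ K * (a * z) * 1 := mul_le_mul hWz (Real.abs_cos_le_one _) (abs_nonneg _) (by positivity)
            _ = _ := mul_one _
        have hc' := (abs_le.1 hc).2
        have : 0 ≤ a * K * l ^ 2 * s2 k ω := by positivity
        simp only [f1]
        have ez : W ω * Real.cos (ψ ω) - l ^ 2 / 2 * (W ω * Real.cos (ψ ω) * s2 k ω)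
          = h ω * Real.cos (ψ ω) + (W ω * (1 - z) - h ω) * Real.cos (ψ ω) := by rw [hz]; ring
        have ez2 : K * (a * z) = a * K * l ^ 2 * s2 k ω / 2 := by rw [hz]; ring
        show W ω * Real.cos (ψ ω) - l ^ 2 / 2 * (W ω * Real.cos (ψ ω) * s2 k ω) + 2 * a * K * l ^ 2 * s2 k ω
          ≤ h ω * Real.cos (ψ ω) + 3 * a * K * l ^ 2 * s2 k ω
        rw [ez]
        linarith
    _ = _ := by
        rw [integral_add i6 (i5.const_mul _), integral_const_mul]

lemma clt_sum [IsProbabilityMeasure μ] (H : MDS μ F Y s2 c) (n : ℕ) (θ : ℝ) {l a K : ℝ}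
    (ha' : a ≤ 1) (hl : ∀ k < n, |l| * c k ≤ a)
    (hK : ∀ k ≤ n, ∀ ω, Real.exp (l ^ 2 / 2 * bs s2 0 k ω) ≤ K) :
    ∫ ω, Real.exp (l ^ 2 / 2 * bs s2 0 n ω) * Real.cos (θ + l * bs Y 0 n ω) ∂μ
      ≤ Real.cos θ + 3 * a * K * l ^ 2 * ∫ ω, bs s2 0 n ω ∂μ := by
  induction n with
  | zero => simp [bs]
  | succ n ih =>
    have ih' := ih (fun k hk => hl k (by omega)) (fun k hk => hK k (by omega))
    have iS : ∀ k, Integrable (s2 k) μ := fun k => integrable_of_bdd (H.mS k)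
      ⟨c k ^ 2, fun ω => by rw [abs_of_nonneg (H.nonneg k ω)]; exact H.bddS k ω⟩
    have iB : Integrable (bs s2 0 n) μ := by
      unfold bs; exact integrable_finset_sum _ fun k _ => iS k
    have hmB := H.meas_bsS 0 n
    have hmB' : Measurable[F n] (bs s2 0 n) := hmB.mono (H.mono (Nat.sub_le n 1)) le_rfl
    have := H.clt_step n (fun ω => Real.exp (l ^ 2 / 2 * bs s2 0 n ω)) (fun ω => θ + l * bs Y 0 n ω)
      (Real.measurable_exp.comp (hmB'.const_mul _)) (((H.meas_bsY 0 n).const_mul l).const_add θ)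
      (fun ω => Real.exp_nonneg _) (l := l) (a := a) (K := K) ha' (hl n (by omega)) (fun ω => by
        have := hK (n + 1) le_rfl ω
        rw [bs_succ (Nat.zero_le n), mul_add, Real.exp_add] at this
        exact this)
    calc _ = ∫ ω, Real.exp (l ^ 2 / 2 * bs s2 0 n ω) * Real.exp (l ^ 2 / 2 * s2 n ω) *
          Real.cos (θ + l * bs Y 0 n ω + l * Y n ω) ∂μ := by
          congr 1; ext ω
          rw [bs_succ (Nat.zero_le n), bs_succ (Nat.zero_le n), mul_add, Real.exp_add, mul_add, add_assoc]
      _ ≤ _ := this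
      _ ≤ Real.cos θ + 3 * a * K * l ^ 2 * ∫ ω, bs s2 0 n ω ∂μ + 3 * a * K * l ^ 2 * ∫ ω, s2 n ω ∂μ := by
          linarith
      _ = _ := by
          have : ∫ ω, bs s2 0 (n + 1) ω ∂μ = ∫ ω, bs s2 0 n ω ∂μ + ∫ ω, s2 n ω ∂μ := by
            rw [← integral_add iB (iS n)]
            congr 1; ext ω; exact bs_succ (Nat.zero_le n) ω
          rw [this]; ring

lemma clt_abs [IsProbabilityMeasure μ] (H : MDS μ F Y s2 c) (n : ℕ) (θ : ℝ) {l a K : ℝ}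
    (ha' : a ≤ 1) (hl : ∀ k < n, |l| * c k ≤ a)
    (hK : ∀ k ≤ n, ∀ ω, Real.exp (l ^ 2 / 2 * bs s2 0 k ω) ≤ K) :
    |∫ ω, Real.exp (l ^ 2 / 2 * bs s2 0 n ω) * Real.cos (θ + l * bs Y 0 n ω) ∂μ - Real.cos θ|
      ≤ 3 * a * K * l ^ 2 * ∫ ω, bs s2 0 n ω ∂μ := by
  have h1 := H.clt_sum n θ ha' hl hK
  have h2 := H.clt_sum n (θ + Real.pi) ha' hl hK
  have e : ∀ ω, Real.cos (θ + Real.pi + l * bs Y 0 n ω) = - Real.cos (θ + l * bs Y 0 n ω) := fun ω => by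
    rw [← Real.cos_add_pi]; congr 1; ring
  simp only [e, Real.cos_add_pi, mul_neg, integral_neg] at h2
  rw [abs_le]; constructor <;> linarith

lemma clt [IsProbabilityMeasure μ] (H : MDS μ F Y s2 c) (hcm : Monotone c)
    (hc : Tendsto (fun n : ℕ => c n / Real.sqrt n) atTop (nhds 0))
    {σ2 : ℝ} (hσ : 0 ≤ σ2)
    (hv : ∀ᵐ ω ∂μ, Tendsto (fun n : ℕ => bs s2 0 n ω / n) atTop (nhds σ2)) (t θ : ℝ) :
    Tendsto (fun n : ℕ => ∫ ω, Real.cos (θ + t * (bs Y 0 n ω / Real.sqrt n)) ∂μ) atTop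
      (nhds (Real.cos θ * Real.exp (- (t ^ 2 * σ2 / 2)))) := by
  let A : ℕ → ℕ → Set Ω := fun n k => {ω | bs s2 0 (k + 1) ω ≤ n * (σ2 + 1)}
  have hA : ∀ n k, MeasurableSet[F k] (A n k) := fun n k =>
    measurableSet_le (H.meas_bsS 0 (k + 1)) measurable_const
  let Y' : ℕ → ℕ → Ω → ℝ := fun n k => (A n k).indicator (Y k)
  let s' : ℕ → ℕ → Ω → ℝ := fun n k => (A n k).indicator (s2 k)
  have HF : ∀ n, MDS μ F (Y' n) (s' n) c := fun n => H.freeze (A n) (hA n)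
  have hs'le : ∀ n j ω, bs (s' n) 0 j ω ≤ bs s2 0 j ω := fun n j ω =>
    Finset.sum_le_sum fun k _ => indicator_le_self' (fun ω _ => H.nonneg k ω) ω
  have hs'L : ∀ n j ω, bs (s' n) 0 j ω ≤ n * (σ2 + 1) := by
    intro n j ω
    induction j with
    | zero => simp only [bs_self]; positivity
    | succ j ih =>
      by_cases h : ω ∈ A n j
      · exact (hs'le n (j + 1) ω).trans h
      · rw [bs_succ (Nat.zero_le j)]
        simp only [s', h, not_false_eq_true, indicator_of_notMem, add_zero]
        exact ih
  have hall : ∀ n ω, bs s2 0 n ω ≤ n * (σ2 + 1) → ∀ k < n, ω ∈ A n k := by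
    intro n ω h k hk
    refine le_trans (Finset.sum_le_sum_of_subset_of_nonneg ?_ fun i _ _ => H.nonneg i ω) h
    intro i hi
    simp only [Finset.mem_Ico] at hi ⊢; omega
  set K := Real.exp (t ^ 2 * (σ2 + 1) / 2) with hK
  have hK0 : 0 < K := Real.exp_pos _
  have hw : ∀ n : ℕ, 0 < n → ∀ j ω, Real.exp ((t / Real.sqrt n) ^ 2 / 2 * bs (s' n) 0 j ω) ≤ K := by
    intro n hn j ω
    apply Real.exp_le_exp.2
    have hn' : (0:ℝ) < n := by exact_mod_cast hn
    rw [div_pow, Real.sq_sqrt hn'.le]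
    calc t ^ 2 / n / 2 * bs (s' n) 0 j ω ≤ t ^ 2 / n / 2 * (n * (σ2 + 1)) := by
          gcongr; exact hs'L n j ω
      _ = _ := by field_simp
  let I : ℕ → ℝ := fun n => ∫ ω, Real.exp ((t / Real.sqrt n) ^ 2 / 2 * bs (s' n) 0 n ω) *
    Real.cos (θ + t / Real.sqrt n * bs (Y' n) 0 n ω) ∂μ
  have hI : Tendsto I atTop (nhds (Real.cos θ)) := by
    rw [tendsto_iff_norm_sub_tendsto_zero]
    have hz : Tendsto (fun n : ℕ => |t| * (c n / Real.sqrt n)) atTop (nhds 0) := by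
      simpa using hc.const_mul |t|
    have hz2 := hz.mul_const (3 * K * (t ^ 2 * (σ2 + 1)))
    rw [zero_mul] at hz2
    refine squeeze_zero' (Eventually.of_forall fun _ => norm_nonneg _) ?_ hz2
    filter_upwards [hz.eventually (gt_mem_nhds one_pos), eventually_gt_atTop 0] with n h1 hn
    have hn' : (0:ℝ) < n := by exact_mod_cast hn
    have hsn : 0 < Real.sqrt n := Real.sqrt_pos.2 hn'
    refine ((HF n).clt_abs n θ (l := t / Real.sqrt n) (K := K) h1.le (fun k hk => ?_)
      (fun j _ ω => hw n hn j ω)).trans ?_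
    · rw [abs_div, abs_of_pos hsn, div_mul_eq_mul_div, mul_div_assoc]
      gcongr; exact hcm hk.le
    · have hintg : ∫ ω, bs (s' n) 0 n ω ∂μ ≤ n * (σ2 + 1) := by
        calc _ ≤ ∫ ω, (n * (σ2 + 1) : ℝ) ∂μ := by
              apply integral_mono_of_nonneg
              · exact Eventually.of_forall fun ω => (HF n).nonneg_bsS 0 n ω
              · exact integrable_const _
              · exact Eventually.of_forall fun ω => hs'L n n ω
          _ = _ := by simp
      have h2 : 0 ≤ |t| * (c n / Real.sqrt n) := by
        rcases isEmpty_or_nonempty Ω with hΩ | ⟨⟨ω₀⟩⟩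
        · exact absurd (Measure.eq_zero_of_isEmpty μ) (IsProbabilityMeasure.ne_zero μ)
        have := (abs_nonneg _).trans (H.bddY n ω₀)
        positivity
      calc _ ≤ 3 * (|t| * (c n / Real.sqrt n)) * K * (t / Real.sqrt n) ^ 2 * (n * (σ2 + 1)) := by
            gcongr
        _ = _ := by
            rw [div_pow, Real.sq_sqrt hn'.le]; field_simp
  have hmY := H.mY
  have hmS := H.mS
  have mbs : ∀ (Z : ℕ → Ω → ℝ) n, (∀ k, Measurable (Z k)) → Measurable (bs Z 0 n) := fun Z n h => by
    unfold bs; exact Finset.measurable_sum _ fun k _ => h k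
  have mA := mbs Y
  have hdiff : Tendsto (fun n : ℕ => ∫ ω, (Real.exp (t ^ 2 * σ2 / 2) *
      Real.cos (θ + t * (bs Y 0 n ω / Real.sqrt n)) -
      Real.exp ((t / Real.sqrt n) ^ 2 / 2 * bs (s' n) 0 n ω) *
        Real.cos (θ + t / Real.sqrt n * bs (Y' n) 0 n ω)) ∂μ) atTop (nhds (∫ _, (0:ℝ) ∂μ)) := by
    apply tendsto_integral_filter_of_dominated_convergence (fun _ => Real.exp (t ^ 2 * σ2 / 2) + K)
    · refine Eventually.of_forall fun n => Measurable.aestronglyMeasurable ?_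
      have := mbs Y n hmY
      have := mbs (Y' n) n (HF n).mY
      have := mbs (s' n) n (HF n).mS
      fun_prop
    · filter_upwards [eventually_gt_atTop 0] with n hn
      refine Eventually.of_forall fun ω => ?_
      refine (norm_sub_le _ _).trans (add_le_add ?_ ?_)
      · rw [norm_mul, Real.norm_eq_abs, Real.abs_exp]
        exact mul_le_of_le_one_right (Real.exp_nonneg _) (Real.abs_cos_le_one _)
      · rw [norm_mul, Real.norm_eq_abs, Real.abs_exp]
        exact (mul_le_of_le_one_right (Real.exp_nonneg _) (Real.abs_cos_le_one _)).trans (hw n hn n ω)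
    · exact integrable_const _
    · filter_upwards [hv] with ω hω
      have hz : Tendsto (fun n : ℕ => |Real.exp (t ^ 2 * σ2 / 2) -
          Real.exp (t ^ 2 / 2 * (bs s2 0 n ω / n))|) atTop (nhds 0) := by
        have h1 : Tendsto (fun n : ℕ => Real.exp (t ^ 2 / 2 * (bs s2 0 n ω / n))) atTop
            (nhds (Real.exp (t ^ 2 / 2 * σ2))) :=
          (Real.continuous_exp.tendsto _).comp (hω.const_mul _)
        have h2 := (h1.const_sub (Real.exp (t ^ 2 * σ2 / 2))).abs
        convert h2 using 2
        rw [show t ^ 2 / 2 * σ2 = t ^ 2 * σ2 / 2 by ring, sub_self, abs_zero]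
      refine squeeze_zero_norm' ?_ hz
      filter_upwards [hω.eventually (gt_mem_nhds (show σ2 < σ2 + 1 by linarith)),
        eventually_gt_atTop 0] with n h1 hn
      have hn' : (0:ℝ) < n := by exact_mod_cast hn
      rw [div_lt_iff₀ hn', mul_comm] at h1
      have hin := hall n ω h1.le
      have e1 : bs (Y' n) 0 n ω = bs Y 0 n ω := Finset.sum_congr rfl fun k hk => by
        simp [Y', hin k (Finset.mem_Ico.1 hk).2]
      have e2 : bs (s' n) 0 n ω = bs s2 0 n ω := Finset.sum_congr rfl fun k hk => by
        simp [s', hin k (Finset.mem_Ico.1 hk).2]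
      rw [e1, e2, div_pow, Real.sq_sqrt hn'.le,
        show t / Real.sqrt n * bs Y 0 n ω = t * (bs Y 0 n ω / Real.sqrt n) by ring,
        show t ^ 2 / n / 2 * bs s2 0 n ω = t ^ 2 / 2 * (bs s2 0 n ω / n) by ring,
        ← sub_mul, norm_mul]
      exact mul_le_of_le_one_right (norm_nonneg _) (Real.abs_cos_le_one _)
  rw [integral_zero] at hdiff
  have hsum := (hdiff.add hI).const_mul (Real.exp (- (t ^ 2 * σ2 / 2)))
  rw [zero_add, mul_comm _ (Real.cos θ)] at hsum
  refine hsum.congr' ?_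
  filter_upwards [eventually_gt_atTop 0] with n hn
  have j1 : Integrable (fun ω => Real.exp (t ^ 2 * σ2 / 2) *
      Real.cos (θ + t * (bs Y 0 n ω / Real.sqrt n))) μ := by
    have := mbs Y n hmY
    refine integrable_of_bdd (by fun_prop) ⟨Real.exp (t ^ 2 * σ2 / 2), fun ω => ?_⟩
    rw [abs_mul, Real.abs_exp]
    exact mul_le_of_le_one_right (Real.exp_nonneg _) (Real.abs_cos_le_one _)
  have j2 : Integrable (fun ω => Real.exp ((t / Real.sqrt n) ^ 2 / 2 * bs (s' n) 0 n ω) *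
        Real.cos (θ + t / Real.sqrt n * bs (Y' n) 0 n ω)) μ := by
    have := mbs (Y' n) n (HF n).mY
    have := mbs (s' n) n (HF n).mS
    refine integrable_of_bdd (by fun_prop) ⟨K, fun ω => ?_⟩
    rw [abs_mul, Real.abs_exp]
    exact (mul_le_of_le_one_right (Real.exp_nonneg _) (Real.abs_cos_le_one _)).trans (hw n hn n ω)
  rw [integral_sub j1 j2]
  simp only [I]
  rw [sub_add_cancel, integral_const_mul, ← mul_assoc, ← Real.exp_add, neg_add_cancel, Real.exp_zero, one_mul]

end MDS


section chain
variable {X : Type*} [MeasurableSpace X]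

/-- the past up to time n -/
def pst (n : ℕ) (ω : ℕ → X) : Fin (n + 1) → X := fun i => ω i

/-- natural filtration -/
def fil (n : ℕ) : MeasurableSpace (ℕ → X) :=
  MeasurableSpace.comap (pst n) MeasurableSpace.pi

lemma measurable_pst (n : ℕ) : Measurable (pst n : (ℕ → X) → _) :=
  measurable_pi_lambda _ fun i => measurable_pi_apply _

lemma fil_le (n : ℕ) : (fil n : MeasurableSpace (ℕ → X)) ≤ MeasurableSpace.pi :=
  (measurable_pst n).comap_le

lemma meas_coord {n k : ℕ} (h : k ≤ n) : Measurable[fil n] (fun ω : ℕ → X => ω k) := by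
  have h1 : Measurable (fun f : Fin (n + 1) → X => f ⟨k, by omega⟩) := measurable_pi_apply _
  exact h1.comp (comap_measurable (pst n))

lemma fil_mono : Monotone (fil : ℕ → MeasurableSpace (ℕ → X)) := by
  intro a b hab
  have : Measurable[fil b] (pst a : (ℕ → X) → _) :=
    @measurable_pi_lambda _ _ _ (fil b) _ _ fun i => meas_coord (by omega)
  exact this.comap_le

variable {P : Kernel X X} [IsMarkovKernel P] {x : X} {μ : Measure (ℕ → X)}

lemma chain_compProd (hμ : IsCanonicalChain P x μ) (n : ℕ) :
    μ.map (fun ω => (pst n ω, ω (n + 1))) =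
      (μ.map (pst n)) ⊗ₘ (P.comap (fun f : Fin (n + 1) → X => f (Fin.last n)) (measurable_pi_apply _)) := by
  have := hμ.1
  have hp := measurable_pst (X := X) n
  have : IsProbabilityMeasure (μ.map (pst n)) := Measure.isProbabilityMeasure_map hp.aemeasurable
  have hq : Measurable (fun ω : ℕ → X => (pst n ω, ω (n + 1))) := hp.prodMk (measurable_pi_apply _)
  have : IsProbabilityMeasure (μ.map (fun ω => (pst n ω, ω (n + 1)))) :=
    Measure.isProbabilityMeasure_map hq.aemeasurable
  apply Measure.ext_prod
  intro s t hs ht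
  rw [Measure.compProd_apply_prod hs ht, Measure.map_apply hq (hs.prod ht), setLIntegral_map hs
    ((Kernel.measurable_coe _ ht)) hp, ← lintegral_indicator (hp hs)]
  have h := hμ.2.2 n (t.indicator 1) (measurable_one.indicator ht) ((pst n ⁻¹' s).indicator 1)
    (by
      have hsm : MeasurableSet[fil n] (pst n ⁻¹' s) := ⟨s, hs, rfl⟩
      have hone : Measurable[fil n] (1 : (ℕ → X) → ℝ≥0∞) := @measurable_const _ _ _ (fil n) 1
      exact hone.indicator hsm)
  calc _ = ∫⁻ ω, (pst n ⁻¹' s).indicator 1 ω * t.indicator 1 (ω (n + 1)) ∂μ := by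
        rw [← lintegral_indicator_one (hq (hs.prod ht))]
        congr 1; ext ω
        by_cases h1 : pst n ω ∈ s <;> by_cases h2 : ω (n + 1) ∈ t <;>
          simp [Set.indicator, h1, h2]
    _ = _ := h
    _ = _ := by
        congr 1; ext ω
        by_cases h1 : pst n ω ∈ s <;>
          simp [Set.indicator, h1, kernelOp, Kernel.comap_apply, pst]
        rw [← lintegral_indicator_one ht]; rfl

lemma chain_lintegral (hμ : IsCanonicalChain P x μ) (n : ℕ) {f : X → X → ℝ≥0∞}
    (hf : Measurable (fun z : X × X => f z.1 z.2)) :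
    ∫⁻ ω, f (ω n) (ω (n + 1)) ∂μ = ∫⁻ ω, ∫⁻ y, f (ω n) y ∂(P (ω n)) ∂μ := by
  have := hμ.1
  have hp := measurable_pst (X := X) n
  have : IsProbabilityMeasure (μ.map (pst n)) := Measure.isProbabilityMeasure_map hp.aemeasurable
  have hq : Measurable (fun ω : ℕ → X => (pst n ω, ω (n + 1))) := hp.prodMk (measurable_pi_apply _)
  have hl : Measurable (fun f : Fin (n + 1) → X => f (Fin.last n)) := measurable_pi_apply _
  have hg : Measurable (fun z : (Fin (n + 1) → X) × X => f (z.1 (Fin.last n)) z.2) :=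
    hf.comp ((hl.comp measurable_fst).prodMk measurable_snd)
  have e1 := lintegral_map (μ := μ) hg hq
  rw [chain_compProd hμ n, Measure.lintegral_compProd hg, lintegral_map _ hp] at e1
  · simpa [pst, Kernel.comap_apply] using e1.symm
  · exact hg.lintegral_kernel_prod_right'

lemma chain_integral (hμ : IsCanonicalChain P x μ) (n : ℕ) {f : X → X → ℝ}
    (hf : Measurable (fun z : X × X => f z.1 z.2)) {K : ℝ} (hb : ∀ z y, |f z y| ≤ K)
    {h : (ℕ → X) → ℝ} (hm : Measurable[fil n] h) (hh : ∃ K, ∀ ω, |h ω| ≤ K) :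
    ∫ ω, h ω * f (ω n) (ω (n + 1)) ∂μ = ∫ ω, h ω * ∫ y, f (ω n) y ∂(P (ω n)) ∂μ := by
  have := hμ.1
  obtain ⟨L, hL⟩ := hh
  have hp := measurable_pst (X := X) n
  have : IsProbabilityMeasure (μ.map (pst n)) := Measure.isProbabilityMeasure_map hp.aemeasurable
  have hq : Measurable (fun ω : ℕ → X => (pst n ω, ω (n + 1))) := hp.prodMk (measurable_pi_apply _)
  have hl : Measurable (fun f : Fin (n + 1) → X => f (Fin.last n)) := measurable_pi_apply _
  obtain ⟨h', hm', rfl⟩ := hm.exists_eq_measurable_comp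
  let h'' : (Fin (n + 1) → X) → ℝ := fun z => max (-L) (min (h' z) L)
  have hm'' : Measurable h'' := measurable_const.max (hm'.min measurable_const)
  have heq : ∀ ω, h' (pst n ω) = h'' (pst n ω) := fun ω => by
    have := abs_le.1 (hL ω)
    simp only [Function.comp] at this
    simp only [h'']
    rw [min_eq_left this.2, max_eq_right this.1]
  have hb'' : ∀ ω : ℕ → X, ∀ z, |h'' z| ≤ L := fun ω z => by
    have : 0 ≤ L := (abs_nonneg _).trans (hL ω)
    rw [abs_le]; exact ⟨le_max_left _ _, max_le (by linarith) (min_le_right _ _)⟩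
  rcases isEmpty_or_nonempty (ℕ → X) with hΩ | ⟨⟨ω₀⟩⟩
  · simp [Measure.eq_zero_of_isEmpty]
  have hg : Measurable (fun z : (Fin (n + 1) → X) × X => h'' z.1 * f (z.1 (Fin.last n)) z.2) :=
    (hm''.comp measurable_fst).mul (hf.comp ((hl.comp measurable_fst).prodMk measurable_snd))
  have e1 := integral_map (μ := μ) hq.aemeasurable hg.aestronglyMeasurable
  rw [chain_compProd hμ n, Measure.integral_compProd, integral_map hp.aemeasurable] at e1
  · simp only [Function.comp, heq]
    simpa [pst, Kernel.comap_apply, integral_const_mul] using e1.symm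
  · exact (hg.stronglyMeasurable.integral_kernel_prod_right').aestronglyMeasurable
  · apply integrable_of_bdd hg
    exact MDS.bdd_mul ⟨L, fun z => hb'' ω₀ z.1⟩ ⟨K, fun z => hb _ _⟩

lemma kvar_nonneg (ν : Measure X) [IsProbabilityMeasure ν] {f : X → ℝ} (hf : Measurable f) {r : ℝ}
    (hr : ∀ y, |f y| ≤ r) (a : ℝ) :
    ∫ y, (f y - a) ^ 2 ∂ν = ∫ y, f y ^ 2 ∂ν - 2 * a * ∫ y, f y ∂ν + a ^ 2 := by
  have i1 : Integrable f ν := integrable_of_bdd hf ⟨r, hr⟩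
  have i2 : Integrable (fun y => f y ^ 2) ν := by
    refine integrable_of_bdd (hf.pow_const 2) ⟨r ^ 2, fun y => ?_⟩
    rw [abs_pow]; exact pow_le_pow_left₀ (abs_nonneg _) (hr y) 2
  have j : Integrable (fun y => f y ^ 2 - 2 * a * f y) ν := i2.sub (i1.const_mul _)
  calc _ = ∫ y, (f y ^ 2 - 2 * a * f y + a ^ 2) ∂ν := by congr 1; ext y; ring
    _ = _ := by
      rw [integral_add j (integrable_const _), integral_sub i2 (i1.const_mul _), integral_const_mul]
      simp

lemma chain_MDS (hμ : IsCanonicalChain P x μ) (f : ℕ → X → X → ℝ)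
    (hf : ∀ k, Measurable (fun z : X × X => f k z.1 z.2)) (r : ℕ → ℝ)
    (hr : ∀ k z y, |f k z y| ≤ r k) :
    MDS μ fil (fun k ω => f k (ω k) (ω (k + 1)) - ∫ y, f k (ω k) y ∂(P (ω k)))
      (fun k ω => ∫ y, f k (ω k) y ^ 2 ∂(P (ω k)) - (∫ y, f k (ω k) y ∂(P (ω k))) ^ 2)
      (fun k => 2 * r k) := by
  have hμ1 := hμ.1
  have hmz : ∀ k z, Measurable (f k z) := fun k z => (hf k).comp (measurable_const.prodMk measurable_id)
  have hM : ∀ k, Measurable (fun z => ∫ y, f k z y ∂(P z)) := fun k =>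
    ((hf k).stronglyMeasurable.integral_kernel_prod_right').measurable
  have hQ : ∀ k, Measurable (fun z => ∫ y, f k z y ^ 2 ∂(P z)) := fun k =>
    (((hf k).pow_const 2).stronglyMeasurable.integral_kernel_prod_right').measurable
  have hMb : ∀ k z, |∫ y, f k z y ∂(P z)| ≤ r k := fun k z => by
    have := norm_integral_le_of_norm_le_const (μ := P z) (f := f k z) (C := r k)
      (Eventually.of_forall (hr k z))
    simpa using this
  have hvar : ∀ k z, ∫ y, (f k z y - ∫ y, f k z y ∂(P z)) ^ 2 ∂(P z) =
      ∫ y, f k z y ^ 2 ∂(P z) - (∫ y, f k z y ∂(P z)) ^ 2 := fun k z => by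
    rw [kvar_nonneg (P z) (hmz k z) (hr k z)]; ring
  have hQb : ∀ k z, ∫ y, f k z y ^ 2 ∂(P z) ≤ r k ^ 2 := fun k z => by
    have := norm_integral_le_of_norm_le_const (μ := P z) (f := fun y => f k z y ^ 2) (C := r k ^ 2)
      (Eventually.of_forall fun y => by
        rw [norm_pow]; exact pow_le_pow_left₀ (abs_nonneg _) (hr k z y) 2)
    simp only [probReal_univ, mul_one] at this
    exact (le_abs_self _).trans this
  have hfb : ∀ k z y, |f k z y - ∫ y, f k z y ∂(P z)| ≤ 2 * r k := fun k z y => by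
    refine (abs_sub _ _).trans ?_
    linarith [hr k z y, hMb k z]
  have hfm : ∀ k, Measurable (fun z : X × X => f k z.1 z.2 - ∫ y, f k z.1 y ∂(P z.1)) := fun k =>
    (hf k).sub ((hM k).comp measurable_fst)
  refine ⟨fil_mono, fil_le, ?_, ?_, ?_, ?_, ?_, ?_, ?_⟩
  · intro k
    exact (hfm k).comp ((meas_coord (Nat.le_succ k)).prodMk (meas_coord le_rfl))
  · intro k
    exact ((hQ k).comp (meas_coord le_rfl)).sub (((hM k).comp (meas_coord le_rfl)).pow_const 2)
  · intro k ω; exact hfb k _ _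
  · intro k ω
    rw [← hvar]; exact integral_nonneg fun y => sq_nonneg _
  · intro k ω
    nlinarith [hQb k (ω k), sq_nonneg (∫ y, f k (ω k) y ∂(P (ω k))), sq_nonneg (r k)]
  · intro k h hm hb
    rw [chain_integral hμ k (f := fun z y => f k z y - ∫ y, f k z y ∂(P z)) (hfm k) (hfb k) hm hb]
    have : ∀ z, ∫ y, (f k z y - ∫ y, f k z y ∂(P z)) ∂(P z) = 0 := fun z => by
      rw [integral_sub (integrable_of_bdd (hmz k z) ⟨_, hr k z⟩) (integrable_const _)]; simp
    simp [this]
  · intro k h hm hb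
    rw [chain_integral hμ k (f := fun z y => (f k z y - ∫ y, f k z y ∂(P z)) ^ 2)
      ((hfm k).pow_const 2) (K := (2 * r k) ^ 2) (fun z y => by
        rw [abs_pow]; exact pow_le_pow_left₀ (abs_nonneg _) (hfb k z y) 2) hm hb]
    simp only [hvar]

end chain


lemma kron_det (e : ℕ → ℝ) (he : ∀ k, 0 ≤ e k) {γ : ℝ} (hγ : 0 < γ)
    (hs : Summable (fun k : ℕ => e k * ((k:ℝ) + 1) ^ (-γ))) :
    Tendsto (fun n : ℕ => (∑ k ∈ Finset.range n, e k) / (n:ℝ) ^ γ) atTop (nhds 0) := by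
  have h1 := tendsto_tsum_of_dominated_convergence (𝓕 := (atTop : Filter ℕ))
    (f := fun (n : ℕ) (k : ℕ) => if k < n then e k / (n:ℝ) ^ γ else 0) (g := fun _ => (0:ℝ))
    hs (fun k => by
      have h0 : Tendsto (fun n : ℕ => e k / (n:ℝ) ^ γ) atTop (nhds 0) :=
        tendsto_const_nhds.div_atTop ((tendsto_rpow_atTop hγ).comp tendsto_natCast_atTop_atTop)
      refine h0.congr' ?_
      filter_upwards [eventually_gt_atTop k] with n hn
      simp [hn]) (Eventually.of_forall fun n k => by
      by_cases h : k < n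
      · simp only [h, if_true]
        have hk : ((k:ℝ) + 1) ≤ n := by exact_mod_cast h
        have hk0 : (0:ℝ) < (k:ℝ) + 1 := by positivity
        rw [Real.norm_of_nonneg (div_nonneg (he k) (Real.rpow_nonneg (by positivity) _)),
          Real.rpow_neg hk0.le, ← div_eq_mul_inv]
        exact div_le_div_of_nonneg_left (he k) (Real.rpow_pos_of_pos hk0 _)
          (Real.rpow_le_rpow hk0.le hk hγ.le)
      · simp only [h, if_false, norm_zero]
        exact mul_nonneg (he k) (Real.rpow_nonneg (by positivity) _))
  rw [tsum_zero] at h1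
  refine h1.congr fun n => ?_
  rw [tsum_eq_sum (s := Finset.range n) (fun k hk => by simp at hk; simp [hk]), Finset.sum_div]
  exact Finset.sum_congr rfl fun k hk => by simp [Finset.mem_range.1 hk]

lemma kron_ae {Ω : Type*} [MeasurableSpace Ω] {μ : Measure Ω} (E : ℕ → Ω → ℝ)
    (hE : ∀ k, Measurable (E k)) {γ : ℝ} (hγ : 0 < γ)
    (hs : ∑' k : ℕ, (∫⁻ ω, ‖E k ω‖ₑ ∂μ) * ENNReal.ofReal (((k:ℝ) + 1) ^ (-γ)) ≠ ∞) :
    ∀ᵐ ω ∂μ, Tendsto (fun n : ℕ => (∑ k ∈ Finset.range n, |E k ω|) / (n:ℝ) ^ γ) atTop (nhds 0) := by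
  have hm : ∀ k, Measurable (fun ω => ‖E k ω‖ₑ * ENNReal.ofReal (((k:ℝ) + 1) ^ (-γ))) := fun k =>
    (hE k).enorm.mul_const _
  have h1 : ∫⁻ ω, ∑' k : ℕ, ‖E k ω‖ₑ * ENNReal.ofReal (((k:ℝ) + 1) ^ (-γ)) ∂μ ≠ ∞ := by
    rw [lintegral_tsum fun k => (hm k).aemeasurable]
    convert hs using 3 with k
    rw [lintegral_mul_const _ (hE k).enorm]
  filter_upwards [ae_lt_top (Measurable.ennreal_tsum hm) h1] with ω hω
  apply kron_det _ (fun k => abs_nonneg _) hγ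
  have := ENNReal.summable_toReal hω.ne
  refine this.congr fun k => ?_
  rw [ENNReal.toReal_mul, ENNReal.toReal_ofReal (Real.rpow_nonneg (by positivity) _)]
  simp

lemma sum_weight (α : ℕ → ℝ≥0∞) (A : ℝ≥0) (hA : ∀ n : ℕ, ∑ k ∈ Finset.range n, α k ≤ A * ((n:ℝ≥0∞) + 1))
    {s : ℝ} (hs : 1 < s) : ∑' k : ℕ, α k * ENNReal.ofReal (((k:ℝ) + 1) ^ (-s)) ≠ ∞ := by
  have hfin : ∀ k, α k ≠ ∞ := fun k => by
    refine ne_top_of_le_ne_top ?_ ((Finset.single_le_sum (f := α) (fun _ _ => zero_le)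
      (Finset.self_mem_range_succ k)).trans (hA (k + 1)))
    finiteness
  let f : ℕ → ℝ := fun n => (α (n - 1)).toReal
  have hO : (fun n => ∑ k ∈ Finset.Icc 1 n, f k) =O[atTop] fun n : ℕ => (n : ℝ) ^ (1:ℝ) := by
    refine Asymptotics.IsBigO.of_bound (2 * A) ?_
    filter_upwards [eventually_ge_atTop 1] with n hn
    have hn' : (1:ℝ) ≤ n := by exact_mod_cast hn
    have e : ∑ k ∈ Finset.Icc 1 n, f k = (∑ k ∈ Finset.range n, α k).toReal := by
      rw [ENNReal.toReal_sum fun k _ => hfin k]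
      clear hn hn'
      induction n with
      | zero => simp
      | succ n ih => rw [Finset.sum_Icc_succ_top (by omega), ih, Finset.sum_range_succ]; simp [f]
    rw [e, Real.norm_of_nonneg ENNReal.toReal_nonneg, Real.rpow_one, Real.norm_of_nonneg (by linarith)]
    have := ENNReal.toReal_mono (by finiteness) (hA n)
    rw [ENNReal.toReal_mul, ENNReal.toReal_add (by finiteness) (by finiteness)] at this
    simp only [ENNReal.coe_toReal, ENNReal.toReal_natCast, ENNReal.toReal_one] at this
    have hA0 : 0 ≤ (A:ℝ) := A.2
    nlinarith
  have hL := LSeriesSummable_of_sum_norm_bigO_and_nonneg (s := (s:ℂ)) hO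
    (fun n => ENNReal.toReal_nonneg) zero_le_one (by simpa using hs)
  have h2 := ((summable_nat_add_iff 1).2 hL.norm)
  have h3 : Summable (fun k : ℕ => (α k).toReal * ((k:ℝ) + 1) ^ (-s)) := by
    refine h2.congr fun k => ?_
    rw [LSeries.norm_term_eq]
    simp only [Nat.add_eq_zero_iff, one_ne_zero, and_false, if_false, f, Nat.add_sub_cancel,
      Complex.ofReal_re, Complex.norm_real, Real.norm_eq_abs, abs_of_nonneg ENNReal.toReal_nonneg]
    rw [Real.rpow_neg (by positivity), ← div_eq_mul_inv]
    push_cast; rfl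
  have h4 := h3.tsum_ofReal_ne_top
  convert h4 using 3 with k
  rw [ENNReal.ofReal_mul ENNReal.toReal_nonneg, ENNReal.ofReal_toReal (hfin k)]


/-- truncation -/
noncomputable def trunc (r d : ℝ) : ℝ := if |d| ≤ r then d else 0

lemma abs_trunc_le {r : ℝ} (hr : 0 ≤ r) (d : ℝ) : |trunc r d| ≤ r := by
  unfold trunc; split_ifs with h
  · exact h
  · simpa using hr

lemma measurable_trunc (r : ℝ) : Measurable (trunc r) := by
  unfold trunc
  exact Measurable.ite (measurableSet_le measurable_id.abs measurable_const) measurable_id measurable_const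

lemma trunc_err {r p : ℝ} (hr : 0 < r) {q : ℕ} (hq : q ≠ 0) (hp : (q:ℝ) < p) (d : ℝ) :
    ‖(d - trunc r d) ^ q‖ₑ ≤ ‖d‖ₑ ^ p * ENNReal.ofReal (r ^ (-(p - q))) := by
  have hp0 : 0 < p := lt_of_le_of_lt (by positivity) hp
  rw [Real.enorm_eq_ofReal_abs, Real.enorm_eq_ofReal_abs d,
    ENNReal.ofReal_rpow_of_nonneg (abs_nonneg _) hp0.le, ← ENNReal.ofReal_mul (by positivity)]
  apply ENNReal.ofReal_le_ofReal
  unfold trunc; split_ifs with h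
  · simp only [sub_self, zero_pow hq, abs_zero]; positivity
  · rw [sub_zero, abs_pow]
    push Not at h
    have hd : 0 < |d| := hr.trans h
    rw [Real.rpow_neg hr.le, ← div_eq_mul_inv, le_div_iff₀ (by positivity)]
    calc |d| ^ q * r ^ (p - q) ≤ |d| ^ q * |d| ^ (p - q) := by
          gcongr
      _ = |d| ^ p := by
          rw [← Real.rpow_natCast, ← Real.rpow_add hd]; congr 1; ring

section one
variable {X : Type*} [MeasurableSpace X] {ν : Measure X} [IsProbabilityMeasure ν]

lemma memLp_of_Q {d : X → ℝ} (hd : Measurable d) {p : ℝ} (hp : 2 < p)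
    (hQ : ∫⁻ y, ‖d y‖ₑ ^ p ∂ν ≠ ∞) : MemLp d 2 ν := by
  have h1 : MemLp d (ENNReal.ofReal p) ν := by
    refine ⟨hd.aestronglyMeasurable, ?_⟩
    rw [eLpNorm_lt_top_iff_lintegral_rpow_enorm_lt_top (by simp; linarith) (by simp),
      ENNReal.toReal_ofReal (by linarith)]
    exact hQ.lt_top
  refine h1.mono_exponent ?_
  rw [← ENNReal.ofReal_ofNat]
  exact ENNReal.ofReal_le_ofReal hp.le

lemma err_one {g : X → ℝ} (hg : Measurable g) {p r : ℝ} (hp : 2 < p) (hr : 0 < r) (y : X) :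
    ‖(g y - ∫ y, g y ∂ν) - (trunc r (g y - ∫ y, g y ∂ν) - ∫ y', trunc r (g y' - ∫ y, g y ∂ν) ∂ν)‖ₑ
      ≤ (‖g y - ∫ y, g y ∂ν‖ₑ ^ p + ∫⁻ y', ‖g y' - ∫ y, g y ∂ν‖ₑ ^ p ∂ν) *
        ENNReal.ofReal (r ^ (-(p - 1))) := by
  set a := ∫ y, g y ∂ν with ha
  have hd : Measurable (fun y => g y - a) := hg.sub_const _
  have hpos : ENNReal.ofReal (r ^ (-(p - 1))) ≠ 0 := by
    simp only [ne_eq, ENNReal.ofReal_eq_zero, not_le]; positivity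
  by_cases hQ : ∫⁻ y', ‖g y' - a‖ₑ ^ p ∂ν = ∞
  · rw [hQ, add_top, ENNReal.top_mul hpos]; exact le_top
  have hL := memLp_of_Q hd hp hQ
  have hi : Integrable (fun y => g y - a) ν := hL.integrable (by norm_num)
  have hgi : Integrable g ν := by
    have := hi.add (integrable_const a)
    refine this.congr (Eventually.of_forall fun y => ?_)
    simp
  have hτi : Integrable (fun y => trunc r (g y - a)) ν :=
    integrable_of_bdd ((measurable_trunc r).comp hd) ⟨r, fun y => abs_trunc_le hr.le _⟩
  have h0 : ∫ y, (g y - a) ∂ν = 0 := by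
    rw [integral_sub hgi (integrable_const _)]; simp [ha]
  have hτ : ∫ y, trunc r (g y - a) ∂ν = - ∫ y, ((g y - a) - trunc r (g y - a)) ∂ν := by
    rw [integral_sub hi hτi, h0]; ring
  have hE : ∀ y, ‖(g y - a) - trunc r (g y - a)‖ₑ ≤ ‖g y - a‖ₑ ^ p * ENNReal.ofReal (r ^ (-(p - 1))) := by
    intro y
    have := trunc_err hr (q := 1) one_ne_zero (p := p) (by push_cast; linarith) (g y - a)
    simpa using this
  calc _ = ‖((g y - a) - trunc r (g y - a)) + ∫ y, trunc r (g y - a) ∂ν‖ₑ := by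
        congr 1; ring
    _ ≤ ‖(g y - a) - trunc r (g y - a)‖ₑ + ‖∫ y, trunc r (g y - a) ∂ν‖ₑ := enorm_add_le _ _
    _ ≤ _ := by
        rw [add_mul]
        refine add_le_add (hE y) ?_
        rw [hτ, enorm_neg]
        refine (enorm_integral_le_lintegral_enorm _).trans ?_
        rw [← lintegral_mul_const _ (hd.enorm.pow_const p)]
        exact lintegral_mono hE

lemma sq_int_le {f : X → ℝ} (hf : MemLp f 2 ν) : (∫ y, f y ∂ν) ^ 2 ≤ ∫ y, f y ^ 2 ∂ν := by
  have h1 := variance_nonneg f ν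
  rw [variance_eq_sub hf] at h1
  simp only [Pi.pow_apply] at h1
  linarith

lemma err_two {g : X → ℝ} (hg : Measurable g) {p r : ℝ} (hp : 2 < p) (hr : 0 < r) :
    ‖((∫ y, g y ^ 2 ∂ν) - (∫ y, g y ∂ν) ^ 2) - ((∫ y', trunc r (g y' - ∫ y, g y ∂ν) ^ 2 ∂ν) -
        (∫ y', trunc r (g y' - ∫ y, g y ∂ν) ∂ν) ^ 2)‖ₑ
      ≤ 2 * (∫⁻ y', ‖g y' - ∫ y, g y ∂ν‖ₑ ^ p ∂ν) * ENNReal.ofReal (r ^ (-(p - 2))) := by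
  set a := ∫ y, g y ∂ν with ha
  have hd : Measurable (fun y => g y - a) := hg.sub_const _
  have hpos : ENNReal.ofReal (r ^ (-(p - 2))) ≠ 0 := by
    simp only [ne_eq, ENNReal.ofReal_eq_zero, not_le]; positivity
  by_cases hQ : ∫⁻ y', ‖g y' - a‖ₑ ^ p ∂ν = ∞
  · rw [hQ, ENNReal.mul_top (by norm_num), ENNReal.top_mul hpos]; exact le_top
  have hL := memLp_of_Q hd hp hQ
  have hi : Integrable (fun y => g y - a) ν := hL.integrable (by norm_num)
  have hgL : MemLp g 2 ν := by
    have := hL.add (memLp_const a)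
    refine this.ae_eq (Eventually.of_forall fun y => ?_)
    simp
  have hτm : Measurable (fun y => trunc r (g y - a)) := (measurable_trunc r).comp hd
  have hτL : MemLp (fun y => trunc r (g y - a)) 2 ν :=
    MemLp.of_bound hτm.aestronglyMeasurable r (Eventually.of_forall fun y => abs_trunc_le hr.le _)
  have hηL : MemLp (fun y => (g y - a) - trunc r (g y - a)) 2 ν := hL.sub hτL
  have h0 : ∫ y, (g y - a) ∂ν = 0 := by
    rw [integral_sub (hgL.integrable (by norm_num)) (integrable_const _)]; simp [ha]
  have hτ : ∫ y, trunc r (g y - a) ∂ν = - ∫ y, ((g y - a) - trunc r (g y - a)) ∂ν := by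
    rw [integral_sub hi (hτL.integrable (by norm_num)), h0]; ring
  have hvar : (∫ y, g y ^ 2 ∂ν) - a ^ 2 = ∫ y, (g y - a) ^ 2 ∂ν := by
    have h1 := variance_eq_sub hgL
    rw [variance_eq_integral hg.aemeasurable] at h1
    simp only [Pi.pow_apply] at h1
    rw [ha]; exact h1.symm
  have hsplit : ∫ y, (g y - a) ^ 2 ∂ν = ∫ y, trunc r (g y - a) ^ 2 ∂ν
      + ∫ y, ((g y - a) - trunc r (g y - a)) ^ 2 ∂ν := by
    rw [← integral_add hτL.integrable_sq hηL.integrable_sq]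
    congr 1; ext y
    unfold trunc; split_ifs <;> simp
  have hJ := sq_int_le hηL
  set J := ∫ y, ((g y - a) - trunc r (g y - a)) ^ 2 ∂ν with hJdef
  have hJ0 : 0 ≤ J := integral_nonneg fun y => sq_nonneg _
  have hJle : ENNReal.ofReal J ≤ (∫⁻ y', ‖g y' - a‖ₑ ^ p ∂ν) * ENNReal.ofReal (r ^ (-(p - 2))) := by
    rw [hJdef, ofReal_integral_eq_lintegral_ofReal hηL.integrable_sq (Eventually.of_forall fun y => sq_nonneg _),
      ← lintegral_mul_const _ (hd.enorm.pow_const p)]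
    refine lintegral_mono fun y => ?_
    have := trunc_err hr (q := 2) two_ne_zero (p := p) (by push_cast; linarith) (g y - a)
    rw [Real.enorm_of_nonneg (sq_nonneg _)] at this
    exact_mod_cast this
  rw [hvar, hsplit, hτ, neg_sq, Real.enorm_eq_ofReal_abs, mul_assoc]
  calc _ ≤ ENNReal.ofReal (2 * J) := by
        apply ENNReal.ofReal_le_ofReal
        rw [abs_of_nonneg (by nlinarith [sq_nonneg (∫ y, ((g y - a) - trunc r (g y - a)) ∂ν)])]
        linarith
    _ = 2 * ENNReal.ofReal J := by rw [ENNReal.ofReal_mul (by norm_num)]; simp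
    _ ≤ _ := by gcongr

lemma Q_le {g : X → ℝ} (hg : Measurable g) {p : ℝ} (hp : 2 < p) :
    ∫⁻ y', ‖g y' - ∫ y, g y ∂ν‖ₑ ^ p ∂ν ≤ 2 ^ p * ∫⁻ y, ‖g y‖ₑ ^ p ∂ν := by
  set a := ∫ y, g y ∂ν with ha
  have hJ : ‖a‖ₑ ^ p ≤ ∫⁻ y, ‖g y‖ₑ ^ p ∂ν := by
    have h1 : ‖a‖ₑ ≤ eLpNorm g 1 ν := by
      rw [eLpNorm_one_eq_lintegral_enorm]; exact enorm_integral_le_lintegral_enorm _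
    have h2 : eLpNorm g 1 ν ≤ eLpNorm g (ENNReal.ofReal p) ν :=
      eLpNorm_le_eLpNorm_of_exponent_le (by
        rw [← ENNReal.ofReal_one]; exact ENNReal.ofReal_le_ofReal (by linarith)) hg.aestronglyMeasurable
    rw [eLpNorm_eq_lintegral_rpow_enorm_toReal (p := ENNReal.ofReal p) (by simp; linarith) (by simp),
      ENNReal.toReal_ofReal (by linarith)] at h2
    calc ‖a‖ₑ ^ p ≤ ((∫⁻ y, ‖g y‖ₑ ^ p ∂ν) ^ (1 / p)) ^ p :=
          ENNReal.rpow_le_rpow (h1.trans h2) (by linarith)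
      _ = _ := by
          rw [← ENNReal.rpow_mul, one_div, inv_mul_cancel₀ (by linarith), ENNReal.rpow_one]
  calc _ ≤ ∫⁻ y, 2 ^ (p - 1) * (‖g y‖ₑ ^ p + ‖a‖ₑ ^ p) ∂ν := by
        refine lintegral_mono fun y => ?_
        refine (ENNReal.rpow_le_rpow (enorm_sub_le) (by linarith)).trans ?_
        exact ENNReal.rpow_add_le_mul_rpow_add_rpow _ _ (by linarith)
    _ = 2 ^ (p - 1) * (∫⁻ y, ‖g y‖ₑ ^ p ∂ν + ‖a‖ₑ ^ p) := by
        rw [lintegral_const_mul _ ((hg.enorm.pow_const p).add_const _),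
          lintegral_add_right _ measurable_const]
        simp
    _ ≤ 2 ^ (p - 1) * (2 * ∫⁻ y, ‖g y‖ₑ ^ p ∂ν) := by
        rw [two_mul]; gcongr
    _ = _ := by
        rw [← mul_assoc]
        congr 1
        nth_rewrite 2 [← ENNReal.rpow_one 2]
        rw [← ENNReal.rpow_add _ _ (by norm_num) (by norm_num)]
        congr 1; ring

end one

section mom
variable {X : Type*} [MeasurableSpace X] {P : Kernel X X} [IsMarkovKernel P] {x : X}
  {μ : Measure (ℕ → X)}

lemma mom_bound (hμ : IsCanonicalChain P x μ) {u : X → ℝ≥0∞} {C : Set X} {b : ℝ≥0}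
    (hu : IsDriftFunction P u C b) {p : ℝ} (hp : 2 < p) {g : X → ℝ} {M : ℝ≥0}
    (hg : MemDriftSpace P u C b p g M) (hx : u x < ∞) :
    ∃ A : ℝ≥0, ∀ n : ℕ, ∑ k ∈ Finset.range n,
      ∫⁻ ω, ∫⁻ y, ‖g y - kernelOpReal P g (ω k)‖ₑ ^ p ∂(P (ω k)) ∂μ ≤ A * ((n:ℝ≥0∞) + 1) := by
  have hμ1 := hμ.1
  let w : X → ℝ≥0∞ := fun x => u x - kernelOp P u x + C.indicator (fun _ => (b : ℝ≥0∞)) x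
  have hPu : Measurable (kernelOp P u) := hu.measurable_u.lintegral_kernel
  have hind : Measurable (C.indicator (fun _ => (b : ℝ≥0∞))) :=
    measurable_const.indicator hu.measurableSet_C
  have hw : Measurable w := (hu.measurable_u.sub hPu).add hind
  have hib : ∀ z, C.indicator (fun _ => (b : ℝ≥0∞)) z ≤ b := fun z =>
    indicator_le_self' (fun _ _ => zero_le) z
  have hwu : ∀ z, w z + kernelOp P u z ≤ u z + 2 * b := fun z => by
    calc w z + kernelOp P u z = max (u z) (kernelOp P u z) + C.indicator (fun _ => (b : ℝ≥0∞)) z := by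
          rw [← tsub_add_eq_max]; simp only [w]; ring
      _ ≤ (u z + b) + b := by
          refine add_le_add (max_le le_self_add ((hu.drift z).trans ?_)) (hib z)
          gcongr; exact hib z
      _ = _ := by ring
  have hmc : ∀ k, Measurable (fun ω : ℕ → X => ω k) := fun k => measurable_pi_apply k
  have hstep : ∀ k, ∫⁻ ω, w (ω k) ∂μ + ∫⁻ ω, u (ω (k + 1)) ∂μ ≤ ∫⁻ ω, u (ω k) ∂μ + 2 * b := fun k => by
    have h1 := chain_lintegral hμ k (f := fun _ y => u y) (hu.measurable_u.comp measurable_snd)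
    have hwk : Measurable (fun ω : ℕ → X => w (ω k)) := hw.comp (hmc k)
    rw [h1, ← lintegral_add_left hwk]
    calc _ ≤ ∫⁻ ω, (u (ω k) + 2 * b) ∂μ := lintegral_mono fun ω => hwu (ω k)
      _ = _ := by rw [lintegral_add_right _ measurable_const]; simp
  have hu0 : ∫⁻ ω, u (ω 0) ∂μ = u x := by
    rw [← lintegral_map hu.measurable_u (hmc 0), hμ.2.1, lintegral_dirac' _ hu.measurable_u]
  have hsum : ∀ n : ℕ, ∑ k ∈ Finset.range n, ∫⁻ ω, w (ω k) ∂μ + ∫⁻ ω, u (ω n) ∂μ ≤ u x + 2 * b * n := by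
    intro n
    induction n with
    | zero => simp [hu0]
    | succ n ih =>
      rw [Finset.sum_range_succ, add_assoc]
      calc _ ≤ ∑ k ∈ Finset.range n, ∫⁻ ω, w (ω k) ∂μ + (∫⁻ ω, u (ω n) ∂μ + 2 * b) := by
            exact add_le_add le_rfl (hstep n)
        _ ≤ (u x + 2 * b * n) + 2 * b := by rw [← add_assoc]; gcongr
        _ = _ := by push_cast; ring
  have hgw : ∀ z, ‖g z‖ₑ ^ p ≤ (M:ℝ≥0∞) ^ p * w z := fun z => by
    calc ‖g z‖ₑ ^ p ≤ ((M : ℝ≥0∞) * (w z) ^ (1 / p)) ^ p :=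
          ENNReal.rpow_le_rpow (hg.2 z) (by linarith)
      _ = _ := by
          rw [ENNReal.mul_rpow_of_nonneg _ _ (by linarith), ← ENNReal.rpow_mul, one_div,
            inv_mul_cancel₀ (by linarith), ENNReal.rpow_one]
  have hk : ∀ k, ∫⁻ ω, ∫⁻ y, ‖g y - kernelOpReal P g (ω k)‖ₑ ^ p ∂(P (ω k)) ∂μ ≤
      2 ^ p * (M:ℝ≥0∞) ^ p * ∫⁻ ω, w (ω (k + 1)) ∂μ := fun k => by
    have h1 := chain_lintegral hμ k (f := fun _ y => ‖g y‖ₑ ^ p)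
      ((hg.1.enorm.pow_const p).comp measurable_snd)
    calc _ ≤ ∫⁻ ω, 2 ^ p * ∫⁻ y, ‖g y‖ₑ ^ p ∂(P (ω k)) ∂μ :=
          lintegral_mono fun ω => Q_le hg.1 hp
      _ = 2 ^ p * ∫⁻ ω, ‖g (ω (k + 1))‖ₑ ^ p ∂μ := by
          rw [lintegral_const_mul, ← h1]
          exact ((hg.1.enorm.pow_const p).lintegral_kernel (κ := P)).comp (hmc k)
      _ ≤ 2 ^ p * ∫⁻ ω, (M:ℝ≥0∞) ^ p * w (ω (k + 1)) ∂μ := by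
          gcongr with ω; exact hgw _
      _ = _ := by
          have hwk : Measurable (fun ω : ℕ → X => w (ω (k + 1))) := hw.comp (hmc _)
          rw [lintegral_const_mul _ hwk, mul_assoc]
  have hfin : 2 ^ p * (M:ℝ≥0∞) ^ p * (u x + 2 * b) ≠ ∞ := by
    have h1 : (2:ℝ≥0∞) ^ p ≠ ∞ := ENNReal.rpow_ne_top_of_nonneg (by linarith) (by norm_num)
    have h2 : (M:ℝ≥0∞) ^ p ≠ ∞ := ENNReal.rpow_ne_top_of_nonneg (by linarith) (by simp)
    have h3 := hx.ne
    finiteness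
  refine ⟨(2 ^ p * (M:ℝ≥0∞) ^ p * (u x + 2 * b)).toNNReal, fun n => ?_⟩
  rw [ENNReal.coe_toNNReal hfin]
  calc _ ≤ ∑ k ∈ Finset.range n, 2 ^ p * (M:ℝ≥0∞) ^ p * ∫⁻ ω, w (ω (k + 1)) ∂μ :=
        Finset.sum_le_sum fun k _ => hk k
    _ = 2 ^ p * (M:ℝ≥0∞) ^ p * ∑ k ∈ Finset.range n, ∫⁻ ω, w (ω (k + 1)) ∂μ := by
        rw [Finset.mul_sum]
    _ ≤ 2 ^ p * (M:ℝ≥0∞) ^ p * (u x + 2 * b * (n + 1 : ℕ)) := by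
        gcongr
        refine le_trans ?_ (le_self_add.trans (hsum (n + 1)))
        rw [Finset.sum_range_succ']
        exact le_self_add
    _ ≤ 2 ^ p * (M:ℝ≥0∞) ^ p * ((u x + 2 * b) * (n + 1)) := by
        gcongr
        rw [add_mul]
        push_cast
        gcongr
        exact le_mul_of_one_le_right zero_le (by simp)
    _ = _ := by ring

end mom


lemma pow_small {ρ : ℝ} (hρ : ρ < 1 / 2) :
    Tendsto (fun n : ℕ => (2 * ((n:ℝ) + 1) ^ ρ) * Real.sqrt (Real.log n) / Real.sqrt n) atTop (nhds 0) := by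
  have hδ : 0 < 1 / 2 - ρ := by linarith
  set δ := 1 / 2 - ρ with hδd
  have h1 : Tendsto (fun n : ℕ => 2 * Real.sqrt 2 * Real.sqrt (Real.log ((n:ℝ) + 1) / ((n:ℝ) + 1) ^ (2 * δ)))
      atTop (nhds 0) := by
    have h2 : Tendsto (fun y : ℝ => Real.log y / y ^ (2 * δ)) atTop (nhds 0) :=
      (isLittleO_log_rpow_atTop (by linarith)).tendsto_div_nhds_zero
    have h3 : Tendsto (fun n : ℕ => (n:ℝ) + 1) atTop atTop :=
      tendsto_atTop_add_const_right _ _ tendsto_natCast_atTop_atTop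
    have h4 := ((Real.continuous_sqrt.tendsto 0).comp (h2.comp h3)).const_mul (2 * Real.sqrt 2)
    simpa [Function.comp_def] using h4
  refine squeeze_zero' (Eventually.of_forall fun n => by positivity) ?_ h1
  filter_upwards [eventually_ge_atTop 1] with n hn
  have hn1 : (1:ℝ) ≤ n := by exact_mod_cast hn
  have hlog : Real.sqrt (Real.log n) ≤ Real.sqrt (Real.log ((n:ℝ) + 1)) :=
    Real.sqrt_le_sqrt (Real.log_le_log (by linarith) (by linarith))
  have hN : (0:ℝ) < (n:ℝ) + 1 := by linarith
  have hpow : Real.sqrt (((n:ℝ) + 1) ^ (2 * δ)) = ((n:ℝ) + 1) ^ δ := by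
    rw [Real.sqrt_eq_rpow, ← Real.rpow_mul hN.le]; congr 1; ring
  have hsq : Real.sqrt ((n:ℝ) + 1) = ((n:ℝ) + 1) ^ ρ * ((n:ℝ) + 1) ^ δ := by
    rw [Real.sqrt_eq_rpow, ← Real.rpow_add hN]; congr 1; rw [hδd]; ring
  have hs2 : Real.sqrt ((n:ℝ) + 1) ≤ Real.sqrt 2 * Real.sqrt n := by
    rw [← Real.sqrt_mul (by norm_num)]; exact Real.sqrt_le_sqrt (by linarith)
  have hlog0 : 0 ≤ Real.log ((n:ℝ) + 1) := Real.log_nonneg (by linarith)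
  rw [Real.sqrt_div hlog0, hpow]
  have hsn : 0 < Real.sqrt n := Real.sqrt_pos.2 (by linarith)
  have hd0 : 0 < ((n:ℝ) + 1) ^ δ := by positivity
  rw [div_le_iff₀ hsn]
  calc 2 * ((n:ℝ) + 1) ^ ρ * Real.sqrt (Real.log n)
      ≤ 2 * ((n:ℝ) + 1) ^ ρ * Real.sqrt (Real.log ((n:ℝ) + 1)) := by gcongr
    _ = 2 * (Real.sqrt (Real.log ((n:ℝ) + 1)) / ((n:ℝ) + 1) ^ δ) * (((n:ℝ) + 1) ^ ρ * ((n:ℝ) + 1) ^ δ) := by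
        field_simp
    _ ≤ 2 * (Real.sqrt (Real.log ((n:ℝ) + 1)) / ((n:ℝ) + 1) ^ δ) * (Real.sqrt 2 * Real.sqrt n) := by
        rw [← hsq]; gcongr
    _ = _ := by ring

lemma pow_small' {ρ : ℝ} (hρ : ρ < 1 / 2) :
    Tendsto (fun n : ℕ => (2 * ((n:ℝ) + 1) ^ ρ) / Real.sqrt n) atTop (nhds 0) := by
  refine squeeze_zero' (Eventually.of_forall fun n => by positivity) ?_ (pow_small hρ)
  have h1 : Tendsto (fun n : ℕ => Real.log n) atTop atTop :=
    Real.tendsto_log_atTop.comp tendsto_natCast_atTop_atTop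
  filter_upwards [h1.eventually_ge_atTop 1] with n hn
  have : 1 ≤ Real.sqrt (Real.log n) := Real.one_le_sqrt.2 hn
  refine div_le_div_of_nonneg_right ?_ (Real.sqrt_nonneg _)
  exact le_mul_of_one_le_right (by positivity) this

section red
variable {X : Type*} [MeasurableSpace X] {P : Kernel X X} [IsMarkovKernel P] {x : X}
  {μ : Measure (ℕ → X)}

lemma reduction (hμ : IsCanonicalChain P x μ) {u : X → ℝ≥0∞} {C : Set X} {b : ℝ≥0}
    (hu : IsDriftFunction P u C b) {p : ℝ} (hp : 2 < p) {g : X → ℝ} {M : ℝ≥0}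
    (hg : MemDriftSpace P u C b p g M) (hx : u x < ∞) {σ2 : ℝ}
    (hae : ∀ᵐ ω ∂μ, Tendsto (fun n : ℕ => (n : ℝ)⁻¹ * ∑ k ∈ Finset.range n,
      (kernelOpReal P (fun y => (g y) ^ 2) (ω k) - (kernelOpReal P g (ω k)) ^ 2)) atTop (nhds σ2)) :
    ∃ (F : ℕ → MeasurableSpace (ℕ → X)) (Y s2 : ℕ → (ℕ → X) → ℝ) (c : ℕ → ℝ), MDS μ F Y s2 c ∧
      Monotone c ∧ (∀ k, 0 ≤ c k) ∧
      Tendsto (fun n : ℕ => c n * Real.sqrt (Real.log n) / Real.sqrt n) atTop (nhds 0) ∧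
      Tendsto (fun n : ℕ => c n / Real.sqrt n) atTop (nhds 0) ∧
      (∀ᵐ ω ∂μ, Tendsto (fun n : ℕ => MDS.bs s2 0 n ω / n) atTop (nhds σ2)) ∧
      (∀ᵐ ω ∂μ, Tendsto (fun n : ℕ => (∑ k ∈ Finset.range n,
        (g (ω (k + 1)) - kernelOpReal P g (ω k)) - MDS.bs Y 0 n ω) / Real.sqrt n) atTop (nhds 0)) := by
  have hμ1 := hμ.1
  have hPg : Measurable (kernelOpReal P g) :=
    (hg.1.stronglyMeasurable.integral_kernel (κ := P)).measurable
  have hPg2 : Measurable (kernelOpReal P (fun y => g y ^ 2)) :=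
    ((hg.1.pow_const 2).stronglyMeasurable.integral_kernel (κ := P)).measurable
  have hmc : ∀ k, Measurable (fun ω : ℕ → X => ω k) := fun k => measurable_pi_apply k
  obtain ⟨A, hA⟩ := mom_bound hμ hu hp hg hx
  set α : ℕ → ℝ≥0∞ := fun k => ∫⁻ ω, ∫⁻ y, ‖g y - kernelOpReal P g (ω k)‖ₑ ^ p ∂(P (ω k)) ∂μ with hα
  set ρ : ℝ := p / (4 * (p - 1)) with hρ
  have hp1 : 0 < p - 1 := by linarith
  have hρ0 : 0 < ρ := by positivity
  have hρ1 : ρ < 1 / 2 := by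
    rw [hρ, div_lt_div_iff₀ (by positivity) (by norm_num)]; linarith
  let r : ℕ → ℝ := fun k => ((k:ℝ) + 1) ^ ρ
  have hr : ∀ k, 0 < r k := fun k => by simp only [r]; positivity
  let f : ℕ → X → X → ℝ := fun k z y => trunc (r k) (g y - kernelOpReal P g z)
  have hd : Measurable (fun z : X × X => g z.2 - kernelOpReal P g z.1) :=
    (hg.1.comp measurable_snd).sub (hPg.comp measurable_fst)
  have hf : ∀ k, Measurable (fun z : X × X => f k z.1 z.2) := fun k =>
    (measurable_trunc _).comp hd
  have H := chain_MDS hμ f hf r (fun k z y => abs_trunc_le (hr k).le _)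
  set Y : ℕ → (ℕ → X) → ℝ := fun k ω => f k (ω k) (ω (k + 1)) - ∫ y, f k (ω k) y ∂(P (ω k)) with hY
  set s2 : ℕ → (ℕ → X) → ℝ := fun k ω => ∫ y, f k (ω k) y ^ 2 ∂(P (ω k)) -
    (∫ y, f k (ω k) y ∂(P (ω k))) ^ 2 with hs2
  have hYm : ∀ k, Measurable (Y k) := fun k => (H.measY k).mono (H.le _) le_rfl
  have hsm : ∀ k, Measurable (s2 k) := fun k => (H.measS k).mono (H.le _) le_rfl
  have hQm : ∀ k, Measurable (fun ω : ℕ → X => ∫⁻ y, ‖g y - kernelOpReal P g (ω k)‖ₑ ^ p ∂(P (ω k))) :=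
    fun k => by
      have h1 : Measurable (fun z : X × X => ‖g z.2 - kernelOpReal P g z.1‖ₑ ^ p) :=
        hd.enorm.pow_const p
      exact (h1.lintegral_kernel_prod_right' (κ := P)).comp (hmc k)
  have hE1m : ∀ k, Measurable (fun ω : ℕ → X => (g (ω (k + 1)) - kernelOpReal P g (ω k)) - Y k ω) := fun k =>
    ((hg.1.comp (hmc _)).sub (hPg.comp (hmc _))).sub (hYm k)
  have hE1b : ∀ k, ∫⁻ ω, ‖(g (ω (k + 1)) - kernelOpReal P g (ω k)) - Y k ω‖ₑ ∂μ ≤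
      2 * α k * ENNReal.ofReal (r k ^ (-(p - 1))) := fun k => by
    have h1 := chain_lintegral hμ k (f := fun z y => ‖g y - kernelOpReal P g z‖ₑ ^ p) (hd.enorm.pow_const p)
    calc _ ≤ ∫⁻ ω, (‖g (ω (k + 1)) - kernelOpReal P g (ω k)‖ₑ ^ p
            + ∫⁻ y, ‖g y - kernelOpReal P g (ω k)‖ₑ ^ p ∂(P (ω k))) * ENNReal.ofReal (r k ^ (-(p - 1))) ∂μ :=
          lintegral_mono fun ω => err_one hg.1 hp (hr k) (ω (k + 1))
      _ = _ := by
          rw [lintegral_mul_const', lintegral_add_right _ (hQm k), h1, two_mul]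
          exact ENNReal.ofReal_ne_top
  have hk1 : ∀ k : ℕ, (0:ℝ) < (k:ℝ) + 1 := fun k => by positivity
  have hS1 : ∑' k : ℕ, (∫⁻ ω, ‖(g (ω (k + 1)) - kernelOpReal P g (ω k)) - Y k ω‖ₑ ∂μ) *
      ENNReal.ofReal (((k:ℝ) + 1) ^ (-(1 / 2 : ℝ))) ≠ ∞ := by
    have hw := sum_weight α A hA (s := p / 4 + 1 / 2) (by linarith)
    refine ne_top_of_le_ne_top (ENNReal.mul_ne_top (ENNReal.ofNat_ne_top (n := 2)) hw) ?_
    rw [← ENNReal.tsum_mul_left]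
    refine ENNReal.tsum_le_tsum fun k => ?_
    calc _ ≤ 2 * α k * ENNReal.ofReal (r k ^ (-(p - 1))) * ENNReal.ofReal (((k:ℝ) + 1) ^ (-(1 / 2 : ℝ))) :=
          mul_le_mul_left (hE1b k) _
      _ = _ := by
          rw [mul_assoc, mul_assoc, ← ENNReal.ofReal_mul (by have := hr k; positivity)]
          simp only [r]
          rw [← Real.rpow_mul (hk1 k).le, ← Real.rpow_add (hk1 k)]
          congr 4
          rw [hρ]; field_simp; ring
  have hT1 := kron_ae _ hE1m (by norm_num) hS1
  have hE2m : ∀ k, Measurable (fun ω : ℕ → X => (kernelOpReal P (fun y => (g y) ^ 2) (ω k) -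
      (kernelOpReal P g (ω k)) ^ 2) - s2 k ω) := fun k =>
    ((hPg2.comp (hmc _)).sub ((hPg.comp (hmc _)).pow_const 2)).sub (hsm k)
  have hE2b : ∀ k, ∫⁻ ω, ‖(kernelOpReal P (fun y => (g y) ^ 2) (ω k) -
      (kernelOpReal P g (ω k)) ^ 2) - s2 k ω‖ₑ ∂μ ≤ 2 * α k * ENNReal.ofReal (r k ^ (-(p - 2))) := fun k => by
    calc _ ≤ ∫⁻ ω, 2 * (∫⁻ y, ‖g y - kernelOpReal P g (ω k)‖ₑ ^ p ∂(P (ω k))) *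
            ENNReal.ofReal (r k ^ (-(p - 2))) ∂μ :=
          lintegral_mono fun ω => err_two hg.1 hp (hr k)
      _ = _ := by
          rw [lintegral_mul_const' _ _ ENNReal.ofReal_ne_top, lintegral_const_mul _ (hQm k)]
  have hS2 : ∑' k : ℕ, (∫⁻ ω, ‖(kernelOpReal P (fun y => (g y) ^ 2) (ω k) -
      (kernelOpReal P g (ω k)) ^ 2) - s2 k ω‖ₑ ∂μ) *
      ENNReal.ofReal (((k:ℝ) + 1) ^ (-(1 : ℝ))) ≠ ∞ := by
    have hw := sum_weight α A hA (s := 1 + ρ * (p - 2)) (by nlinarith)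
    refine ne_top_of_le_ne_top (ENNReal.mul_ne_top (ENNReal.ofNat_ne_top (n := 2)) hw) ?_
    rw [← ENNReal.tsum_mul_left]
    refine ENNReal.tsum_le_tsum fun k => ?_
    calc _ ≤ 2 * α k * ENNReal.ofReal (r k ^ (-(p - 2))) * ENNReal.ofReal (((k:ℝ) + 1) ^ (-(1 : ℝ))) :=
          mul_le_mul_left (hE2b k) _
      _ = _ := by
          rw [mul_assoc, mul_assoc, ← ENNReal.ofReal_mul (by have := hr k; positivity)]
          simp only [r]
          rw [← Real.rpow_mul (hk1 k).le, ← Real.rpow_add (hk1 k)]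
          congr 4
          ring
  have hT2 := kron_ae _ hE2m one_pos hS2
  refine ⟨fil, Y, s2, fun k => 2 * r k, H, ?_, fun k => by have := hr k; positivity, pow_small hρ1,
    pow_small' hρ1, ?_, ?_⟩
  · intro i j hij
    have : (i:ℝ) ≤ j := by exact_mod_cast hij
    simp only [r]
    gcongr
  · filter_upwards [hae, hT2] with ω h1 h2
    have h3 : Tendsto (fun n : ℕ => (∑ k ∈ Finset.range n, ((kernelOpReal P (fun y => (g y) ^ 2) (ω k) -
      (kernelOpReal P g (ω k)) ^ 2) - s2 k ω)) / n) atTop (nhds 0) := by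
      refine squeeze_zero_norm (fun n => ?_) h2
      rw [Real.norm_eq_abs, abs_div, Nat.abs_cast, Real.rpow_one]
      gcongr
      exact Finset.abs_sum_le_sum_abs _ _
    have h4 := h1.sub h3
    rw [sub_zero] at h4
    refine h4.congr fun n => ?_
    simp only [Finset.sum_sub_distrib, MDS.bs, ← Finset.range_eq_Ico]
    ring
  · filter_upwards [hT1] with ω h1
    refine squeeze_zero_norm (fun n => ?_) h1
    rw [Real.norm_eq_abs, abs_div, abs_of_nonneg (Real.sqrt_nonneg _), ← Real.sqrt_eq_rpow, MDS.bs,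
      ← Finset.range_eq_Ico, ← Finset.sum_sub_distrib]
    gcongr
    exact Finset.abs_sum_le_sum_abs _ _

end red


lemma lim_aux (x : ℕ → ℝ) (h1 : ∀ ε > 0, ∀ᶠ n in atTop, x n ≤ 1 + ε)
    (h2 : ∀ ε > 0, ∃ᶠ n in atTop, 1 - ε ≤ x n)
    (h3 : ∀ ε > 0, ∀ᶠ n in atTop, - (1 + ε) ≤ x n)
    (h4 : ∀ ε > 0, ∃ᶠ n in atTop, x n ≤ - (1 - ε)) :
    limsup x atTop = 1 ∧ liminf x atTop = -1 := by
  have hb : IsBoundedUnder (· ≤ ·) atTop x := ⟨1 + 1, by simpa using h1 1 one_pos⟩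
  have hb' : IsBoundedUnder (· ≥ ·) atTop x := ⟨-(1 + 1), by simpa using h3 1 one_pos⟩
  constructor
  · apply le_antisymm
    · refine le_of_forall_pos_le_add fun ε hε => ?_
      exact limsup_le_of_le hb'.isCoboundedUnder_le (h1 ε hε)
    · refine le_of_forall_pos_le_add fun ε hε => ?_
      have := le_limsup_of_frequently_le (h2 ε hε) hb
      linarith
  · apply le_antisymm
    · refine le_of_forall_pos_le_add fun ε hε => ?_
      have := liminf_le_of_frequently_le (h4 ε hε) hb'
      linarith
    · refine le_of_forall_pos_le_add fun ε hε => ?_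
      have := le_liminf_of_le hb.isCoboundedUnder_ge (h3 ε hε)
      linarith

lemma lil_aux {σ2 : ℝ} (hσ : 0 < σ2) (T S : ℕ → ℝ)
    (hTS : Tendsto (fun n : ℕ => (T n - S n) / Real.sqrt n) atTop (nhds 0))
    (h1 : ∀ k : ℕ, ∀ᶠ n : ℕ in atTop, S n ≤ (1 + 1 / ((k:ℝ) + 1)) * Real.sqrt (2 * n * σ2 * Real.log (Real.log n)))
    (h2 : ∀ k : ℕ, ∃ᶠ n : ℕ in atTop, (1 - 1 / ((k:ℝ) + 1)) * Real.sqrt (2 * n * σ2 * Real.log (Real.log n)) ≤ S n)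
    (h3 : ∀ k : ℕ, ∀ᶠ n : ℕ in atTop, - S n ≤ (1 + 1 / ((k:ℝ) + 1)) * Real.sqrt (2 * n * σ2 * Real.log (Real.log n)))
    (h4 : ∀ k : ℕ, ∃ᶠ n : ℕ in atTop, (1 - 1 / ((k:ℝ) + 1)) * Real.sqrt (2 * n * σ2 * Real.log (Real.log n)) ≤ - S n) :
    limsup (fun n : ℕ => T n / Real.sqrt (2 * n * σ2 * Real.log (Real.log n))) atTop = 1 ∧
    liminf (fun n : ℕ => T n / Real.sqrt (2 * n * σ2 * Real.log (Real.log n))) atTop = -1 := by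
  have hll : Tendsto (fun n : ℕ => Real.log (Real.log n)) atTop atTop :=
    Real.tendsto_log_atTop.comp (Real.tendsto_log_atTop.comp tendsto_natCast_atTop_atTop)
  set L : ℕ → ℝ := fun n => Real.sqrt (2 * n * σ2 * Real.log (Real.log n)) with hL
  have hLn : ∀ᶠ n : ℕ in atTop, 0 < Real.sqrt n ∧ Real.sqrt n ≤ L n := by
    filter_upwards [hll.eventually_ge_atTop (1 / (2 * σ2)), eventually_ge_atTop 1] with n hn hn1
    have hn1 : (1:ℝ) ≤ n := by exact_mod_cast hn1
    refine ⟨Real.sqrt_pos.2 (by linarith), Real.sqrt_le_sqrt ?_⟩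
    rw [div_le_iff₀ (by positivity)] at hn
    nlinarith
  have key : ∀ ε > 0, ∀ᶠ n : ℕ in atTop, 0 < L n ∧ |T n - S n| ≤ ε * L n := by
    intro ε hε
    filter_upwards [hLn, (tendsto_order.1 hTS.abs).2 ε (by simpa using hε)] with n ⟨h0, hle⟩ hn
    refine ⟨h0.trans_le hle, ?_⟩
    rw [abs_div, abs_of_pos h0, div_lt_iff₀ h0] at hn
    exact hn.le.trans (mul_le_mul_of_nonneg_left hle hε.le)
  have hex : ∀ ε > (0:ℝ), ∃ k : ℕ, 1 / ((k:ℝ) + 1) < ε / 2 := fun ε hε =>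
    exists_nat_one_div_lt (by linarith)
  apply lim_aux
  · intro ε hε
    obtain ⟨k, hk⟩ := hex ε hε
    filter_upwards [h1 k, key (ε / 2) (by linarith)] with n hn ⟨h0, hd⟩
    rw [div_le_iff₀ h0]
    have := (abs_le.1 hd).2
    change S n ≤ _ * L n at hn
    nlinarith
  · intro ε hε
    obtain ⟨k, hk⟩ := hex ε hε
    refine ((h2 k).and_eventually (key (ε / 2) (by linarith))).mono ?_
    rintro n ⟨hn, h0, hd⟩
    rw [le_div_iff₀ h0]
    have := (abs_le.1 hd).1
    change _ * L n ≤ S n at hn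
    nlinarith
  · intro ε hε
    obtain ⟨k, hk⟩ := hex ε hε
    filter_upwards [h3 k, key (ε / 2) (by linarith)] with n hn ⟨h0, hd⟩
    rw [le_div_iff₀ h0]
    have := (abs_le.1 hd).1
    change - S n ≤ _ * L n at hn
    nlinarith
  · intro ε hε
    obtain ⟨k, hk⟩ := hex ε hε
    refine ((h4 k).and_eventually (key (ε / 2) (by linarith))).mono ?_
    rintro n ⟨hn, h0, hd⟩
    rw [div_le_iff₀ h0]
    have := (abs_le.1 hd).2
    change _ * L n ≤ - S n at hn
    nlinarith

section conc
variable {Ω : Type*} [MeasurableSpace Ω] {μ : Measure Ω} [IsProbabilityMeasure μ]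

lemma cos_diff {A B : ℕ → Ω → ℝ} (hA : ∀ n, Measurable (A n)) (hB : ∀ n, Measurable (B n))
    (h : ∀ᵐ ω ∂μ, Tendsto (fun n => A n ω - B n ω) atTop (nhds 0)) (t θ l : ℝ)
    (hl : Tendsto (fun n => ∫ ω, Real.cos (θ + t * B n ω) ∂μ) atTop (nhds l)) :
    Tendsto (fun n => ∫ ω, Real.cos (θ + t * A n ω) ∂μ) atTop (nhds l) := by
  have hm : ∀ (Z : Ω → ℝ), Measurable Z → Measurable (fun ω => Real.cos (θ + t * Z ω)) := fun Z hZ =>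
    Real.measurable_cos.comp ((hZ.const_mul t).const_add θ)
  have hi : ∀ (Z : Ω → ℝ), Measurable Z → Integrable (fun ω => Real.cos (θ + t * Z ω)) μ := fun Z hZ =>
    integrable_of_bdd (hm Z hZ) ⟨1, fun ω => Real.abs_cos_le_one _⟩
  have h0 : Tendsto (fun n => ∫ ω, (Real.cos (θ + t * A n ω) - Real.cos (θ + t * B n ω)) ∂μ) atTop
      (nhds (∫ _, (0:ℝ) ∂μ)) := by
    refine tendsto_integral_of_dominated_convergence (fun _ => 2)
      (fun n => ((hm _ (hA n)).sub (hm _ (hB n))).aestronglyMeasurable) (integrable_const _)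
      (fun n => Eventually.of_forall fun ω => ?_) ?_
    · have h1 := abs_le.1 (Real.abs_cos_le_one (θ + t * A n ω))
      have h2 := abs_le.1 (Real.abs_cos_le_one (θ + t * B n ω))
      rw [Real.norm_eq_abs, abs_le]; constructor <;> linarith [h1.1, h1.2, h2.1, h2.2]
    · filter_upwards [h] with ω hω
      have h3 : Tendsto (fun n => |t| * |A n ω - B n ω|) atTop (nhds 0) := by
        simpa using hω.abs.const_mul |t|
      refine squeeze_zero_norm (fun n => ?_) h3
      rw [Real.norm_eq_abs, ← abs_mul]
      refine (Real.abs_cos_sub_cos_le _ _).trans (le_of_eq ?_)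
      congr 1; ring
  have h5 := h0.add hl
  simp only [integral_zero, zero_add] at h5
  refine h5.congr fun n => ?_
  rw [integral_sub (hi _ (hA n)) (hi _ (hB n))]; ring

lemma clt_of_cos {A : ℕ → Ω → ℝ} (hA : ∀ n, Measurable (A n)) {σ2 : ℝ} (hσ : 0 ≤ σ2)
    (h : ∀ t θ : ℝ, Tendsto (fun n => ∫ ω, Real.cos (θ + t * A n ω) ∂μ) atTop
      (nhds (Real.cos θ * Real.exp (-(t ^ 2 * σ2 / 2)))))
    (F : BoundedContinuousFunction ℝ ℝ) :
    Tendsto (fun n : ℕ => ∫ ω, F (A n ω) ∂μ) atTop (nhds (∫ y, F y ∂(gaussianReal 0 σ2.toNNReal))) := by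
  let ν : ℕ → ProbabilityMeasure ℝ := fun n =>
    ⟨μ.map (A n), Measure.isProbabilityMeasure_map (hA n).aemeasurable⟩
  let γ : ProbabilityMeasure ℝ := ⟨gaussianReal 0 σ2.toNNReal, inferInstance⟩
  have hw : Tendsto ν atTop (nhds γ) := by
    rw [ProbabilityMeasure.tendsto_iff_tendsto_charFun]
    intro t
    have hγ : charFun (γ : Measure ℝ) t = ((Real.exp (-(t ^ 2 * σ2 / 2)) : ℝ) : ℂ) := by
      change charFun (gaussianReal 0 σ2.toNNReal) t = _
      rw [charFun_gaussianReal]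
      push_cast
      congr 1
      rw [show ((σ2.toNNReal : ℝ≥0) : ℂ) = ((σ2 : ℝ) : ℂ) by
        exact congrArg Complex.ofReal (Real.coe_toNNReal _ hσ)]
      simp; ring
    have hν : ∀ n, charFun (ν n : Measure ℝ) t = ((∫ ω, Real.cos (0 + t * A n ω) ∂μ : ℝ) : ℂ) +
        ((∫ ω, Real.cos (-(Real.pi / 2) + t * A n ω) ∂μ : ℝ) : ℂ) * Complex.I := fun n => by
      change charFun (μ.map (A n)) t = _
      have hi : ∀ θ : ℝ, Integrable (fun ω => Real.cos (θ + t * A n ω)) μ := fun θ =>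
        integrable_of_bdd (Real.measurable_cos.comp (((hA n).const_mul t).const_add θ))
          ⟨1, fun ω => Real.abs_cos_le_one _⟩
      rw [charFun_apply_real, integral_map (hA n).aemeasurable (by fun_prop), ← integral_complex_ofReal,
        ← integral_complex_ofReal, ← integral_mul_const, ← integral_add (hi 0).ofReal ((hi _).ofReal.mul_const _)]
      congr 1; ext ω
      rw [← Complex.ofReal_mul, Complex.exp_mul_I, ← Complex.ofReal_cos, ← Complex.ofReal_sin, zero_add]
      congr 4
      rw [← Real.cos_sub_pi_div_two]; congr 1; ring
    simp only [hν, hγ]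
    have h1 := (Complex.continuous_ofReal.tendsto _).comp (h t 0)
    have h2 := ((Complex.continuous_ofReal.tendsto _).comp (h t (-(Real.pi / 2)))).mul_const Complex.I
    have h3 := h1.add h2
    simpa [Function.comp_def] using h3
  have := (ProbabilityMeasure.tendsto_iff_forall_integral_tendsto.1 hw) F
  refine this.congr fun n => ?_
  change ∫ y, F y ∂(μ.map (A n)) = _
  rw [integral_map (hA n).aemeasurable F.continuous.aestronglyMeasurable]

end conc

section fin
variable {X : Type*} [MeasurableSpace X]

lemma final_thm
    (P : ProbabilityTheory.Kernel X X) [IsMarkovKernel P]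
    (u : X → ℝ≥0∞) (C : Set X) (b : ℝ≥0) (hu : IsDriftFunction P u C b)
    (p : ℝ) (hp : 2 < p)
    (g : X → ℝ) (M : ℝ≥0) (hg : MemDriftSpace P u C b p g M)
    (x : X) (hx : u x < ∞)
    (μ : Measure (ℕ → X)) (hμ : IsCanonicalChain P x μ)
    (D : ℕ → (ℕ → X) → ℝ) (hD : ∀ k ω, D k ω = g (ω (k + 1)) - kernelOpReal P g (ω k))
    (V : ℕ → (ℕ → X) → ℝ)
    (hV : ∀ n ω, V n ω = (n : ℝ)⁻¹ * ∑ k ∈ Finset.range n,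
      (kernelOpReal P (fun y => (g y) ^ 2) (ω k) - (kernelOpReal P g (ω k)) ^ 2))
    (σ2 : ℝ) (hσ2 : 0 ≤ σ2)
    (hae : ∀ᵐ ω ∂μ, Tendsto (fun n => V n ω) atTop (nhds σ2)) :
    (∀ F : BoundedContinuousFunction ℝ ℝ,
      Tendsto (fun n : ℕ => ∫ ω, F ((∑ k ∈ Finset.range n, D k ω) / Real.sqrt n) ∂μ)
        atTop (nhds (∫ y, F y ∂(gaussianReal 0 σ2.toNNReal)))) ∧
    (σ2 ≠ 0 → ∀ᵐ ω ∂μ,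
      limsup (fun n : ℕ =>
        (∑ k ∈ Finset.range n, D k ω) / Real.sqrt (2 * n * σ2 * Real.log (Real.log n)))
        atTop = 1 ∧
      liminf (fun n : ℕ =>
        (∑ k ∈ Finset.range n, D k ω) / Real.sqrt (2 * n * σ2 * Real.log (Real.log n)))
        atTop = -1) := by
  have hμ1 := hμ.1
  simp only [hV] at hae
  obtain ⟨F, Y, s2, c, H, hcm, hc0, hc1, hc2, hv, hdiff⟩ := reduction hμ hu hp hg hx hae
  simp only [← hD] at hdiff
  have hPg : Measurable (kernelOpReal P g) :=
    (hg.1.stronglyMeasurable.integral_kernel (κ := P)).measurable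
  have hDm : ∀ k, Measurable (D k) := fun k => by
    rw [funext (hD k)]
    exact (hg.1.comp (measurable_pi_apply _)).sub (hPg.comp (measurable_pi_apply _))
  have hYm : ∀ k, Measurable (Y k) := fun k => (H.measY k).mono (H.le _) le_rfl
  refine ⟨fun Φ => ?_, fun hne => ?_⟩
  · have hA : ∀ n : ℕ, Measurable (fun ω : ℕ → X => (∑ k ∈ Finset.range n, D k ω) / Real.sqrt n) := fun n =>
      (Finset.measurable_fun_sum _ fun k _ => hDm k).div_const _
    have hB : ∀ n : ℕ, Measurable (fun ω : ℕ → X => MDS.bs Y 0 n ω / Real.sqrt n) := fun n =>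
      (Finset.measurable_fun_sum _ fun k _ => hYm k).div_const _
    refine clt_of_cos hA hσ2 (fun t θ => cos_diff hA hB ?_ t θ _ (H.clt hcm hc2 hσ2 hv t θ)) Φ
    simpa only [sub_div] using hdiff
  · have hσ : 0 < σ2 := lt_of_le_of_ne hσ2 (Ne.symm hne)
    have hk : ∀ k : ℕ, (0:ℝ) < 1 / ((k:ℝ) + 1) := fun k => by positivity
    have g1 := ae_all_iff.2 fun k : ℕ => H.lil_upper hcm hc0 hc1 hσ hv (hk k)
    have g2 := ae_all_iff.2 fun k : ℕ => H.lil_lower hcm hc0 hc1 hσ hv (hk k)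
    have g3 := ae_all_iff.2 fun k : ℕ => H.neg.lil_upper hcm hc0 hc1 hσ hv (hk k)
    have g4 := ae_all_iff.2 fun k : ℕ => H.neg.lil_lower hcm hc0 hc1 hσ hv (hk k)
    have hneg : ∀ n ω, MDS.bs (fun k ω => - Y k ω) 0 n ω = - MDS.bs Y 0 n ω := fun n ω => by
      simp only [MDS.bs, Finset.sum_neg_distrib]
    simp only [hneg] at g3 g4
    filter_upwards [hdiff, g1, g2, g3, g4] with ω h0 h1 h2 h3 h4
    exact lil_aux hσ _ _ h0 h1 h2 h3 h4

end fin


/-- (CLT and LIL for martingales dominated by drift functions.)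
If `(1/n) ∑_{k<n} (P(g²)(X_k) − (Pg(X_k))²)` converges `ℙ_x`-a.e. and in `L¹(ℙ_x)` to a constant
`σ² ≥ 0`, then `n^{−1/2} ∑_{k<n} (g(X_{k+1}) − Pg(X_k))` converges in distribution to `N(0,σ²)`
(a Dirac mass at `0` when `σ² = 0`), and if `σ² ≠ 0` then a.s.
`limsup S_n/√(2nσ² lnln n) = 1` and `liminf S_n/√(2nσ² lnln n) = −1`. -/
theorem stmt9 {X : Type*} [MeasurableSpace X] [StandardBorelSpace X]
    (P : ProbabilityTheory.Kernel X X) [IsMarkovKernel P]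
    (u : X → ℝ≥0∞) (C : Set X) (b : ℝ≥0) (hu : IsDriftFunction P u C b)
    (p : ℝ) (hp : 2 < p)
    (g : X → ℝ) (M : ℝ≥0) (hg : MemDriftSpace P u C b p g M)
    (x : X) (hx : u x < ∞)
    (μ : Measure (ℕ → X)) (hμ : IsCanonicalChain P x μ)
    (D : ℕ → (ℕ → X) → ℝ) (hD : ∀ k ω, D k ω = g (ω (k + 1)) - kernelOpReal P g (ω k))
    (V : ℕ → (ℕ → X) → ℝ)
    (hV : ∀ n ω, V n ω = (n : ℝ)⁻¹ * ∑ k ∈ Finset.range n,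
      (kernelOpReal P (fun y => (g y) ^ 2) (ω k) - (kernelOpReal P g (ω k)) ^ 2))
    (σ2 : ℝ) (hσ2 : 0 ≤ σ2)
    (hae : ∀ᵐ ω ∂μ, Tendsto (fun n => V n ω) atTop (nhds σ2))
    (hL1 : Tendsto (fun n : ℕ => ∫ ω, |V n ω - σ2| ∂μ) atTop (nhds 0)) :
    (∀ F : BoundedContinuousFunction ℝ ℝ,
      Tendsto (fun n : ℕ => ∫ ω, F ((∑ k ∈ Finset.range n, D k ω) / Real.sqrt n) ∂μ)
        atTop (nhds (∫ y, F y ∂(gaussianReal 0 σ2.toNNReal)))) ∧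
    (σ2 ≠ 0 → ∀ᵐ ω ∂μ,
      limsup (fun n : ℕ =>
        (∑ k ∈ Finset.range n, D k ω) / Real.sqrt (2 * n * σ2 * Real.log (Real.log n)))
        atTop = 1 ∧
      liminf (fun n : ℕ =>
        (∑ k ∈ Finset.range n, D k ω) / Real.sqrt (2 * n * σ2 * Real.log (Real.log n)))
        atTop = -1) := by
  exact final_thm P u C b hu p hp g M hg x hx μ hμ D hD V hV σ2 hσ2 hae
end

section
/- For every γ ∈ (0,1] there is a constant C > 0, depending only on the dimension d and on γ, such that for every Borel probability measure ϑ on 𝕋^d = ℝ^d/ℤ^d and every t > 0: if W_γ(ϑ,ν) > t, then there exists a ∈ ℤ^d \ {0} such that |ϑ̂(a)| ≥ C t^C ‖a‖, where ν is the Lebesgue (Haar) probability measure on 𝕋^d. -/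
open MeasureTheory Filter Set
open scoped ENNReal NNReal Real

/-- The `d`-dimensional torus `ℝ^d/ℤ^d`, as a product of unit circles, with the quotient metric
and its Haar (Lebesgue) probability measure `volume`. -/
abbrev Torus (d : ℕ) := Fin d → UnitAddCircle

/-- `‖f‖_γ ≤ K` for the `γ`-Hölder norm
`‖f‖_γ = sup |f| + sup_{x ≠ y} |f(x) − f(y)|/d(x,y)^γ`. -/
def HolderNormLE {d : ℕ} (γ : ℝ) (f : Torus d → ℝ) (K : ℝ) : Prop :=
  ∃ A B : ℝ, 0 ≤ A ∧ 0 ≤ B ∧ A + B ≤ K ∧ (∀ x, |f x| ≤ A) ∧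
    ∀ x y : Torus d, |f x - f y| ≤ B * dist x y ^ γ

/-- The Fourier coefficient `ϑ̂(a) = ∫ e^{2πi⟨a,x⟩} dϑ(x)` of a measure on the torus. -/
noncomputable def fourierCoefMeasure {d : ℕ} (ϑ : Measure (Torus d)) (a : Fin d → ℤ) : ℂ :=
  ∫ x, ∏ i, fourier (a i) (x i) ∂ϑ


namespace TorusAux

lemma integral_fourier_ne {n : ℤ} (hn : n ≠ 0) : ∫ x : UnitAddCircle, fourier n x = 0 :=
  integral_eq_zero_of_add_right_eq_neg (fourier_add_half_inv_index hn one_pos)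

instance instProb : IsProbabilityMeasure (volume : Measure UnitAddCircle) :=
  ⟨by simp⟩

lemma norm_le_fourier (x : UnitAddCircle) : ‖x‖ ≤ ‖fourier 1 x - 1‖ := by
  induction x using QuotientAddGroup.induction_on with
  | H y =>
  obtain ⟨z, hz, hzy⟩ : ∃ z : ℝ, |z| ≤ 1/2 ∧ ((z : ℝ) : UnitAddCircle) = (y : UnitAddCircle) := by
    refine ⟨y - round y, abs_sub_round y, ?_⟩
    rw [AddCircle.coe_sub, sub_eq_self]
    exact (AddCircle.coe_eq_zero_iff (1:ℝ)).2 ⟨round y, by simp⟩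
  change ‖(y : UnitAddCircle)‖ ≤ ‖fourier 1 (y : UnitAddCircle) - 1‖
  rw [← hzy, fourier_coe_apply]
  have h1 : ‖(z : UnitAddCircle)‖ ≤ |z| := by
    rw [UnitAddCircle.norm_eq]
    exact (round_le z 0).trans (by simp)
  have e : (2 * (π:ℂ) * Complex.I * ((1:ℤ):ℂ) * (z:ℂ) / ((1:ℝ):ℂ)) = Complex.I * ((2 * π * z : ℝ) : ℂ) := by
    push_cast; ring
  rw [e, Complex.norm_exp_I_mul_ofReal_sub_one]
  have h2 : |2 * π * z / 2| ≤ π / 2 := by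
    rw [show 2 * π * z / 2 = π * z by ring, abs_mul, abs_of_pos Real.pi_pos]
    nlinarith [Real.pi_pos]
  have h3 := Real.mul_abs_le_abs_sin h2
  rw [show 2 * π * z / 2 = π * z by ring, abs_mul, abs_of_pos Real.pi_pos] at h3
  rw [show 2 * π * z / 2 = π * z by ring, norm_mul, Real.norm_eq_abs, Real.norm_eq_abs, abs_two]
  have : 2 / π * (π * |z|) = 2 * |z| := by field_simp
  linarith [abs_nonneg z]

/-- Fejer kernel. -/
noncomputable def F (N : ℕ) (x : UnitAddCircle) : ℝ := ‖∑ k : Fin N, fourier ((k : ℕ) : ℤ) x‖ ^ 2 / N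

lemma F_nonneg (N : ℕ) (x) : 0 ≤ F N x := by unfold F; positivity

lemma F_cont (N : ℕ) : Continuous (F N) := by unfold F; fun_prop

lemma F_eq (N : ℕ) (x : UnitAddCircle) :
    ((F N x : ℝ) : ℂ) = (N : ℂ)⁻¹ * ∑ p : Fin N × Fin N, fourier (((p.1:ℕ):ℤ) - ((p.2:ℕ):ℤ)) x := by
  unfold F
  push_cast
  rw [← Complex.mul_conj', map_sum, Finset.sum_mul_sum, Fintype.sum_prod_type, div_eq_inv_mul]
  congr 1
  refine Finset.sum_congr rfl fun k _ => Finset.sum_congr rfl fun l _ => ?_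
  rw [sub_eq_add_neg, fourier_add, fourier_neg]

lemma F_int (N : ℕ) (hN : 0 < N) : ∫ x, F N x = 1 := by
  have : ((∫ x, F N x : ℝ) : ℂ) = 1 := by
    rw [← integral_complex_ofReal]
    simp_rw [F_eq]
    rw [integral_const_mul, integral_finsetSum]
    · have : ∀ p : Fin N × Fin N, ∫ x : UnitAddCircle, fourier (((p.1:ℕ):ℤ) - ((p.2:ℕ):ℤ)) x = if p.1 = p.2 then 1 else 0 := by
        intro p
        split_ifs with h
        · simp [h]
        · apply integral_fourier_ne
          rw [Fin.ext_iff] at h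
          omega
      simp_rw [this, Fintype.sum_prod_type]
      have : (N:ℂ) ≠ 0 := by exact_mod_cast hN.ne'
      simp [this]
    · intro p _
      exact (map_continuous (fourier _)).integrable_of_hasCompactSupport (HasCompactSupport.of_compactSpace _)
  exact_mod_cast this

lemma fourier_nat (k : ℕ) (x : UnitAddCircle) : fourier (k : ℤ) x = (fourier 1 x) ^ k := by
  induction k with
  | zero => simp
  | succ k ih => rw [pow_succ, ← ih]; push_cast; rw [fourier_add]

lemma norm_fourier (n : ℤ) (x : UnitAddCircle) : ‖fourier n x‖ = 1 := by
  rw [fourier_apply, Circle.norm_coe]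

lemma F_mul_le (N : ℕ) (x : UnitAddCircle) : F N x * ‖fourier 1 x - 1‖ ^ 2 ≤ 4 / N := by
  unfold F
  rw [div_mul_eq_mul_div, ← mul_pow, ← norm_mul]
  have : (∑ k : Fin N, fourier ((k : ℕ) : ℤ) x) * (fourier 1 x - 1) = fourier (N:ℤ) x - 1 := by
    simp_rw [fourier_nat]
    rw [Fin.sum_univ_eq_sum_range (fun k => (fourier 1 x) ^ k), geom_sum_mul]
  rw [this]
  gcongr
  have : ‖fourier (N:ℤ) x - 1‖ ≤ 2 := by
    refine (norm_sub_le _ _).trans ?_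
    rw [norm_fourier]; norm_num
  nlinarith [norm_nonneg (fourier (N:ℤ) x - 1)]

/-- Character. -/
noncomputable def E {d : ℕ} (a : Fin d → ℤ) (x : Torus d) : ℂ := ∏ i, fourier (a i) (x i)

lemma E_cont {d : ℕ} (a : Fin d → ℤ) : Continuous (E a) := by unfold E; fun_prop

lemma E_norm {d : ℕ} (a : Fin d → ℤ) (x : Torus d) : ‖E a x‖ = 1 := by
  unfold E; rw [norm_prod]; simp only [norm_fourier]; simp

noncomputable def K {d : ℕ} (N : ℕ) (x : Torus d) : ℝ := ∏ i, F N (x i)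

lemma K_nonneg {d : ℕ} (N : ℕ) (x : Torus d) : 0 ≤ K N x := Finset.prod_nonneg fun _ _ => F_nonneg _ _

lemma K_cont {d : ℕ} (N : ℕ) : Continuous (K (d := d) N) := by
  unfold K; have := F_cont N; fun_prop

lemma K_int {d : ℕ} (N : ℕ) (hN : 0 < N) : ∫ x : Torus d, K N x = 1 := by
  unfold K
  rw [integral_fintype_prod_volume_eq_prod (fun _ => F N)]
  simp [F_int N hN]

lemma cont_int {d : ℕ} {G : Type*} [NormedAddCommGroup G] (μ : Measure (Torus d)) [IsFiniteMeasure μ] {g : Torus d → G} (hg : Continuous g) : Integrable g μ :=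
  hg.integrable_of_hasCompactSupport (HasCompactSupport.of_compactSpace _)

lemma K_mul_int {d : ℕ} (N : ℕ) (hN : 0 < N) (i : Fin d) :
    ∫ x : Torus d, K N x * ‖fourier 1 (x i) - 1‖ ^ 2 ≤ 4 / N := by
  have : ∀ x : Torus d, K N x * ‖fourier 1 (x i) - 1‖ ^ 2 =
      ∏ j, (fun j => fun y => F N y * (if j = i then ‖fourier 1 y - 1‖ ^ 2 else 1)) j (x j) := by
    intro x
    rw [Finset.prod_mul_distrib, Finset.prod_ite_eq' Finset.univ i (fun j => ‖fourier 1 (x j) - 1‖ ^ 2)]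
    simp [K]
  simp_rw [this]
  rw [integral_fintype_prod_volume_eq_prod (fun j => fun y => F N y * (if j = i then ‖fourier 1 y - 1‖ ^ 2 else 1)), ← Finset.mul_prod_erase _ _ (Finset.mem_univ i)]
  rw [Finset.prod_eq_one (s := Finset.univ.erase i)]
  · simp only [if_true, mul_one]
    refine (integral_mono (g := fun _ => (4:ℝ)/N) ?_ (integrable_const _) (F_mul_le N)).trans (by simp)
    have := F_cont N
    exact Continuous.integrable_of_hasCompactSupport (by fun_prop) (HasCompactSupport.of_compactSpace _)
  · intro j hj
    simp [(Finset.mem_erase.1 hj).1, F_int N hN]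

noncomputable def A {d N : ℕ} (p : Fin d → Fin N × Fin N) : Fin d → ℤ :=
  fun i => (((p i).1 : ℕ) : ℤ) - (((p i).2 : ℕ) : ℤ)

lemma fourier_sub' (n : ℤ) (x y : UnitAddCircle) : fourier n (x - y) = fourier n x * fourier (-n) y := by
  rw [fourier_apply, fourier_apply, fourier_apply, smul_sub, sub_eq_add_neg, AddCircle.toCircle_add, neg_smul]
  simp

lemma K_eq {d : ℕ} (N : ℕ) (x y : Torus d) :
    ((K N (x - y) : ℝ) : ℂ) = ((N : ℂ) ^ d)⁻¹ * ∑ p : Fin d → Fin N × Fin N, E (A p) x * E (-A p) y := by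
  unfold K
  push_cast
  simp_rw [F_eq]
  rw [Finset.prod_mul_distrib, Finset.prod_const, Fintype.prod_sum]
  simp only [Finset.card_univ, Fintype.card_fin, inv_pow]
  congr 1
  refine Finset.sum_congr rfl fun p _ => ?_
  simp only [E, A, Pi.sub_apply, fourier_sub', Pi.neg_apply]
  rw [Finset.prod_mul_distrib]

lemma E_int {d : ℕ} (a : Fin d → ℤ) (ha : a ≠ 0) : ∫ x : Torus d, E a x = 0 := by
  unfold E
  rw [integral_fintype_prod_volume_eq_prod (fun i => fourier (a i))]
  obtain ⟨i, hi⟩ := Function.ne_iff.1 ha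
  exact Finset.prod_eq_zero (Finset.mem_univ i) (integral_fourier_ne hi)

instance instNeg : (volume : Measure UnitAddCircle).IsNegInvariant := inferInstance

instance instNegT (d : ℕ) : (volume : Measure (Torus d)).IsNegInvariant :=
  Measure.pi.isNegInvariant _

lemma rpow_bound (γ : ℝ) (hγ0 : 0 < γ) (hγ1 : γ ≤ 1) (N : ℕ) (hN : 0 < N) (r : ℝ) (hr : 0 ≤ r) :
    r ^ γ ≤ (N:ℝ) ^ (-γ/2) * (1 + N * r ^ 2) := by
  have hN' : (0:ℝ) < N := by exact_mod_cast hN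
  have hs : 0 ≤ √N * r := by positivity
  have e : r ^ γ = (N:ℝ) ^ (-γ/2) * (√N * r) ^ γ := by
    rw [Real.mul_rpow (by positivity) hr, ← mul_assoc, Real.sqrt_eq_rpow, ← Real.rpow_mul hN'.le,
      ← Real.rpow_add hN', show -γ/2 + 1/2*γ = 0 by ring]
    simp
  rw [e]
  gcongr
  have e2 : N * r ^ 2 = (√N * r) ^ 2 := by rw [mul_pow, Real.sq_sqrt hN'.le]
  rw [e2]
  rcases le_total (√N * r) 1 with h | h
  · have := Real.rpow_le_one hs h hγ0.le
    nlinarith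
  · have := Real.rpow_le_rpow_of_exponent_le h (show γ ≤ 2 by linarith)
    rw [Real.rpow_two] at this
    linarith

lemma dist_sq_le {d : ℕ} (x y : Torus d) :
    dist x y ^ 2 ≤ ∑ i, ‖fourier 1 ((x - y) i) - 1‖ ^ 2 := by
  have h0 : 0 ≤ ∑ i, ‖fourier 1 ((x - y) i) - 1‖ ^ 2 := by positivity
  have : dist x y ≤ √(∑ i, ‖fourier 1 ((x - y) i) - 1‖ ^ 2) := by
    rw [dist_pi_le_iff (Real.sqrt_nonneg _)]
    intro i
    apply Real.le_sqrt_of_sq_le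
    rw [dist_eq_norm]
    have h1 := norm_le_fourier ((x - y) i)
    refine le_trans ?_ (Finset.single_le_sum (f := fun i => ‖fourier 1 ((x - y) i) - 1‖ ^ 2)
      (fun i _ => by positivity) (Finset.mem_univ i))
    have : ‖x i - y i‖ = ‖(x - y) i‖ := rfl
    rw [this]
    gcongr
  calc dist x y ^ 2 ≤ √(∑ i, ‖fourier 1 ((x - y) i) - 1‖ ^ 2) ^ 2 := by gcongr
    _ = _ := Real.sq_sqrt h0

lemma holder_cont {d : ℕ} (γ : ℝ) (hγ0 : 0 < γ) (f : Torus d → ℝ) (B : ℝ)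
    (hf : ∀ x y : Torus d, |f x - f y| ≤ B * dist x y ^ γ) : Continuous f := by
  rw [continuous_iff_continuousAt]
  intro x
  rw [ContinuousAt, tendsto_iff_dist_tendsto_zero]
  refine squeeze_zero (fun _ => dist_nonneg) (fun y => hf y x) ?_
  have : Continuous fun y : Torus d => B * dist y x ^ γ :=
    continuous_const.mul ((continuous_id.dist continuous_const).rpow_const fun _ => Or.inr hγ0.le)
  simpa [Real.zero_rpow hγ0.ne'] using this.tendsto x

lemma smooth_bound {d : ℕ} (γ : ℝ) (hγ0 : 0 < γ) (hγ1 : γ ≤ 1) (f : Torus d → ℝ) (B : ℝ)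
    (hB1 : B ≤ 1) (hf : ∀ x y : Torus d, |f x - f y| ≤ B * dist x y ^ γ)
    (N : ℕ) (hN : 0 < N) (x : Torus d) :
    |f x - ∫ y, f y * K N (x - y)| ≤ (1 + 4 * d) * (N:ℝ) ^ (-γ/2) := by
  have hN' : (0:ℝ) < N := by exact_mod_cast hN
  have hfc := holder_cont γ hγ0 f B hf
  have hK := K_cont (d := d) N
  have h1 : f x = ∫ y, f x * K N (x - y) := by
    rw [integral_const_mul, integral_sub_left_eq_self (fun u => K N u), K_int N hN, mul_one]
  have h2 : f x - ∫ y, f y * K N (x - y) = ∫ y, (f x - f y) * K N (x - y) := by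
    conv_lhs => rw [h1]
    rw [← integral_sub (cont_int _ (by fun_prop)) (cont_int _ (by fun_prop))]
    simp_rw [sub_mul]
  rw [h2]
  set G : Torus d → ℝ := fun u => (N:ℝ) ^ (-γ/2) * (K N u + N * ∑ i, K N u * ‖fourier 1 (u i) - 1‖ ^ 2) with hG
  have hGc : Continuous G := by rw [hG]; fun_prop
  calc |∫ y, (f x - f y) * K N (x - y)| ≤ ∫ y, |(f x - f y) * K N (x - y)| := abs_integral_le_integral_abs
    _ ≤ ∫ y, G (x - y) := by
        apply integral_mono (cont_int _ (by fun_prop)) (cont_int _ (by fun_prop))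
        intro y
        have hk := K_nonneg N (x - y)
        simp only [hG]
        rw [abs_mul, abs_of_nonneg hk, ← Finset.mul_sum]
        have a1 : |f x - f y| ≤ dist x y ^ γ :=
          (hf x y).trans (mul_le_of_le_one_left (by positivity) hB1)
        have a2 := rpow_bound γ hγ0 hγ1 N hN (dist x y) dist_nonneg
        have a3 : (N:ℝ) ^ (-γ/2) * (1 + N * dist x y ^ 2) ≤ (N:ℝ) ^ (-γ/2) * (1 + N * ∑ i, ‖fourier 1 ((x - y) i) - 1‖ ^ 2) := by
          have := dist_sq_le x y
          gcongr
        calc _ ≤ ((N:ℝ) ^ (-γ/2) * (1 + N * ∑ i, ‖fourier 1 ((x - y) i) - 1‖ ^ 2)) * K N (x - y) := by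
              gcongr; linarith
          _ = _ := by ring
    _ = ∫ u, G u := integral_sub_left_eq_self (fun u => G u) _ x
    _ = (N:ℝ) ^ (-γ/2) * (1 + N * ∑ i, ∫ u : Torus d, K N u * ‖fourier 1 (u i) - 1‖ ^ 2) := by
        simp only [hG]
        rw [integral_const_mul, integral_add (cont_int _ hK) (cont_int _ (by fun_prop)), K_int N hN,
          integral_const_mul, integral_finsetSum]
        intro i _
        exact cont_int _ (by fun_prop)
    _ ≤ (N:ℝ) ^ (-γ/2) * (1 + N * ∑ i : Fin d, (4 / N : ℝ)) := by
        gcongr with i _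
        exact K_mul_int N hN i
    _ = _ := by
        simp
        field_simp

lemma conv_eq {d : ℕ} (f : Torus d → ℝ) (hfc : Continuous f) (N : ℕ) (μ : Measure (Torus d))
    [IsProbabilityMeasure μ] :
    ((∫ x, (∫ y, f y * K N (x - y)) ∂μ : ℝ) : ℂ) =
      ((N : ℂ) ^ d)⁻¹ * ∑ p : Fin d → Fin N × Fin N, (∫ x, E (A p) x ∂μ) * ∫ y, (f y : ℂ) * E (-A p) y := by
  have h1 : ∀ x, ((∫ y, f y * K N (x - y) : ℝ) : ℂ) =
      ((N : ℂ) ^ d)⁻¹ * ∑ p : Fin d → Fin N × Fin N, E (A p) x * ∫ y, (f y : ℂ) * E (-A p) y := by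
    intro x
    rw [← integral_complex_ofReal]
    push_cast
    simp_rw [K_eq]
    have : ∀ y, (f y : ℂ) * (((N : ℂ) ^ d)⁻¹ * ∑ p : Fin d → Fin N × Fin N, E (A p) x * E (-A p) y) =
      ((N : ℂ) ^ d)⁻¹ * ∑ p : Fin d → Fin N × Fin N, E (A p) x * ((f y : ℂ) * E (-A p) y) := by
      intro y
      rw [mul_left_comm, Finset.mul_sum]
      simp_rw [mul_left_comm]
    simp_rw [this]
    rw [integral_const_mul, integral_finsetSum]
    · simp_rw [integral_const_mul]
    · intro p _
      have := E_cont (-A p)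
      exact cont_int _ (by fun_prop)
  rw [← integral_complex_ofReal]
  simp_rw [h1]
  rw [integral_const_mul, integral_finsetSum]
  · simp_rw [integral_mul_const]
  · intro p _
    have := E_cont (A p)
    exact cont_int _ (by fun_prop)

lemma key {d : ℕ} (γ : ℝ) (hγ0 : 0 < γ) (hγ1 : γ ≤ 1) (f : Torus d → ℝ) (B : ℝ)
    (hB1 : B ≤ 1) (hf : ∀ x y : Torus d, |f x - f y| ≤ B * dist x y ^ γ) (hfb : ∀ x, |f x| ≤ 1)
    (N : ℕ) (hN : 0 < N) (ϑ : Measure (Torus d)) [IsProbabilityMeasure ϑ] (M : ℝ) (hM0 : 0 ≤ M)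
    (hM : ∀ a : Fin d → ℤ, a ≠ 0 → (∀ i, |a i| ≤ N) → ‖fourierCoefMeasure ϑ a‖ ≤ M) :
    |(∫ x, f x ∂ϑ) - ∫ x, f x| ≤ 2 * ((1 + 4 * d) * (N:ℝ) ^ (-γ/2)) + N ^ d * M := by
  have hN' : (0:ℝ) < N := by exact_mod_cast hN
  have hfc := holder_cont γ hγ0 f B hf
  set g : Torus d → ℝ := fun x => ∫ y, f y * K N (x - y) with hg
  have hgc : Continuous g := by
    have hK := K_cont (d := d) N
    have := continuous_parametric_integral_of_continuous (μ := (volume : Measure (Torus d)))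
      (f := fun x y => f y * K N (x - y)) (by fun_prop) (s := univ) isCompact_univ
    simpa using this
  have h1 : ∀ μ : Measure (Torus d), IsProbabilityMeasure μ →
      |(∫ x, f x ∂μ) - ∫ x, g x ∂μ| ≤ (1 + 4 * d) * (N:ℝ) ^ (-γ/2) := by
    intro μ _
    rw [← integral_sub (cont_int _ hfc) (cont_int _ hgc)]
    have := norm_integral_le_of_norm_le_const (μ := μ) (f := fun x => f x - g x)
      (Eventually.of_forall fun x => smooth_bound γ hγ0 hγ1 f B hB1 hf N hN x)
    simpa using this
  have h2 : |(∫ x, g x ∂ϑ) - ∫ x, g x| ≤ N ^ d * M := by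
    have : |(∫ x, g x ∂ϑ) - ∫ x, g x| = ‖((∫ x, g x ∂ϑ : ℝ) : ℂ) - ((∫ x, g x : ℝ) : ℂ)‖ := by
      rw [← Complex.ofReal_sub, Complex.norm_real, Real.norm_eq_abs]
    rw [this, conv_eq f hfc N, conv_eq f hfc N, ← mul_sub, ← Finset.sum_sub_distrib, norm_mul]
    have hb : ‖∑ p : Fin d → Fin N × Fin N, ((∫ x, E (A p) x ∂ϑ) * (∫ y, (f y : ℂ) * E (-A p) y)
        - (∫ x, E (A p) x) * ∫ y, (f y : ℂ) * E (-A p) y)‖ ≤ ∑ p : Fin d → Fin N × Fin N, M := by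
      refine norm_sum_le_of_le _ fun p _ => ?_
      rw [← sub_mul, norm_mul]
      have c1 : ‖∫ y, (f y : ℂ) * E (-A p) y‖ ≤ 1 := by
        have := norm_integral_le_of_norm_le_const (μ := (volume : Measure (Torus d)))
          (f := fun y => (f y : ℂ) * E (-A p) y) (C := 1)
          (Eventually.of_forall fun y => by
            rw [norm_mul, E_norm, mul_one, Complex.norm_real]; exact hfb y)
        simpa using this
      have c2 : ‖(∫ x, E (A p) x ∂ϑ) - ∫ x, E (A p) x‖ ≤ M := by
        by_cases hp : A p = 0
        · rw [hp]; simpa [E] using hM0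
        · rw [E_int _ hp, sub_zero]
          refine hM _ hp fun i => ?_
          have q1 := (p i).1.2
          have q2 := (p i).2.2
          simp only [A]
          rw [abs_le]; omega
      calc _ ≤ M * 1 := by gcongr
        _ = M := mul_one M
    calc _ ≤ ‖((N:ℂ) ^ d)⁻¹‖ * ∑ p : Fin d → Fin N × Fin N, M := by gcongr
      _ = _ := by
        simp
        field_simp
        ring
  have h3 := h1 ϑ inferInstance
  have h4 := h1 volume inferInstance
  rw [abs_le] at *
  constructor <;> linarith [h2.1, h2.2, h3.1, h3.2, h4.1, h4.2]

lemma small_t {d : ℕ} (γ : ℝ) (hγ0 : 0 < γ) (f : Torus d → ℝ) (hf : HolderNormLE γ f 1)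
    (ϑ : Measure (Torus d)) [IsProbabilityMeasure ϑ] :
    |(∫ x, f x ∂ϑ) - ∫ x, f x| ≤ 2 / 3 := by
  obtain ⟨A', B, hA, hB, hAB, hfA, hfB⟩ := hf
  have hfc := holder_cont γ hγ0 f B hfB
  have osc : ∀ x y, |f x - f y| ≤ 2 / 3 := by
    intro x y
    have h1 : |f x - f y| ≤ B := by
      refine (hfB x y).trans (mul_le_of_le_one_right hB ?_)
      refine Real.rpow_le_one dist_nonneg ?_ hγ0.le
      rw [dist_pi_le_iff zero_le_one]
      intro i
      rw [dist_eq_norm]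
      have := AddCircle.norm_le_half_period (1:ℝ) (x := x i - y i) one_ne_zero
      rw [abs_one] at this
      linarith
    have h2 : |f x - f y| ≤ A' + A' := (abs_sub _ _).trans (add_le_add (hfA x) (hfA y))
    linarith
  have h1 : ∀ x, |f x - ∫ y, f y| ≤ 2 / 3 := by
    intro x
    have : f x - ∫ y, f y = ∫ y, (f x - f y) := by
      rw [integral_sub (integrable_const _) (cont_int _ hfc)]; simp
    rw [this]
    have := norm_integral_le_of_norm_le_const (μ := (volume : Measure (Torus d)))
      (f := fun y => f x - f y) (Eventually.of_forall fun y => osc x y)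
    simpa using this
  have h2 : (∫ x, f x ∂ϑ) - ∫ x, f x = ∫ x, (f x - ∫ y, f y) ∂ϑ := by
    rw [integral_sub (cont_int _ hfc) (integrable_const _)]; simp
  rw [h2]
  have := norm_integral_le_of_norm_le_const (μ := ϑ)
      (f := fun x => f x - ∫ y, f y) (Eventually.of_forall h1)
  simpa using this

end TorusAux

/-- For every `γ ∈ (0,1]` there is `C > 0`, depending only on `d` and `γ`,
such that for every Borel probability measure `ϑ` on `𝕋^d` and every `t > 0`: if
`W_γ(ϑ,ν) > t` (i.e. some `f` with `‖f‖_γ ≤ 1` has `|∫ f dϑ − ∫ f dν| > t`), then there is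
`a ∈ ℤ^d \ {0}` with `|ϑ̂(a)| ≥ C t^C ‖a‖`. -/
theorem stmt10 (d : ℕ) (γ : ℝ) (hγ0 : 0 < γ) (hγ1 : γ ≤ 1) :
    ∃ C : ℝ, 0 < C ∧
      ∀ ϑ : Measure (Torus d), IsProbabilityMeasure ϑ →
        ∀ t : ℝ, 0 < t →
          (∃ f : Torus d → ℝ, HolderNormLE γ f 1 ∧
            t < |(∫ x, f x ∂ϑ) - ∫ x, f x ∂(volume : Measure (Torus d))|) →
          ∃ a : Fin d → ℤ, a ≠ 0 ∧
            C * t ^ C * ‖fun i => (a i : ℝ)‖ ≤ ‖fourierCoefMeasure ϑ a‖ := by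
  set p : ℝ := 2 * (d + 1) / γ with hp
  set c0 : ℝ := 4 * (1 + 4 * d) with hc0
  have hc0' : 4 ≤ c0 := by rw [hc0]; nlinarith [(Nat.cast_nonneg d : (0:ℝ) ≤ d)]
  have hc00 : 0 < c0 := by linarith
  have hp0 : 0 ≤ p := by rw [hp]; positivity
  set η : ℝ := (2/3 : ℝ) ^ (p + 1) / (2 ^ (d + 2) * c0 ^ p) with hη
  have hη0 : 0 < η := by rw [hη]; positivity
  have ht1 := tendsto_self_mul_const_pow_of_lt_one (r := (2/3 : ℝ)) (by norm_num) (by norm_num)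
  have ht2 := ht1.eventually (gt_mem_nhds hη0)
  obtain ⟨n, hn1, hn2⟩ := (ht2.and (eventually_ge_atTop ⌈p + 1⌉₊)).exists
  have hn3 : p + 1 ≤ n := Nat.ceil_le.1 hn2
  have hn0 : (0:ℝ) < n := by linarith
  refine ⟨n, hn0, ?_⟩
  intro ϑ hϑ t ht ⟨f, hf, htf⟩
  have htl : t ≤ 2 / 3 := htf.le.trans (TorusAux.small_t γ hγ0 f hf ϑ)
  by_contra! hcon
  obtain ⟨A', B, hA, hB, hAB, hfA, hfB⟩ := hf
  have hct : 1 ≤ c0 / t := by rw [le_div_iff₀ ht]; linarith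
  set R : ℝ := (c0 / t) ^ (2 / γ) with hR
  have hR1 : 1 ≤ R := Real.one_le_rpow hct (by positivity)
  set N : ℕ := ⌈R⌉₊ with hN
  have hNR : R ≤ N := Nat.le_ceil R
  have hN0 : (0:ℝ) < N := by linarith
  have hN0' : 0 < N := by exact_mod_cast hN0
  have hN2 : (N:ℝ) ≤ 2 * R := by
    have := Nat.ceil_lt_add_one (show 0 ≤ R by linarith)
    linarith
  have hkey := TorusAux.key γ hγ0 hγ1 f B (by linarith) hfB (fun x => (hfA x).trans (by linarith))
    N hN0' ϑ (n * t ^ (n:ℝ) * N) (by positivity) (by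
      intro a ha haN
      refine (hcon a ha).le.trans ?_
      gcongr
      rw [pi_norm_le_iff_of_nonneg hN0.le]
      intro i
      rw [Real.norm_eq_abs]
      exact_mod_cast haN i)
  have e1 : (N:ℝ) ^ (-γ/2) ≤ t / c0 := by
    calc (N:ℝ) ^ (-γ/2) ≤ R ^ (-γ/2) :=
          Real.rpow_le_rpow_of_nonpos (by linarith) hNR (by linarith)
      _ = t / c0 := by
          rw [hR, ← Real.rpow_mul (by positivity), show 2 / γ * (-γ / 2) = -1 by field_simp,
            Real.rpow_neg_one, inv_div]
  have e2 : 2 * ((1 + 4 * d) * (N:ℝ) ^ (-γ/2)) ≤ t / 2 := by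
    calc 2 * ((1 + 4 * d) * (N:ℝ) ^ (-γ/2)) ≤ 2 * ((1 + 4 * d) * (t / c0)) := by gcongr
      _ = t / 2 := by rw [hc0]; field_simp; ring
  have e3 : (N:ℝ) ^ (d+1) ≤ 2 ^ (d+1) * (c0 ^ p * t ^ (-p)) := by
    calc (N:ℝ) ^ (d+1) ≤ (2 * R) ^ (d+1) := by gcongr
      _ = 2 ^ (d+1) * (c0 ^ p * t ^ (-p)) := by
        rw [mul_pow, hR, ← Real.rpow_natCast ((c0 / t) ^ (2 / γ)), ← Real.rpow_mul (by positivity),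
          show 2 / γ * ((d + 1 : ℕ) : ℝ) = p by rw [hp]; push_cast; ring,
          Real.div_rpow hc00.le ht.le, Real.rpow_neg ht.le]
        rfl
  have e4 : t ^ (n:ℝ) = t ^ p * (t * t ^ ((n:ℝ) - (p+1))) := by
    rw [← Real.rpow_one_add' ht.le (by linarith), ← Real.rpow_add ht]
    congr 1; ring
  have e5 : t ^ ((n:ℝ) - (p+1)) ≤ (2/3:ℝ) ^ n / (2/3:ℝ) ^ (p+1) := by
    rw [← Real.rpow_natCast, ← Real.rpow_sub (by norm_num)]
    exact Real.rpow_le_rpow ht.le htl (by linarith)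
  have e6 : (N:ℝ) ^ d * (n * t ^ (n:ℝ) * N) < t / 2 := by
    have hpos : (0:ℝ) < (2/3:ℝ) ^ (p+1) := by positivity
    have htp : t ^ (-p) * t ^ p = 1 := by rw [← Real.rpow_add ht]; simp
    calc (N:ℝ) ^ d * (n * t ^ (n:ℝ) * N) = (N:ℝ) ^ (d+1) * (n * t ^ (n:ℝ)) := by ring
      _ ≤ 2 ^ (d+1) * (c0 ^ p * t ^ (-p)) * (n * t ^ (n:ℝ)) := by gcongr
      _ = (t ^ (-p) * t ^ p) * (2 ^ (d+1) * c0 ^ p * t * (n * t ^ ((n:ℝ) - (p+1)))) := by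
          rw [e4]; ring
      _ = 2 ^ (d+1) * c0 ^ p * t * (n * t ^ ((n:ℝ) - (p+1))) := by rw [htp, one_mul]
      _ ≤ 2 ^ (d+1) * c0 ^ p * t * (n * ((2/3:ℝ) ^ n / (2/3:ℝ) ^ (p+1))) := by gcongr
      _ = 2 ^ (d+1) * c0 ^ p * t * ((n * (2/3:ℝ) ^ n) / (2/3:ℝ) ^ (p+1)) := by ring
      _ < 2 ^ (d+1) * c0 ^ p * t * (η / (2/3:ℝ) ^ (p+1)) := by gcongr
      _ = t / 2 := by
          have : c0 ^ p ≠ 0 := by positivity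
          rw [hη]; field_simp; ring
  linarith
end
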